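/- arXiv:1209.5137 — 7 statements merged into one kernel-verified Lean document; each statement's English description precedes it below -/
import Mathlib

section
/- Let $k \geq 1$ and let $G$ be a finite group. Then $G$ admits a chain of subgroups $1 = G_0 \triangleleft G_1 \triangleleft \cdots \triangleleft G_n = G$ (each $G_{i-1}$ normal in $G_i$) in which every quotient $G_i/G_{i-1}$ is either abelian or embeds into the symmetric group on $k$ letters, if and only if $G$ admits a chain of subgroups $1 = H_0 \triangleleft H_1 \triangleleft \cdots \triangleleft H_m = G$ (each $H_{i-1}$ normal in $H_i$) in which every quotient $H_i/H_{i-1}$ is a simple group that is either abelian or contains a proper subgroup of index at most $k$. -/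
/-!
The two definitions are compared step by step along the chain.

* A simple group `Q` with a proper subgroup `H` of index at most `k` acts on the cosets of `H`; the
  kernel of this action is a proper normal subgroup, hence trivial, so `Q` embeds into `S_k`
  (`exists_embedding_of_index_le`). Thus a chain with simple quotients is already a chain of the
  first kind.
* Conversely, a chain of the first kind is refined to a composition series. Its simple factors are
  abelian or *sections* of `S_k` (quotients of subgroups), a class closed under subgroups and
  quotients. A nontrivial section `π : K → Q` of `S_k` has a proper subgroup of index at most `k`
  (`exists_index_le_of_section`): fix the `k` letters one after the other. The iterated stabilizers
  descend from `K` to `1`, so their images under `π` descend from `Q` to `1`, and at the first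
  stabilizer whose image is proper the index of that image is at most the length of an orbit.
-/

/-- A group `G` is `[k]`-solvable if there is a chain of subgroups
`1 = G₀ ◁ G₁ ◁ ⋯ ◁ Gₙ = G`, each normal in the next, such that every quotient
`Gᵢ/Gᵢ₋₁` is either abelian or embeds into the symmetric group on `k` letters. -/
def IsKSolvable (k : ℕ) (G : Type*) [Group G] : Prop :=
  ∃ (n : ℕ) (c : Fin (n + 1) → Subgroup G),
    c 0 = ⊥ ∧ c (Fin.last n) = ⊤ ∧
    ∀ i : Fin n,
      ∃ (_ : c i.castSucc ≤ c i.succ)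
        (hN : ((c i.castSucc).subgroupOf (c i.succ)).Normal),
        letI := hN
        ((∀ a b : (c i.succ) ⧸ (c i.castSucc).subgroupOf (c i.succ), a * b = b * a) ∨
          ∃ f : ((c i.succ) ⧸ (c i.castSucc).subgroupOf (c i.succ)) →* Equiv.Perm (Fin k),
            Function.Injective f)

/-- The composition-series variant: a chain `1 = H₀ ◁ H₁ ◁ ⋯ ◁ Hₘ = G` in which every
quotient `Hᵢ/Hᵢ₋₁` is a simple group which is either abelian or contains a proper
subgroup of index at most `k`. -/
def IsKSolvableViaSimple (k : ℕ) (G : Type*) [Group G] : Prop :=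
  ∃ (m : ℕ) (c : Fin (m + 1) → Subgroup G),
    c 0 = ⊥ ∧ c (Fin.last m) = ⊤ ∧
    ∀ i : Fin m,
      ∃ (_ : c i.castSucc ≤ c i.succ)
        (hN : ((c i.castSucc).subgroupOf (c i.succ)).Normal),
        letI := hN
        IsSimpleGroup ((c i.succ) ⧸ (c i.castSucc).subgroupOf (c i.succ)) ∧
        ((∀ a b : (c i.succ) ⧸ (c i.castSucc).subgroupOf (c i.succ), a * b = b * a) ∨
          ∃ H : Subgroup ((c i.succ) ⧸ (c i.castSucc).subgroupOf (c i.succ)),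
            H ≠ ⊤ ∧ H.index ≤ k)

/-- `Q` is a section of the symmetric group on `k` letters: a quotient of a group `K` that embeds
into it. -/
def IsPermSection (k : ℕ) (Q : Type) [Group Q] : Prop :=
  ∃ (K : Type) (_ : Group K) (g : K →* Equiv.Perm (Fin k)) (f : K →* Q),
    Function.Injective g ∧ Function.Surjective f

/-- `Q` is abelian or a section of the symmetric group on `k` letters. In contrast to the condition
"abelian or embeds into `S_k`", this one passes to quotients. -/
def IsCommOrPermSection (k : ℕ) (Q : Type) [Group Q] : Prop :=
  (∀ a b : Q, a * b = b * a) ∨ IsPermSection k Q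

/-- `A` is a normal subgroup of `B`, and the quotient `B/A` has the property `P`. -/
def NormalStep {G : Type} [Group G] (P : ∀ (Q : Type) [Group Q], Prop) (A B : Subgroup G) : Prop :=
  ∃ (_ : A ≤ B) (hN : (A.subgroupOf B).Normal), letI := hN; P (B ⧸ A.subgroupOf B)

lemma NormalStep.mono {G : Type} [Group G] {P P' : ∀ (Q : Type) [Group Q], Prop}
    (h : ∀ (Q : Type) [Group Q] [Finite Q], P Q → P' Q) [Finite G] {A B : Subgroup G}
    (hs : NormalStep P A B) : NormalStep P' A B := by
  obtain ⟨hle, hN, hP⟩ := hs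
  exact ⟨hle, hN, h _ hP⟩

lemma exists_fin_chain_iff {α : Type*} (r : α → α → Prop) (a b : α) :
    (∃ (n : ℕ) (c : Fin (n + 1) → α), c 0 = a ∧ c (Fin.last n) = b ∧
      ∀ i : Fin n, r (c i.castSucc) (c i.succ)) ↔ Relation.ReflTransGen r a b := by
  constructor
  · rintro ⟨n, c, rfl, rfl, h⟩
    have key : ∀ i : Fin (n + 1), Relation.ReflTransGen r (c 0) (c i) := by
      intro i
      induction i using Fin.induction with
      | zero => exact .refl
      | succ i ih => exact ih.tail (h i)
    exact key _
  · intro h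
    induction h with
    | refl => exact ⟨0, fun _ => a, rfl, rfl, fun i => i.elim0⟩
    | @tail b d _ hbd ih =>
      obtain ⟨n, c, h0, hl, h⟩ := ih
      refine ⟨n + 1, Fin.snoc (α := fun _ => α) c d, ?_, by simp, ?_⟩
      · rw [← Fin.castSucc_zero, Fin.snoc_castSucc, h0]
      · intro i
        induction i using Fin.lastCases with
        | last => rw [Fin.snoc_castSucc, hl, Fin.succ_last, Fin.snoc_last]; exact hbd
        | cast i => rw [Fin.snoc_castSucc, Fin.succ_castSucc, Fin.snoc_castSucc]; exact h i

lemma IsCommOrPermSection.of_surjective {k : ℕ} {Q R : Type} [Group Q] [Group R] (φ : Q →* R)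
    (hφ : Function.Surjective φ) (h : IsCommOrPermSection k Q) : IsCommOrPermSection k R := by
  rcases h with h | ⟨K, _, g, f, hg, hf⟩
  · left
    intro a b
    obtain ⟨a, rfl⟩ := hφ a
    obtain ⟨b, rfl⟩ := hφ b
    rw [← map_mul, h, map_mul]
  · exact Or.inr ⟨K, _, g, φ.comp f, hg, hφ.comp hf⟩

lemma IsCommOrPermSection.of_injective {k : ℕ} {Q R : Type} [Group Q] [Group R] (φ : R →* Q)
    (hφ : Function.Injective φ) (h : IsCommOrPermSection k Q) : IsCommOrPermSection k R := by
  -- Up to the isomorphism `R ≃ φ.range`, this is the case of the subgroup `φ.range` of `Q`.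
  have hrange : IsCommOrPermSection k φ.range := by
    rcases h with h | ⟨K, _, g, f, hg, hf⟩
    · exact Or.inl fun a b => Subtype.ext (h a b)
    · refine Or.inr ⟨φ.range.comap f, inferInstance, g.comp (Subgroup.subtype _),
        f.subgroupComap φ.range, hg.comp Subtype.val_injective, ?_⟩
      rintro ⟨q, hq⟩
      obtain ⟨x, rfl⟩ := hf q
      exact ⟨⟨x, hq⟩, rfl⟩
  exact hrange.of_surjective (MonoidHom.ofInjective hφ).symm.toMonoidHom
    (MonoidHom.ofInjective hφ).symm.surjective

/-- A nontrivial section of `S_k` has a proper subgroup of index at most `k`. -/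
lemma exists_index_le_of_section {k : ℕ} {Q : Type} [Group Q] [Nontrivial Q]
    (h : IsPermSection k Q) : ∃ H : Subgroup Q, H ≠ ⊤ ∧ H.index ≤ k := by
  obtain ⟨K, _, g, f, hg, hf⟩ := h
  let : MulAction K (Fin k) := MulAction.compHom (Fin k) g
  by_contra! hno
  -- If every proper subgroup has index greater than `k`, all iterated stabilizers map onto `Q`.
  have key : ∀ s : Finset (Fin k),
      (fixingSubgroup K (s : Set (Fin k))).map f = ⊤ := by
    intro s
    induction s using Finset.induction_on with
    | empty => simpa [← MonoidHom.range_eq_map] using MonoidHom.range_eq_top.2 hf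
    | insert x s _ ih =>
      by_contra hne
      have hlt := hno _ hne
      set D := fixingSubgroup K (s : Set (Fin k))
      have hsurj : Function.Surjective (f.comp D.subtype) := by
        rw [← MonoidHom.range_eq_top, MonoidHom.range_comp, Subgroup.range_subtype, ih]
      have hmap : (fixingSubgroup K ((insert x s : Finset (Fin k)) : Set (Fin k))).map f
          = (MulAction.stabilizer D x).map (f.comp D.subtype) := by
        rw [← Subgroup.map_map]
        congr 1
        ext y
        simp only [Finset.coe_insert, mem_fixingSubgroup_iff, Set.mem_insert_iff,
          forall_eq_or_imp, Subgroup.mem_map, MulAction.mem_stabilizer_iff]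
        constructor
        · rintro ⟨h1, h2⟩
          exact ⟨⟨y, (mem_fixingSubgroup_iff K).2 h2⟩, h1, rfl⟩
        · rintro ⟨⟨z, hz⟩, h1, rfl⟩
          exact ⟨h1, (mem_fixingSubgroup_iff K).1 hz⟩
      have horb : (MulAction.stabilizer D x).index ≤ k := by
        rw [MulAction.index_stabilizer]
        simpa using Set.ncard_le_card (MulAction.orbit D x)
      have hpos : 0 < (MulAction.stabilizer D x).index := by
        rw [MulAction.index_stabilizer]
        exact (Set.ncard_pos (Set.toFinite _)).2 (MulAction.nonempty_orbit x)
      rw [hmap] at hlt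
      have := Nat.le_of_dvd hpos (Subgroup.index_map_dvd (MulAction.stabilizer D x) hsurj)
      omega
  -- Only the identity fixes all letters.
  have hbot : fixingSubgroup K ((Finset.univ : Finset (Fin k)) : Set (Fin k)) = ⊥ := by
    rw [eq_bot_iff]
    intro y hy
    rw [mem_fixingSubgroup_iff] at hy
    rw [Subgroup.mem_bot]
    apply hg
    rw [map_one]
    ext i
    exact congrArg Fin.val (hy i (by simp))
  have := key Finset.univ
  rw [hbot, Subgroup.map_bot] at this
  exact bot_ne_top this

/-- A finite simple group with a proper subgroup of index at most `k` embeds into `S_k` through its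
action on cosets. -/
lemma exists_embedding_of_index_le {k : ℕ} {Q : Type} [Group Q] [Finite Q] [IsSimpleGroup Q]
    (H : Subgroup Q) (hH : H ≠ ⊤) (hk : H.index ≤ k) :
    ∃ f : Q →* Equiv.Perm (Fin k), Function.Injective f := by
  classical
  have hcore : H.normalCore = ⊥ := by
    rcases (inferInstance : H.normalCore.Normal).eq_bot_or_eq_top with h | h
    · exact h
    · exact absurd (top_le_iff.1 (h ▸ H.normalCore_le)) hH
  have hinj : Function.Injective (MulAction.toPermHom Q (Q ⧸ H)) := by
    rw [← MonoidHom.ker_eq_bot_iff, ← Subgroup.normalCore_eq_ker, hcore]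
  have : Fintype (Q ⧸ H) := Fintype.ofFinite _
  obtain ⟨e⟩ : Nonempty (Q ⧸ H ↪ Fin k) := by
    apply Function.Embedding.nonempty_of_card_le
    rw [Fintype.card_fin, ← Nat.card_eq_fintype_card]
    exact hk
  exact ⟨(Equiv.Perm.viaEmbeddingHom e).comp (MulAction.toPermHom Q (Q ⧸ H)),
    (Equiv.Perm.viaEmbeddingHom_injective e).comp hinj⟩

/-- A step with quotient in the class `IsCommOrPermSection` refines to a chain of steps with simple
quotients in this class. -/
lemma NormalStep.refine {k : ℕ} {G : Type} [Group G] [Finite G] (A B : Subgroup G)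
    (h : NormalStep (fun Q [Group Q] => IsCommOrPermSection k Q) A B) :
    Relation.ReflTransGen
      (NormalStep fun Q [Group Q] => IsSimpleGroup Q ∧ IsCommOrPermSection k Q) A B := by
  induction hn : Nat.card B - Nat.card A using Nat.strong_induction_on generalizing A B with
  | _ n ih =>
  obtain ⟨hle, hN, hP⟩ := h
  rcases eq_or_lt_of_le hle with rfl | hlt
  · exact .refl
  have card_lt : ∀ {X Y : Subgroup G}, X < Y → Nat.card X < Nat.card Y := fun {X Y} hXY =>
    Set.Finite.card_lt_card (Set.toFinite (Y : Set G)) hXY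
  by_cases hC : ∃ C : Subgroup G, A < C ∧ C < B ∧ (C.subgroupOf B).Normal
  · obtain ⟨C, hAC, hCB, hCN⟩ := hC
    have h1 := card_lt hAC
    have h2 := card_lt hCB
    have hAN : (A.subgroupOf C).Normal := by
      rw [Subgroup.normal_subgroupOf_iff_le_normalizer hAC.le]
      exact hCB.le.trans ((Subgroup.normal_subgroupOf_iff_le_normalizer hle).1 hN)
    refine (ih _ ?_ A C ⟨hAC.le, hAN, ?_⟩ rfl).trans (ih _ ?_ C B ⟨hCB.le, hCN, ?_⟩ rfl)
    · omega
    · have hker : (A.subgroupOf B).comap (Subgroup.inclusion hCB.le) = A.subgroupOf C := by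
        ext; rfl
      refine IsCommOrPermSection.of_injective
        (QuotientGroup.map (A.subgroupOf C) (A.subgroupOf B) (Subgroup.inclusion hCB.le)
          hker.ge) ?_ hP
      rw [← MonoidHom.ker_eq_bot_iff, QuotientGroup.ker_map, hker, QuotientGroup.map_mk'_self]
    · omega
    · have hle' : A.subgroupOf B ≤ C.subgroupOf B := fun x hx => hAC.le hx
      refine IsCommOrPermSection.of_surjective
        (QuotientGroup.map (A.subgroupOf B) (C.subgroupOf B) (MonoidHom.id B) hle') ?_ hP
      exact QuotientGroup.map_surjective_of_surjective _ _ _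
        (QuotientGroup.mk_surjective.comp Function.surjective_id) _
  · refine .single ⟨hle, hN, ?_, hP⟩
    have : Nontrivial (B ⧸ A.subgroupOf B) := by
      rw [QuotientGroup.nontrivial_iff, Ne, Subgroup.subgroupOf_eq_top]
      exact not_le_of_gt hlt
    refine ⟨fun N hNN => ?_⟩
    -- The preimage of `N` in `B`, viewed in `G`, lies between `A` and `B`.
    set M : Subgroup B := N.comap (QuotientGroup.mk' (A.subgroupOf B)) with hM
    have hMN : M.Normal := inferInstance
    have hsub : (M.map B.subtype).subgroupOf B = M :=
      Subgroup.comap_map_eq_self_of_injective B.subtype_injective M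
    have hMB : M.map B.subtype ≤ B := Subgroup.map_subtype_le M
    have hAM' : A.subgroupOf B ≤ M := by
      intro x hx
      rw [hM, Subgroup.mem_comap, QuotientGroup.mk'_apply, (QuotientGroup.eq_one_iff x).2 hx]
      exact one_mem N
    have hAM : A ≤ M.map B.subtype := fun x hx => ⟨⟨x, hle hx⟩, hAM' hx, rfl⟩
    have hNM : N = M.map (QuotientGroup.mk' (A.subgroupOf B)) :=
      (Subgroup.map_comap_eq_self_of_surjective (QuotientGroup.mk'_surjective _) N).symm
    rcases eq_or_lt_of_le hAM with hEq | hAlt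
    · left
      rw [hNM, ← hsub, ← hEq, QuotientGroup.map_mk'_self]
    · rcases eq_or_lt_of_le hMB with hEq | hBlt
      · right
        rw [hNM, ← hsub, hEq, Subgroup.subgroupOf_self, ← MonoidHom.range_eq_map,
          QuotientGroup.range_mk']
      · exact absurd ⟨_, hAlt, hBlt, hsub.symm ▸ hMN⟩ hC

/-- For a finite group `G` and `k ≥ 1`, the two definitions of `[k]`-solvability agree. -/
theorem isKSolvable_iff_isKSolvableViaSimple (k : ℕ) (hk : 1 ≤ k)
    (G : Type) [Group G] [Finite G] :
    IsKSolvable k G ↔ IsKSolvableViaSimple k G := by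
  have e1 : IsKSolvable k G ↔ Relation.ReflTransGen (NormalStep fun Q [Group Q] =>
      (∀ a b : Q, a * b = b * a) ∨ ∃ f : Q →* Equiv.Perm (Fin k), Function.Injective f)
      (⊥ : Subgroup G) ⊤ := by
    rw [← exists_fin_chain_iff]
    rfl
  have e2 : IsKSolvableViaSimple k G ↔ Relation.ReflTransGen (NormalStep fun Q [Group Q] =>
      IsSimpleGroup Q ∧
        ((∀ a b : Q, a * b = b * a) ∨ ∃ H : Subgroup Q, H ≠ ⊤ ∧ H.index ≤ k))
      (⊥ : Subgroup G) ⊤ := by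
    rw [← exists_fin_chain_iff]
    rfl
  rw [e1, e2]
  constructor
  · intro h
    have h' : Relation.ReflTransGen
        (NormalStep fun Q [Group Q] => IsSimpleGroup Q ∧ IsCommOrPermSection k Q)
        (⊥ : Subgroup G) ⊤ := by
      generalize (⊤ : Subgroup G) = T at h ⊢
      induction h with
      | refl => exact .refl
      | tail _ hs ih =>
        refine ih.trans (NormalStep.refine _ _ (hs.mono fun Q _ _ hQ => ?_))
        exact hQ.imp_right fun ⟨f, hf⟩ =>
          ⟨Q, inferInstance, f, MonoidHom.id Q, hf, Function.surjective_id⟩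
    refine Relation.ReflTransGen.mono (fun A B hs => hs.mono fun Q _ _ hQ => ?_) _ _ h'
    obtain ⟨hsimple, hQ⟩ := hQ
    exact ⟨hsimple, hQ.imp_right exists_index_le_of_section⟩
  · intro h
    refine Relation.ReflTransGen.mono (fun A B hs => hs.mono fun Q _ _ hQ => ?_) _ _ h
    obtain ⟨hsimple, hQ⟩ := hQ
    exact hQ.imp_right fun ⟨H, hH, hi⟩ => exists_embedding_of_index_le H hH hi
end

section
/- Let $k \geq 1$, let $K$ be a field of characteristic zero, and let $L/K$ be a finite Galois extension. Then $L/K$ is $k$-radical if and only if the Galois group $\mathrm{Gal}(L/K)$ is $[k]$-solvable. -/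
universe u v

/-- Witness data for the extension `L/K` being `k`-radical: a tower of fields
`K = K₀ ⊆ K₁ ⊆ ⋯ ⊆ Kₙ` (realized as intermediate fields of some extension `M/K`)
with `L ⊆ Kₙ`, in which each step is obtained by adjoining one element `a` which
either satisfies `a ^ m ∈ Kᵢ` for some `m ≥ 1`, or is algebraic of degree at most `k`
over `Kᵢ`. -/
structure KRadicalTower (k : ℕ) (K : Type u) (L : Type v) [Field K] [Field L]
    [Algebra K L] where
  M : Type (max u v)
  [fieldM : Field M]
  [algM : Algebra K M]
  emb : L →ₐ[K] M
  n : ℕ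
  c : Fin (n + 1) → IntermediateField K M
  bot_eq : c 0 = ⊥
  le_top : emb.fieldRange ≤ c (Fin.last n)
  step : ∀ i : Fin n, ∃ a : M,
    c i.succ = c i.castSucc ⊔ IntermediateField.adjoin K {a} ∧
    ((∃ m : ℕ, 1 ≤ m ∧ a ^ m ∈ c i.castSucc) ∨
      (IsIntegral (c i.castSucc) a ∧ (minpoly (c i.castSucc) a).natDegree ≤ k))

/-- A field extension `L/K` is `k`-radical if such a tower exists. -/
def IsKRadical (k : ℕ) (K : Type u) (L : Type v) [Field K] [Field L] [Algebra K L] : Prop :=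
  Nonempty (KRadicalTower k K L)

/-! ### `[k]`-solvable groups -/

/-- The groups allowed as factors of a `[k]`-solvable series: abelian groups and groups of
permutations of `k` letters. -/
def IsStep (k : ℕ) (Q : Type) [Group Q] : Prop :=
  (∀ a b : Q, a * b = b * a) ∨ ∃ f : Q →* Equiv.Perm (Fin k), Function.Injective f

/-- Recursive form of `IsKSolvable`: a group is `[k]`-solvable if it is trivial, or if it has a
homomorphism to an allowed factor whose kernel is `[k]`-solvable. The homomorphism need not be
surjective, since subgroups of allowed factors are allowed. -/
inductive KS (k : ℕ) : (G : Type) → [Group G] → Prop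
  | triv (G : Type) [Group G] (h : Subsingleton G) : KS k G
  | step (G Q : Type) [Group G] [Group Q] (f : G →* Q) (hQ : IsStep k Q) (h : KS k f.ker) :
      KS k G

theorem IsStep.of_injective {k : ℕ} {Q R : Type} [Group Q] [Group R] (hQ : IsStep k Q)
    (j : R →* Q) (hj : Function.Injective j) : IsStep k R := by
  rcases hQ with h | ⟨f, hf⟩
  · exact Or.inl fun a b => hj (by rw [map_mul, map_mul, h])
  · exact Or.inr ⟨f.comp j, hf.comp hj⟩

theorem isStep_perm {k : ℕ} (X : Type) [Finite X] (hX : Nat.card X ≤ k) :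
    IsStep k (Equiv.Perm X) := by
  have := Fintype.ofFinite X
  obtain ⟨e⟩ := Function.Embedding.nonempty_of_card_le (α := X) (β := Fin k)
    (by simpa [Nat.card_eq_fintype_card] using hX)
  exact Or.inr ⟨Equiv.Perm.viaEmbeddingHom e, Equiv.Perm.viaEmbeddingHom_injective e⟩

theorem KS.of_injective {k : ℕ} {G : Type} [Group G] (h : KS k G) :
    ∀ (H : Type) [Group H] (j : H →* G), Function.Injective j → KS k H := by
  induction h with
  | triv G hG => intro H _ j hj; exact KS.triv _ hj.subsingleton
  | step G Q f hQ h ih =>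
    intro H _ j hj
    refine KS.step H Q (f.comp j) hQ (ih _
      ((j.comp (f.comp j).ker.subtype).codRestrict f.ker fun x => ?_) ?_)
    · exact x.2
    · intro x y hxy
      exact Subtype.ext (hj (congrArg Subtype.val hxy))

/-- Extensions of `[k]`-solvable groups are `[k]`-solvable. -/
theorem KS.ext {k : ℕ} {Q : Type} [Group Q] (h : KS k Q) :
    ∀ (G : Type) [Group G] (f : G →* Q), KS k f.ker → KS k G := by
  induction h with
  | triv Q hQ =>
    intro G _ f hf
    refine hf.of_injective G ((MonoidHom.id G).codRestrict f.ker fun x => ?_) ?_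
    · exact Subsingleton.elim _ _
    · intro x y hxy
      exact congrArg Subtype.val hxy
  | step Q R g hR h ih =>
    intro G _ f hf
    refine KS.step G R (g.comp f) hR ?_
    refine ih _ ((f.comp (g.comp f).ker.subtype).codRestrict g.ker fun x => x.2) ?_
    refine hf.of_injective _ (((g.comp f).ker.subtype.comp (Subgroup.subtype _)).codRestrict _
      fun x => ?_) ?_
    · exact congrArg Subtype.val x.2
    · intro x y hxy
      have hxy' := congrArg Subtype.val hxy
      exact Subtype.ext (Subtype.ext hxy')

/-- A quotient `S` of a group `U` of permutations of `k` letters is `[k]`-solvable. The induction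
is on a set `T` of letters containing all the moved ones. For `x ∈ T` with stabilizer `Uₓ`, the
group `S` acts on the at most `k` cosets of the image of `Uₓ`; the kernel of this action is a
section of `Uₓ`, which only moves letters in `T \ {x}`. -/
theorem KS.of_perm_quotient {k : ℕ} (T : Finset (Fin k)) :
    ∀ (U S : Type) [Group U] [Group S] (i : U →* Equiv.Perm (Fin k))
      (_ : Function.Injective i) (_ : ∀ u, ∀ x ∉ T, i u x = x)
      (f : U →* S) (_ : Function.Surjective f), KS k S := by
  induction T using Finset.induction_on with
  | empty =>
    intro U S _ _ i hi hT f hf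
    have : Subsingleton U := ⟨fun a b => hi (Equiv.ext fun x => by
      rw [hT a x (Finset.notMem_empty x), hT b x (Finset.notMem_empty x)])⟩
    exact KS.triv _ hf.subsingleton
  | insert x T hx ih =>
    intro U S _ _ i hi hT f hf
    let : MulAction U (Fin k) := MulAction.compHom (Fin k) i
    have hsm : ∀ (u : U) (y : Fin k), u • y = i u y := fun _ _ => rfl
    let Ux : Subgroup U := MulAction.stabilizer U x
    let V : Subgroup S := Ux.map f
    have hUfin : Finite (U ⧸ Ux) :=
      Finite.of_equiv _ (MulAction.orbitEquivQuotientStabilizer U x)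
    have hUcard : Nat.card (U ⧸ Ux) ≤ k := by
      rw [← Nat.card_congr (MulAction.orbitEquivQuotientStabilizer U x)]
      simpa using Nat.card_le_card_of_injective
        (Subtype.val : MulAction.orbit U x → Fin k) Subtype.val_injective
    let q : U ⧸ Ux → S ⧸ V := Quotient.map' f (by
      intro a b hab
      rw [QuotientGroup.leftRel_apply] at hab ⊢
      exact ⟨_, hab, by simp⟩)
    have hq : Function.Surjective q := by
      intro s
      induction s using QuotientGroup.induction_on with
      | H s =>
        obtain ⟨u, rfl⟩ := hf s
        exact ⟨(u : U ⧸ Ux), rfl⟩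
    have hVfin : Finite (S ⧸ V) := Finite.of_surjective q hq
    have hVcard : Nat.card (S ⧸ V) ≤ k :=
      (Nat.card_le_card_of_surjective q hq).trans hUcard
    refine KS.step S _ (MulAction.toPermHom S (S ⧸ V)) (isStep_perm _ hVcard) ?_
    rw [← Subgroup.normalCore_eq_ker]
    let W : Subgroup U := Ux ⊓ V.normalCore.comap f
    refine ih W V.normalCore (i.comp W.subtype) (hi.comp Subtype.val_injective) ?_
      ((f.comp W.subtype).codRestrict V.normalCore fun w => w.2.2) ?_
    · intro u y hy
      by_cases hyx : y = x
      · subst hyx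
        exact u.2.1
      · exact hT u y (by simp [hyx, hy])
    · rintro ⟨s, hs⟩
      obtain ⟨u, hu, rfl⟩ := Subgroup.normalCore_le V hs
      exact ⟨⟨u, hu, hs⟩, rfl⟩

/-- If `A` is a quotient of `G`, and `f` maps `G` to an allowed factor, then `A` is
`[k]`-solvable as soon as the image of `ker f` in `A` is. -/
theorem KS.of_map_ker {k : ℕ} {G Q A : Type} [Group G] [Group Q] [Group A] (f : G →* Q)
    (hQ : IsStep k Q) (π : G →* A) (hπ : Function.Surjective π) (h : KS k (f.ker.map π)) :
    KS k A := by
  have hN : (f.ker.map π).Normal := Subgroup.Normal.map inferInstance π hπ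
  have hker : KS k (QuotientGroup.mk' (f.ker.map π)).ker := by
    rwa [QuotientGroup.ker_mk']
  rcases hQ with hc | ⟨i, hi⟩
  · refine KS.step A _ (QuotientGroup.mk' (f.ker.map π)) (Or.inl ?_) hker
    intro a b
    induction a using QuotientGroup.induction_on with
    | H a =>
    induction b using QuotientGroup.induction_on with
    | H b =>
    obtain ⟨x, rfl⟩ := hπ a
    obtain ⟨y, rfl⟩ := hπ b
    rw [← QuotientGroup.mk_mul, ← QuotientGroup.mk_mul, QuotientGroup.eq]
    refine ⟨(x * y)⁻¹ * (y * x), ?_, by simp⟩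
    rw [SetLike.mem_coe, MonoidHom.mem_ker]
    simp only [map_mul, map_inv]
    rw [hc (f x) (f y), inv_mul_cancel]
  · refine KS.ext ?_ A (QuotientGroup.mk' (f.ker.map π)) hker
    refine KS.of_perm_quotient Finset.univ (G ⧸ f.ker) _ (i.comp (QuotientGroup.kerLift f))
      (hi.comp (QuotientGroup.kerLift_injective f)) (by simp)
      (QuotientGroup.map f.ker (f.ker.map π) π (Subgroup.le_comap_map _ _)) ?_
    intro s
    induction s using QuotientGroup.induction_on with
    | H s =>
      obtain ⟨u, rfl⟩ := hπ s
      exact ⟨(u : G ⧸ f.ker), rfl⟩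

theorem IsKSolvable.ks {k : ℕ} {G : Type} [Group G] (h : IsKSolvable k G) : KS k G := by
  obtain ⟨n, c, h0, hn, hs⟩ := h
  have key : ∀ i, KS k (c i) := by
    intro i
    induction i using Fin.induction with
    | zero =>
      rw [h0]
      exact KS.triv _ inferInstance
    | succ i ih =>
      obtain ⟨hle, hN, hQ⟩ := hs i
      refine KS.step _ _ (QuotientGroup.mk' ((c i.castSucc).subgroupOf (c i.succ))) hQ ?_
      rw [QuotientGroup.ker_mk']
      exact ih.of_injective _ (Subgroup.subgroupOfEquivOfLe hle).toMonoidHom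
        (Subgroup.subgroupOfEquivOfLe hle).injective
  have := key (Fin.last n)
  rw [hn] at this
  exact this.of_injective G (Subgroup.topEquiv (G := G)).symm.toMonoidHom
    (Subgroup.topEquiv (G := G)).symm.injective

/-- The subgroup `A` is the kernel of a homomorphism from `B` to an allowed factor. -/
def StepRel (k : ℕ) {G : Type} [Group G] (A B : Subgroup G) : Prop :=
  A ≤ B ∧ ∃ (Q : Type) (_ : Group Q) (f : B →* Q), IsStep k Q ∧ f.ker = A.subgroupOf B

theorem KS.exists_chain {k : ℕ} {G' : Type} [Group G'] (h : KS k G') :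
    ∀ (G : Type) [Group G] (j : G' →* G), Function.Injective j →
      ∃ (n : ℕ) (c : Fin (n + 1) → Subgroup G), c 0 = ⊥ ∧ c (Fin.last n) = j.range ∧
        ∀ i : Fin n, StepRel k (c i.castSucc) (c i.succ) := by
  induction h with
  | triv G' hG =>
    intro G _ j hj
    refine ⟨0, fun _ => ⊥, rfl, ?_, fun i => i.elim0⟩
    rw [eq_comm, eq_bot_iff]
    rintro _ ⟨x, rfl⟩
    rw [Subsingleton.elim x 1, map_one]
    exact one_mem _
  | step G' Q f hQ h ih =>
    intro G _ j hj
    obtain ⟨n, c, h0, hn, hs⟩ := ih G (j.comp f.ker.subtype) (hj.comp Subtype.val_injective)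
    refine ⟨n + 1, Fin.snoc c j.range, ?_, by simp, fun i => ?_⟩
    · have : (0 : Fin (n + 1 + 1)) = Fin.castSucc 0 := rfl
      rw [this, Fin.snoc_castSucc, h0]
    · induction i using Fin.lastCases with
      | cast i =>
        rw [Fin.succ_castSucc, Fin.snoc_castSucc, Fin.snoc_castSucc]
        exact hs i
      | last =>
        rw [Fin.succ_last, Fin.snoc_castSucc, Fin.snoc_last, hn]
        refine ⟨?_, Q, inferInstance,
          f.comp (MonoidHom.ofInjective hj).symm.toMonoidHom, hQ, ?_⟩
        · rintro _ ⟨x, rfl⟩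
          exact ⟨x, rfl⟩
        · ext x
          obtain ⟨x, rfl⟩ := (MonoidHom.ofInjective hj).surjective x
          rw [MonoidHom.mem_ker, Subgroup.mem_subgroupOf]
          simp only [MonoidHom.comp_apply, MulEquiv.toMonoidHom_eq_coe, MonoidHom.coe_coe,
            MulEquiv.symm_apply_apply]
          constructor
          · intro hx
            exact ⟨⟨x, hx⟩, rfl⟩
          · rintro ⟨y, hy⟩
            have : (y : G') = x := hj hy
            rw [← this]
            exact y.2

theorem KS.isKSolvable {k : ℕ} {G : Type} [Group G] (h : KS k G) : IsKSolvable k G := by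
  obtain ⟨n, c, h0, hn, hs⟩ := h.exists_chain G (MonoidHom.id G) Function.injective_id
  refine ⟨n, c, h0, hn.trans (by ext; simp), fun i => ?_⟩
  obtain ⟨hle, Q, _, f, hQ, hf⟩ := hs i
  have hN : ((c i.castSucc).subgroupOf (c i.succ)).Normal := hf ▸ inferInstance
  refine ⟨hle, hN, ?_⟩
  refine hQ.of_injective (QuotientGroup.lift _ f hf.ge) ?_
  rw [injective_iff_map_eq_one]
  intro a ha
  induction a using QuotientGroup.induction_on with
  | H a =>
    rw [QuotientGroup.eq_one_iff, ← hf]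
    exact ha

/-! ### Towers -/

open Polynomial IntermediateField

/-- `Tow k E` says that `E` is the top of a tower of intermediate fields of `M/K`, starting at `K`,
in which each step adjoins a radical or a root of a nonzero polynomial of degree at most `k`
over the previous field. Such a polynomial is encoded as one over `M` whose coefficients lie in
the previous field. -/
inductive Tow (k : ℕ) {K M : Type} [Field K] [Field M] [Algebra K M] :
    IntermediateField K M → Prop
  | bot : Tow k ⊥
  | rad (E : IntermediateField K M) (a : M) (m : ℕ) (hE : Tow k E) (hm : 1 ≤ m)
      (ha : a ^ m ∈ E) : Tow k (E ⊔ adjoin K {a})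
  | deg (E : IntermediateField K M) (a : M) (p : M[X]) (hE : Tow k E) (hp : p ≠ 0)
      (hpE : ∀ i, p.coeff i ∈ E) (hpk : p.natDegree ≤ k) (hpa : p.eval a = 0) :
      Tow k (E ⊔ adjoin K {a})

theorem KRadicalTower.tow {k : ℕ} {K L : Type} [Field K] [Field L] [Algebra K L]
    (t : KRadicalTower k K L) :
    letI := t.fieldM
    letI := t.algM
    Tow k (t.c (Fin.last t.n)) := by
  let := t.fieldM
  let := t.algM
  have key : ∀ i, Tow k (t.c i) := by
    intro i
    induction i using Fin.induction with
    | zero =>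
      rw [t.bot_eq]
      exact Tow.bot
    | succ i ih =>
      obtain ⟨a, h, ⟨m, hm, ha⟩ | ⟨hi, hd⟩⟩ := t.step i
      · rw [h]
        exact Tow.rad _ a m ih hm ha
      · rw [h]
        refine Tow.deg _ a ((minpoly (t.c i.castSucc) a).map (algebraMap _ t.M)) ih ?_ ?_ ?_ ?_
        · exact (Polynomial.map_ne_zero_iff (algebraMap (t.c i.castSucc) t.M).injective).2
            (minpoly.ne_zero hi)
        · intro j
          rw [coeff_map]
          exact SetLike.coe_mem _
        · rwa [natDegree_map]
        · rw [eval_map_algebraMap, minpoly.aeval]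
  exact key _

theorem Tow.exists_chain {k : ℕ} {K M : Type} [Field K] [Field M] [Algebra K M]
    {E : IntermediateField K M} (h : Tow k E) :
    ∃ (n : ℕ) (c : Fin (n + 1) → IntermediateField K M), c 0 = ⊥ ∧ c (Fin.last n) = E ∧
      ∀ i : Fin n, ∃ a : M,
        c i.succ = c i.castSucc ⊔ IntermediateField.adjoin K {a} ∧
        ((∃ m : ℕ, 1 ≤ m ∧ a ^ m ∈ c i.castSucc) ∨
          (IsIntegral (c i.castSucc) a ∧ (minpoly (c i.castSucc) a).natDegree ≤ k)) := by
  have snoc : ∀ (E : IntermediateField K M) (a : M),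
      ((∃ m : ℕ, 1 ≤ m ∧ a ^ m ∈ E) ∨ (IsIntegral E a ∧ (minpoly E a).natDegree ≤ k)) →
      (∃ (n : ℕ) (c : Fin (n + 1) → IntermediateField K M), c 0 = ⊥ ∧ c (Fin.last n) = E ∧
      ∀ i : Fin n, ∃ a : M,
        c i.succ = c i.castSucc ⊔ IntermediateField.adjoin K {a} ∧
        ((∃ m : ℕ, 1 ≤ m ∧ a ^ m ∈ c i.castSucc) ∨
          (IsIntegral (c i.castSucc) a ∧ (minpoly (c i.castSucc) a).natDegree ≤ k))) →
      (∃ (n : ℕ) (c : Fin (n + 1) → IntermediateField K M), c 0 = ⊥ ∧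
        c (Fin.last n) = E ⊔ adjoin K {a} ∧
      ∀ i : Fin n, ∃ a : M,
        c i.succ = c i.castSucc ⊔ IntermediateField.adjoin K {a} ∧
        ((∃ m : ℕ, 1 ≤ m ∧ a ^ m ∈ c i.castSucc) ∨
          (IsIntegral (c i.castSucc) a ∧ (minpoly (c i.castSucc) a).natDegree ≤ k))) := by
    rintro E a ha ⟨n, c, h0, rfl, hs⟩
    refine ⟨n + 1, Fin.snoc c (c (Fin.last n) ⊔ adjoin K {a}), ?_, by simp, fun i => ?_⟩
    · have : (0 : Fin (n + 1 + 1)) = Fin.castSucc 0 := rfl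
      rw [this, Fin.snoc_castSucc, h0]
    · induction i using Fin.lastCases with
      | cast i =>
        rw [Fin.succ_castSucc, Fin.snoc_castSucc, Fin.snoc_castSucc]
        exact hs i
      | last =>
        rw [Fin.succ_last, Fin.snoc_castSucc, Fin.snoc_last]
        exact ⟨a, rfl, ha⟩
  induction h with
  | bot => exact ⟨0, fun _ => ⊥, rfl, rfl, fun i => i.elim0⟩
  | rad E a m hE hm ha ih => exact snoc E a (Or.inl ⟨m, hm, ha⟩) ih
  | deg E a p hE hp hpE hpk hpa ih =>
    refine snoc E a (Or.inr ?_) ih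
    obtain ⟨q, rfl⟩ : ∃ q : E[X], q.map (algebraMap E M) = p := by
      rw [← Polynomial.mem_lifts, Polynomial.lifts_iff_coeff_lifts]
      exact fun i => ⟨⟨_, hpE i⟩, rfl⟩
    have hq : q ≠ 0 := by
      rintro rfl
      simp at hp
    rw [eval_map_algebraMap] at hpa
    refine ⟨isAlgebraic_iff_isIntegral.1 ⟨q, hq, hpa⟩, ?_⟩
    rw [natDegree_map] at hpk
    exact (natDegree_le_natDegree (minpoly.degree_le_of_ne_zero E a hq hpa)).trans hpk

theorem Tow.isKRadical {k : ℕ} {K L M : Type} [Field K] [Field L] [Algebra K L] [Field M]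
    [Algebra K M] {E : IntermediateField K M} (h : Tow k E) (emb : L →ₐ[K] M)
    (hE : emb.fieldRange ≤ E) : IsKRadical k K L := by
  obtain ⟨n, c, h0, hn, hs⟩ := h.exists_chain
  exact ⟨{ M := M, emb := emb, n := n, c := c, bot_eq := h0, le_top := hn ▸ hE, step := hs }⟩

/-- A tower consists of algebraic elements, so it lives in every subfield of `Ω` containing all
elements algebraic over `K`; it is stated here for a pair of maps `M → Ω ← N`. -/
theorem Tow.transfer {k : ℕ} {K M Ω N : Type} [Field K] [Field M] [Algebra K M] [Field Ω]
    [Algebra K Ω] [Field N] [Algebra K N] [Algebra.IsAlgebraic K N]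
    (φ : M →ₐ[K] Ω) (ψ : N →ₐ[K] Ω)
    (hψ : ∀ x : Ω, IsAlgebraic K x → x ∈ ψ.fieldRange)
    {E : IntermediateField K M} (h : Tow k E) :
    ∃ E' : IntermediateField K N, Tow k E' ∧ E'.map ψ = E.map φ := by
  have alg : ∀ (E : IntermediateField K M) (E' : IntermediateField K N),
      E'.map ψ = E.map φ → ∀ a : M, IsAlgebraic E a → IsAlgebraic K a := by
    intro E E' hEE a ha
    have : Algebra.IsAlgebraic K E := by
      refine ⟨fun x => ?_⟩
      have hx : φ x ∈ E'.map ψ := hEE ▸ ⟨x, x.2, rfl⟩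
      obtain ⟨y, hy, hyx⟩ := hx
      have h1 : IsAlgebraic K (ψ y) := (Algebra.IsAlgebraic.isAlgebraic (R := K) y).algHom ψ
      have hyx' : ψ y = φ x := hyx
      rw [hyx'] at h1
      rw [isAlgebraic_algHom_iff φ φ.injective] at h1
      exact (isAlgebraic_algHom_iff E.val E.val.injective).1 h1
    exact ha.restrictScalars K
  induction h with
  | bot => exact ⟨⊥, Tow.bot, by simp⟩
  | rad E a m hE hm ha ih =>
    obtain ⟨E', hE', hEE⟩ := ih
    have haalg : IsAlgebraic E a := by
      refine isAlgebraic_iff_isIntegral.2 (IsIntegral.of_pow hm ?_)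
      exact isIntegral_algebraMap (R := E) (x := (⟨a ^ m, ha⟩ : E))
    obtain ⟨b, hb⟩ := hψ (φ a) ((alg E E' hEE a haalg).algHom φ)
    have hb : ψ b = φ a := hb
    refine ⟨E' ⊔ adjoin K {b}, Tow.rad _ b m hE' hm ?_, ?_⟩
    · have : φ (a ^ m) ∈ E'.map ψ := hEE ▸ ⟨_, ha, rfl⟩
      obtain ⟨y, hy, hyx⟩ := this
      have hyx : ψ y = φ (a ^ m) := hyx
      rw [map_pow, ← hb, ← map_pow] at hyx
      exact ψ.injective hyx ▸ hy
    · rw [IntermediateField.map_sup, IntermediateField.map_sup, hEE, adjoin_map, adjoin_map]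
      simp [hb]
  | deg E a p hE hp hpE hpk hpa ih =>
    obtain ⟨E', hE', hEE⟩ := ih
    have haalg : IsAlgebraic E a := by
      obtain ⟨q, rfl⟩ : ∃ q : E[X], q.map (algebraMap E M) = p := by
        rw [← Polynomial.mem_lifts, Polynomial.lifts_iff_coeff_lifts]
        exact fun i => ⟨⟨_, hpE i⟩, rfl⟩
      refine ⟨q, ?_, by rwa [eval_map_algebraMap] at hpa⟩
      rintro rfl
      simp at hp
    obtain ⟨b, hb⟩ := hψ (φ a) ((alg E E' hEE a haalg).algHom φ)
    have hb : ψ b = φ a := hb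
    have hlift : ∀ i, ∃ y ∈ E', ψ y = φ (p.coeff i) := by
      intro i
      have : φ (p.coeff i) ∈ E'.map ψ := hEE ▸ ⟨_, hpE i, rfl⟩
      exact this
    obtain ⟨q, hq⟩ : ∃ q : N[X], q.map (ψ : N →+* Ω) = p.map (φ : M →+* Ω) := by
      rw [← Polynomial.mem_lifts, Polynomial.lifts_iff_coeff_lifts]
      intro i
      obtain ⟨y, -, hy⟩ := hlift i
      exact ⟨y, by rw [coeff_map]; exact hy⟩
    refine ⟨E' ⊔ adjoin K {b}, Tow.deg _ b q hE' ?_ ?_ ?_ ?_, ?_⟩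
    · rintro rfl
      rw [Polynomial.map_zero, eq_comm, Polynomial.map_eq_zero] at hq
      exact hp hq
    · intro i
      obtain ⟨y, hyE, hy⟩ := hlift i
      have h1 : ψ (q.coeff i) = φ (p.coeff i) := by
        have := congrArg (fun r => r.coeff i) hq
        simpa using this
      exact ψ.injective (hy.trans h1.symm) ▸ hyE
    · rw [← natDegree_map (ψ : N →+* Ω), hq, natDegree_map]
      exact hpk
    · apply (ψ : N →+* Ω).injective
      change ψ (q.eval b) = ψ 0
      have h1 : ψ (q.eval b) = (q.map (ψ : N →+* Ω)).eval (ψ b) :=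
        (eval_map_apply (f := (ψ : N →+* Ω)) (p := q) b).symm
      have h2 : (p.map (φ : M →+* Ω)).eval (φ a) = φ (p.eval a) :=
        eval_map_apply (f := (φ : M →+* Ω)) (p := p) a
      rw [h1, hq, hb, h2, hpa, map_zero, map_zero]
    · rw [IntermediateField.map_sup, IntermediateField.map_sup, hEE, adjoin_map, adjoin_map]
      simp [hb]

/-! ### From towers to series of the Galois group -/

section Descent

variable {K N : Type} [Field K] [Field N] [Algebra K N]

/-- `Desc k H` says that every quotient `A` of `Gal(N/K)` is `[k]`-solvable as soon as the image
of `H` in `A` is. It holds for the members of any descending series that starts at `Gal(N/K)` and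
has allowed factors. -/
def Desc (k : ℕ) (H : Subgroup (N ≃ₐ[K] N)) : Prop :=
  ∀ (A : Type) [Group A] (π : (N ≃ₐ[K] N) →* A), Function.Surjective π →
    KS k (H.map π) → KS k A

theorem desc_top (k : ℕ) : Desc k (⊤ : Subgroup (N ≃ₐ[K] N)) := by
  intro A _ π hπ h
  rw [← MonoidHom.range_eq_map, MonoidHom.range_eq_top.2 hπ] at h
  exact h.of_injective A (Subgroup.topEquiv (G := A)).symm.toMonoidHom
    (Subgroup.topEquiv (G := A)).symm.injective

theorem Desc.step {k : ℕ} {H : Subgroup (N ≃ₐ[K] N)} (hH : Desc k H) {Q : Type} [Group Q]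
    (f : H →* Q) (hQ : IsStep k Q) : Desc k (f.ker.map H.subtype) := by
  intro A _ π hπ h
  refine hH A π hπ (KS.of_map_ker f hQ (π.subgroupMap H) (π.subgroupMap_surjective H) ?_)
  refine h.of_injective _
    (((H.map π).subtype.comp (Subgroup.subtype _)).codRestrict _ fun x => ?_) ?_
  · obtain ⟨x, y, hy, rfl⟩ := x
    exact ⟨y, ⟨y, hy, rfl⟩, rfl⟩
  · intro x y hxy
    have hxy' := congrArg Subtype.val hxy
    exact Subtype.ext (Subtype.ext hxy')

theorem Desc.step_fix {k : ℕ} {H : Subgroup (N ≃ₐ[K] N)} (hH : Desc k H)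
    {E : IntermediateField K N} (hE : E ≤ fixedField H) {a : N} {Q : Type} [Group Q]
    (f : H →* Q) (hQ : IsStep k Q) (ha : ∀ σ : H, f σ = 1 → (σ : N ≃ₐ[K] N) a = a) :
    ∃ H' : Subgroup (N ≃ₐ[K] N), Desc k H' ∧ E ⊔ adjoin K {a} ≤ fixedField H' := by
  refine ⟨_, hH.step f hQ, sup_le (hE.trans ?_) ?_⟩
  · refine fixedField_antitone ?_
    rintro _ ⟨x, -, rfl⟩
    exact x.2
  · rw [adjoin_simple_le_iff, mem_fixedField_iff]
    rintro _ ⟨x, hx, rfl⟩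
    exact ha x hx

/-- The automorphisms fixing the `m`-th roots of unity form the kernel of the cyclotomic character,
which takes values in an abelian group. -/
theorem Desc.step_cyclotomic {k : ℕ} {H : Subgroup (N ≃ₐ[K] N)} (hH : Desc k H)
    {m : ℕ} (hm : 1 ≤ m) :
    ∃ H' : Subgroup (N ≃ₐ[K] N), Desc k H' ∧ H' ≤ H ∧
      ∀ σ ∈ H', ∀ t : N, t ^ m = 1 → σ t = t := by
  have : NeZero m := ⟨by omega⟩
  let toRing : (N ≃ₐ[K] N) →* (N ≃+* N) :=
    { toFun := fun σ => σ.toRingEquiv, map_one' := rfl, map_mul' := fun _ _ => rfl }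
  let f : H →* (ZMod (Nat.card (rootsOfUnity m N)))ˣ :=
    ((modularCyclotomicCharacter' N m).comp toRing).comp H.subtype
  refine ⟨_, hH.step f (Or.inl mul_comm), ?_, ?_⟩
  · rintro _ ⟨x, -, rfl⟩
    exact x.2
  · rintro _ ⟨σ, hσ, rfl⟩ t ht
    let u : rootsOfUnity m N := rootsOfUnity.mkOfPowEq t ht
    have hut : ((u : Nˣ) : N) = t := rfl
    have hspec := modularCyclotomicCharacter'.spec' N (n := m) (toRing σ) u.2
    have hσ' : modularCyclotomicCharacter' N m (toRing σ) = 1 := hσ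
    rw [hσ', hut] at hspec
    have hpow : u ^ ((1 : ZMod (Nat.card (rootsOfUnity m N))).val) = u := by
      rw [ZMod.val_one_eq_one_mod]
      conv_rhs => rw [← pow_one u]
      rw [pow_eq_pow_iff_modEq]
      exact (Nat.mod_modEq _ _).of_dvd (orderOf_dvd_natCard u)
    have hpow' : t ^ ((1 : ZMod (Nat.card (rootsOfUnity m N))).val) = t := by
      have := congrArg (fun v : rootsOfUnity m N => ((v : Nˣ) : N)) hpow
      simpa [hut] using this
    change (σ : N ≃ₐ[K] N) t = t
    exact (hspec.trans (by simpa using hpow'))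

/-- A tower is fixed by a member of a descending series with allowed factors. A root of a
polynomial of degree at most `k` is fixed by the kernel of the action on its orbit. For a radical
`a` of exponent `m`, after passing to the automorphisms fixing the `m`-th roots of unity, the map
`σ ↦ σ a / a` is a homomorphism to an abelian group. -/
theorem Tow.exists_desc {k : ℕ} {E : IntermediateField K N} (h : Tow k E) :
    ∃ H : Subgroup (N ≃ₐ[K] N), Desc k H ∧ E ≤ fixedField H := by
  classical
  induction h with
  | bot => exact ⟨⊤, desc_top k, bot_le⟩
  | rad E a m hE hm ha ih =>
    obtain ⟨H₀, hH₀, hEH₀⟩ := ih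
    obtain ⟨H, hH, hle, hroot⟩ := hH₀.step_cyclotomic hm
    have hEH : E ≤ fixedField H := hEH₀.trans (fixedField_antitone hle)
    by_cases ha0 : a = 0
    · subst ha0
      exact ⟨H, hH, sup_le hEH (by rw [adjoin_simple_le_iff]; exact zero_mem _)⟩
    have ham : ∀ σ : H, (σ : N ≃ₐ[K] N) (a ^ m) = a ^ m := fun σ =>
      (mem_fixedField_iff H _).1 (hEH ha) σ σ.2
    have hfix : ∀ σ τ : H, (σ : N ≃ₐ[K] N) ((τ : N ≃ₐ[K] N) a / a) = (τ : N ≃ₐ[K] N) a / a := by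
      intro σ τ
      refine hroot σ σ.2 _ ?_
      rw [div_pow, ← map_pow, ham, div_self (pow_ne_zero m ha0)]
    let f : H →* Nˣ := MonoidHom.mk'
      (fun σ => Units.mk0 ((σ : N ≃ₐ[K] N) a / a)
        (div_ne_zero ((map_ne_zero_iff _ (σ : N ≃ₐ[K] N).injective).2 ha0) ha0)) (by
        intro σ τ
        ext
        simp only [Units.val_mk0, Units.val_mul, Subgroup.coe_mul, AlgEquiv.mul_apply]
        have h1 := hfix σ τ
        rw [map_div₀, div_eq_iff ((map_ne_zero_iff _ (σ : N ≃ₐ[K] N).injective).2 ha0)] at h1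
        rw [h1]
        ring)
    refine hH.step_fix hEH f (Or.inl mul_comm) fun σ hσ => ?_
    have h1 : (σ : N ≃ₐ[K] N) a / a = 1 := congrArg Units.val hσ
    exact (div_eq_one_iff_eq ha0).1 h1
  | deg E a p hE hp hpE hpk hpa ih =>
    obtain ⟨H, hH, hEH⟩ := ih
    have hroots : ∀ y : MulAction.orbit H a, (y : N) ∈ p.roots.toFinset := by
      rintro ⟨_, σ, rfl⟩
      rw [Multiset.mem_toFinset, mem_roots hp, IsRoot.def]
      have hmap : p.map ((σ : N ≃ₐ[K] N) : N →+* N) = p := by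
        ext i
        rw [coeff_map]
        exact (mem_fixedField_iff H _).1 (hEH (hpE i)) σ σ.2
      have h1 := eval_map_apply (f := ((σ : N ≃ₐ[K] N) : N →+* N)) (p := p) a
      rw [hmap, hpa, map_zero] at h1
      exact h1
    let j : MulAction.orbit H a → p.roots.toFinset := fun y => ⟨y, hroots y⟩
    have hj : Function.Injective j := by
      intro x y hxy
      have hxy' := congrArg Subtype.val hxy
      exact Subtype.ext hxy'
    have hfin : Finite (MulAction.orbit H a) := Finite.of_injective j hj
    have hcard : Nat.card (MulAction.orbit H a) ≤ k := by
      refine (Nat.card_le_card_of_injective j hj).trans ?_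
      rw [Nat.card_eq_fintype_card, Fintype.card_coe]
      exact (Multiset.toFinset_card_le _).trans ((card_roots' p).trans hpk)
    refine hH.step_fix hEH (MulAction.toPermHom H (MulAction.orbit H a))
      (isStep_perm _ hcard) fun σ hσ => ?_
    exact congrArg (fun e => ((e ⟨a, MulAction.mem_orbit_self a⟩ : MulAction.orbit H a) : N)) hσ

end Descent

theorem IsKRadical.ks {k : ℕ} {K L : Type} [Field K] [Field L] [Algebra K L]
    [IsGalois K L] (h : IsKRadical k K L) : KS k (L ≃ₐ[K] L) := by
  obtain ⟨t⟩ := h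
  let := t.fieldM
  let := t.algM
  let M := t.M
  let Ω := AlgebraicClosure M
  let N := algebraicClosure K Ω
  let φ : M →ₐ[K] Ω := IsScalarTower.toAlgHom K M Ω
  obtain ⟨E', hE', hmap⟩ := t.tow.transfer φ N.val (fun x hx => by
    rw [fieldRange_val]
    exact mem_algebraicClosure_iff.2 hx)
  obtain ⟨H, hH, hEH⟩ := hE'.exists_desc
  have hemb : ∀ x : L, ∃ y ∈ E', N.val y = φ (t.emb x) := by
    intro x
    have : φ (t.emb x) ∈ E'.map N.val := by
      rw [hmap]
      exact ⟨t.emb x, t.le_top ⟨x, rfl⟩, rfl⟩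
    exact this
  let ι : L →ₐ[K] N := (φ.comp t.emb).codRestrict N.toSubalgebra (fun x => by
    obtain ⟨y, -, hy⟩ := hemb x
    rw [AlgHom.comp_apply, ← hy]
    exact y.2)
  let : Algebra L N := ι.toRingHom.toAlgebra
  have : IsScalarTower K L N := IsScalarTower.of_algHom ι
  have : IsAlgClosure K N := inferInstance
  have : Normal K N := IsAlgClosure.normal K N
  refine hH _ (AlgEquiv.restrictNormalHom L) (AlgEquiv.restrictNormalHom_surjective N) ?_
  have hbot : H.map (AlgEquiv.restrictNormalHom L) = (⊥ : Subgroup (L ≃ₐ[K] L)) := ?_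
  · rw [hbot]
    exact KS.triv _ inferInstance
  rw [eq_bot_iff]
  rintro _ ⟨σ, hσ, rfl⟩
  rw [Subgroup.mem_bot]
  ext x
  apply (algebraMap L N).injective
  have h1 := AlgEquiv.restrictNormal_commutes σ L x
  refine h1.trans ?_
  obtain ⟨y, hy, hyx⟩ := hemb x
  have h2 : algebraMap L N x = y := Subtype.ext hyx.symm
  rw [h2]
  refine ((mem_fixedField_iff H _).1 (hEH hy) σ hσ).trans h2.symm

/-! ### From series of the Galois group to towers -/

section Ascent

variable {K N : Type} [Field K] [Field N] [Algebra K N]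

/-- The fixed field of `H` lies in a tower. -/
def Good (k : ℕ) (H : Subgroup (N ≃ₐ[K] N)) : Prop :=
  ∃ E : IntermediateField K N, Tow k E ∧ fixedField H ≤ E

variable [FiniteDimensional K N] [IsGalois K N]

/-- Passing to the stabilizer `H'` of a letter `x`: a primitive element of the fixed field of `H'`
has at most `k` conjugates under `H`. -/
theorem Good.stabilizer {k : ℕ} {H : Subgroup (N ≃ₐ[K] N)} (hH : Good k H)
    (f : H →* Equiv.Perm (Fin k)) (x : Fin k) {H' : Subgroup (N ≃ₐ[K] N)}
    (hH' : ∀ σ : H, (σ : N ≃ₐ[K] N) ∈ H' ↔ f σ x = x) : Good k H' := by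
  obtain ⟨E, hE, hHE⟩ := hH
  obtain ⟨α, hα⟩ : ∃ α : N, adjoin K {α} = fixedField H' := by
    obtain ⟨α, hα⟩ := Field.exists_primitive_element K (fixedField H')
    refine ⟨α, ?_⟩
    have := congrArg (IntermediateField.map (fixedField H').val) hα
    rw [adjoin_map] at this
    simpa [← AlgHom.fieldRange_eq_map] using this
  have : Fintype H := Fintype.ofFinite H
  have hαH' : ∀ σ ∈ H', σ α = α :=
    (mem_fixedField_iff H' α).1 (hα ▸ mem_adjoin_simple_self K α)
  refine ⟨E ⊔ adjoin K {α}, ?_, hα ▸ le_sup_right⟩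
  refine Tow.deg E α (prodXSubSMul H N α) hE (prodXSubSMul.monic H N α).ne_zero ?_ ?_
    (prodXSubSMul.eval H N α)
  · intro i
    apply hHE
    rw [mem_fixedField_iff]
    intro σ hσ
    exact prodXSubSMul.coeff H N α ⟨σ, hσ⟩ i
  · classical
    have hdeg : (prodXSubSMul H N α).natDegree =
        Nat.card (H ⧸ MulAction.stabilizer H α) := by
      rw [prodXSubSMul, natDegree_prod_of_monic _ _ fun _ _ => monic_X_sub_C _]
      simp [Nat.card_eq_fintype_card]
    rw [hdeg]
    let : MulAction H (Fin k) := MulAction.compHom (Fin k) f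
    have hst : MulAction.stabilizer H x ≤ MulAction.stabilizer H α := by
      intro σ hσ
      exact hαH' σ ((hH' σ).2 hσ)
    have h1 : Nat.card (H ⧸ MulAction.stabilizer H x) ≤ k := by
      rw [← Nat.card_congr (MulAction.orbitEquivQuotientStabilizer H x)]
      simpa using Nat.card_le_card_of_injective
        (Subtype.val : MulAction.orbit H x → Fin k) Subtype.val_injective
    refine le_trans ?_ h1
    refine Nat.card_le_card_of_surjective
      (Subgroup.quotientMapOfLE hst) ?_
    intro q
    induction q using QuotientGroup.induction_on with
    | H q => exact ⟨(q : H ⧸ MulAction.stabilizer H x), rfl⟩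

/-- Passing to the kernel `H'` of a character `χ` of `H` with values in the `n`-th roots of unity,
all fixed by `H`: by independence of characters, some Lagrange resolvent `w` is nonzero. It
satisfies `h w = χ(h) w` for all `h ∈ H`, so `w ^ n` is fixed by `H`, and the elements of `H`
fixing `w` are those of `H'`. -/
theorem Good.char_ker {k : ℕ} {H : Subgroup (N ≃ₐ[K] N)} (hH : Good k H) {n : ℕ} (hn : 1 ≤ n)
    (χ : H →* Nˣ) (hχn : ∀ σ, χ σ ^ n = 1)
    (hfix : ∀ t : N, t ^ n = 1 → ∀ σ ∈ H, σ t = t) {H' : Subgroup (N ≃ₐ[K] N)}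
    (hH' : ∀ σ : H, (σ : N ≃ₐ[K] N) ∈ H' ↔ χ σ = 1) : Good k H' := by
  obtain ⟨E, hE, hHE⟩ := hH
  have : Fintype H := Fintype.ofFinite H
  have hχfix : ∀ σ τ : H, (σ : N ≃ₐ[K] N) (χ τ : N) = χ τ := by
    intro σ τ
    refine hfix _ ?_ σ σ.2
    rw [← Units.val_pow_eq_pow_val, hχn τ, Units.val_one]
  obtain ⟨y, hy⟩ : ∃ y : N, ∑ τ : H, ((χ τ)⁻¹ : Nˣ) * (τ : N ≃ₐ[K] N) y ≠ 0 := by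
    by_contra! hcon
    let g : H → (N →* N) := fun τ => ((τ : N ≃ₐ[K] N) : N →* N)
    have hg : Function.Injective g := by
      intro σ τ hστ
      refine Subtype.ext (AlgEquiv.ext fun y => ?_)
      exact DFunLike.congr_fun hστ y
    have hli := (linearIndependent_monoidHom N N).comp g hg
    rw [Fintype.linearIndependent_iff] at hli
    have := hli (fun τ => (((χ τ)⁻¹ : Nˣ) : N)) (by
      ext y
      simpa [Finset.sum_apply, g] using hcon y) 1
    exact Units.ne_zero _ this
  set w : N := ∑ τ : H, ((χ τ)⁻¹ : Nˣ) * (τ : N ≃ₐ[K] N) y with hw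
  have hσw : ∀ σ : H, (σ : N ≃ₐ[K] N) w = χ σ * w := by
    intro σ
    rw [hw, map_sum, Finset.mul_sum]
    refine Fintype.sum_equiv (Equiv.mulLeft σ) _ _ fun τ => ?_
    rw [Equiv.coe_mulLeft, map_mul, map_mul, ← map_inv χ τ, hχfix σ τ⁻¹, mul_inv, map_inv,
      Units.val_mul, ← mul_assoc, ← mul_assoc, Units.mul_inv, one_mul]
    rfl
  refine ⟨E ⊔ adjoin K {w}, Tow.rad E w n hE hn (hHE ?_), ?_⟩
  · rw [mem_fixedField_iff]
    intro σ hσ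
    rw [map_pow, hσw ⟨σ, hσ⟩, mul_pow]
    have : ((χ ⟨σ, hσ⟩ : Nˣ) : N) ^ n = 1 := by
      rw [← Units.val_pow_eq_pow_val, hχn, Units.val_one]
    rw [this, one_mul]
  · refine le_trans ?_ (sup_le_sup_right hHE _)
    rw [← IsGalois.fixedField_fixingSubgroup (fixedField H ⊔ adjoin K {w})]
    refine fixedField_antitone ?_
    intro σ hσ
    have hσH : σ ∈ H := by
      rw [← fixingSubgroup_fixedField H]
      exact fixingSubgroup_antitone (le_sup_left (b := adjoin K {w})) hσ
    rw [hH' ⟨σ, hσH⟩]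
    have h1 : σ w = w := (mem_fixingSubgroup_iff _ _).1 hσ w
      ((le_sup_right (a := fixedField H)) (mem_adjoin_simple_self K w))
    rw [hσw ⟨σ, hσH⟩] at h1
    exact Units.ext (mul_right_cancel₀ hy (by rw [h1, Units.val_one, one_mul]))

/-- Passing to the kernel of a homomorphism to an allowed factor. A minimal good subgroup
containing the kernel equals it, since otherwise it could be shrunk further by taking the
stabilizer of a letter, or the kernel of a character. -/
theorem Good.step {k : ℕ} {H : Subgroup (N ≃ₐ[K] N)} (hH : Good k H) {n : ℕ} (hn : 1 ≤ n)
    {ζ : N} (hζ : IsPrimitiveRoot ζ n) (hζH : ∀ σ ∈ H, σ ζ = ζ) {Q : Type} [Group Q]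
    (f : H →* Q) (hQ : IsStep k Q) (hfn : ∀ σ, f σ ^ n = 1) :
    Good k (f.ker.map H.subtype) := by
  have : NeZero n := ⟨by omega⟩
  have hfix : ∀ t : N, t ^ n = 1 → ∀ σ ∈ H, σ t = t := by
    intro t ht σ hσ
    obtain ⟨i, -, rfl⟩ := hζ.eq_pow_of_pow_eq_one ht
    rw [map_pow, hζH σ hσ]
  let S : Set (Subgroup (N ≃ₐ[K] N)) := {H' | Good k H' ∧ H' ≤ H ∧ f.ker.map H.subtype ≤ H'}
  have hS : S.Nonempty := ⟨H, hH, le_rfl, by rintro _ ⟨x, -, rfl⟩; exact x.2⟩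
  obtain ⟨H', ⟨hgood, hle, hker⟩, hmin⟩ := S.toFinite.exists_minimal hS
  suffices H' ≤ f.ker.map H.subtype by rwa [← le_antisymm this hker]
  intro σ hσ
  by_contra hσker
  let f' : H' →* Q := f.comp (Subgroup.inclusion hle)
  have hσ1 : f' ⟨σ, hσ⟩ ≠ 1 := fun h => hσker ⟨⟨σ, hle hσ⟩, h, rfl⟩
  suffices ∃ H'' : Subgroup H', Good k (H''.map H'.subtype) ∧ ⟨σ, hσ⟩ ∉ H'' ∧ f'.ker ≤ H'' by
    obtain ⟨H'', hg, hs, hk⟩ := this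
    have hle' : H''.map H'.subtype ≤ H' := by
      rintro _ ⟨x, -, rfl⟩
      exact x.2
    have := hmin ⟨hg, hle'.trans hle, by
      rintro τ hτ
      refine ⟨⟨τ, hker hτ⟩, hk ?_, rfl⟩
      obtain ⟨x, hx, rfl⟩ := hτ
      exact hx⟩ hle' hσ
    obtain ⟨x, hx, hxσ⟩ := this
    have hxσ' : x = ⟨σ, hσ⟩ := Subtype.ext hxσ
    exact hs (hxσ' ▸ hx)
  have hmemmap : ∀ (H'' : Subgroup H') (τ : H'),
      (τ : N ≃ₐ[K] N) ∈ H''.map H'.subtype ↔ τ ∈ H'' := fun H'' τ =>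
    Subgroup.mem_map_iff_mem H'.subtype_injective
  rcases hQ with hc | ⟨i, hi⟩
  · let : CommGroup f'.range :=
      { (inferInstance : Group f'.range) with
        mul_comm := fun a b => Subtype.ext (hc a b) }
    have : Finite f'.range := Finite.of_surjective _ f'.rangeRestrict_surjective
    have hexp : Monoid.exponent f'.range ∣ n := by
      refine Monoid.exponent_dvd_of_forall_pow_eq_one ?_
      rintro ⟨_, τ, rfl⟩
      exact Subtype.ext (hfn _)
    have : HasEnoughRootsOfUnity N n := ⟨⟨ζ, hζ⟩, inferInstance⟩
    have := HasEnoughRootsOfUnity.of_dvd N hexp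
    have hne : f'.rangeRestrict ⟨σ, hσ⟩ ≠ 1 := fun h => hσ1 (congrArg Subtype.val h)
    obtain ⟨φ, hφ⟩ := CommGroup.exists_apply_ne_one_of_hasEnoughRootsOfUnity f'.range N hne
    refine ⟨(φ.comp f'.rangeRestrict).ker, ?_, hφ, ?_⟩
    · refine hgood.char_ker hn (φ.comp f'.rangeRestrict) ?_
        (fun t ht σ hσ => hfix t ht σ (hle hσ)) (fun τ => hmemmap _ τ)
      intro τ
      rw [MonoidHom.comp_apply, ← map_pow]
      have : f'.rangeRestrict τ ^ n = 1 := Subtype.ext (hfn _)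
      rw [this, map_one]
    · intro τ hτ
      have : f'.rangeRestrict τ = 1 := Subtype.ext hτ
      rw [MonoidHom.mem_ker, MonoidHom.comp_apply, this, map_one]
  · have hne : i (f' ⟨σ, hσ⟩) ≠ 1 := fun h => hσ1 (hi (h.trans (map_one i).symm))
    obtain ⟨x, hx⟩ : ∃ x, i (f' ⟨σ, hσ⟩) x ≠ x := by
      by_contra! hcon
      exact hne (Equiv.ext hcon)
    let H'' : Subgroup H' := (MulAction.stabilizer (Equiv.Perm (Fin k)) x).comap (i.comp f')
    refine ⟨H'', ?_, hx, ?_⟩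
    · exact hgood.stabilizer (i.comp f') x (fun τ => hmemmap _ τ)
    · intro τ hτ
      have hτ : f' τ = 1 := hτ
      change i (f' τ) x = x
      rw [hτ, map_one]
      rfl

/-- Passing to the kernel of a homomorphism `ρ` to a `[k]`-solvable group `A` whose exponent divides
`n`, along a series of `A`. -/
theorem Good.ker_of_ks {k n : ℕ} (hn : 1 ≤ n) {ζ : N} (hζ : IsPrimitiveRoot ζ n)
    {A : Type} [Group A] (hA : KS k A) :
    ∀ (H : Subgroup (N ≃ₐ[K] N)) (_ : Good k H) (_ : ∀ σ ∈ H, σ ζ = ζ)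
      (_ : ∀ a : A, a ^ n = 1) (ρ : H →* A), Good k (ρ.ker.map H.subtype) := by
  induction hA with
  | triv A hA =>
    intro H hH hζH _ ρ
    have : ρ.ker.map H.subtype = H := by
      have h1 : ρ.ker = ⊤ := eq_top_iff.2 fun x _ => Subsingleton.elim _ _
      rw [h1, ← MonoidHom.range_eq_map, Subgroup.range_subtype]
    rwa [this]
  | step A Q f hQ h ih =>
    intro H hH hζH hAn ρ
    have h1 := hH.step hn hζ hζH (f.comp ρ) hQ (fun σ => by
      rw [MonoidHom.comp_apply, ← map_pow, hAn, map_one])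
    have hle : (f.comp ρ).ker.map H.subtype ≤ H := by
      rintro _ ⟨x, -, rfl⟩
      exact x.2
    let ρ' : ((f.comp ρ).ker.map H.subtype : Subgroup (N ≃ₐ[K] N)) →* f.ker :=
      (ρ.comp (Subgroup.inclusion hle)).codRestrict f.ker (by
        rintro ⟨_, x, hx, rfl⟩
        exact hx)
    have h2 := ih _ h1 (fun σ hσ => hζH σ (hle hσ)) (fun a => Subtype.ext (hAn a)) ρ'
    have h3 : ρ'.ker.map (Subgroup.subtype _) = ρ.ker.map H.subtype := by
      ext σ
      constructor
      · rintro ⟨x, hx, rfl⟩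
        exact ⟨⟨x, hle x.2⟩, congrArg Subtype.val hx, rfl⟩
      · rintro ⟨x, hx, rfl⟩
        have hx : ρ x = 1 := hx
        exact ⟨⟨x, x, by rw [SetLike.mem_coe, MonoidHom.mem_ker, MonoidHom.comp_apply, hx,
          map_one], rfl⟩, Subtype.ext hx, rfl⟩
    rwa [h3] at h2

end Ascent

theorem KS.isKRadical {k : ℕ} {K L : Type} [Field K] [Field L] [Algebra K L] [CharZero K]
    [FiniteDimensional K L] [IsGalois K L] (h : KS k (L ≃ₐ[K] L)) : IsKRadical k K L := by
  let n := Nat.card (L ≃ₐ[K] L)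
  have hn : 1 ≤ n := Nat.card_pos
  have : NeZero n := ⟨by omega⟩
  have : CharZero L := charZero_of_injective_algebraMap (algebraMap K L).injective
  let C := CyclotomicField n L
  have : IsScalarTower K L C := inferInstance
  have : FiniteDimensional L C := IsCyclotomicExtension.finiteDimensional {n} L C
  have : FiniteDimensional K C := FiniteDimensional.trans K L C
  let Ω := AlgebraicClosure C
  have : Algebra.IsAlgebraic K Ω := Algebra.IsAlgebraic.trans K C Ω
  have : Normal K Ω := normal_iff.2 fun x =>
    ⟨Algebra.IsIntegral.isIntegral x, IsAlgClosed.splits _⟩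
  let N := normalClosure K C Ω
  let ι : L →ₐ[K] N := (IsScalarTower.toAlgHom K C N).comp (IsScalarTower.toAlgHom K L C)
  let : Algebra L N := ι.toRingHom.toAlgebra
  have : IsScalarTower K L N := IsScalarTower.of_algHom ι
  have : IsGalois K N := { }
  let ζ : N := algebraMap C N (IsCyclotomicExtension.zeta n L C)
  have hζ : IsPrimitiveRoot ζ n :=
    (IsCyclotomicExtension.zeta_spec n L C).map_of_injective (algebraMap C N).injective
  let H : Subgroup (N ≃ₐ[K] N) := fixingSubgroup (adjoin K {ζ})
  have hH : Good k H := by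
    refine ⟨⊥ ⊔ adjoin K {ζ}, Tow.rad ⊥ ζ n Tow.bot hn ?_, ?_⟩
    · rw [hζ.pow_eq_one]
      exact one_mem _
    · rw [IsGalois.fixedField_fixingSubgroup]
      exact le_sup_right
  have hζH : ∀ σ ∈ H, σ ζ = ζ := fun σ hσ =>
    (mem_fixingSubgroup_iff _ _).1 hσ ζ (mem_adjoin_simple_self K ζ)
  obtain ⟨E, hE, hle⟩ := hH.ker_of_ks hn hζ h H hζH (fun a => pow_card_eq_one')
    ((AlgEquiv.restrictNormalHom L).comp H.subtype)
  refine hE.isKRadical ι (le_trans ?_ hle)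
  rintro _ ⟨x, rfl⟩
  rw [mem_fixedField_iff]
  rintro _ ⟨σ, hσ, rfl⟩
  have h1 := AlgEquiv.restrictNormal_commutes (σ : N ≃ₐ[K] N) L x
  have h2 : AlgEquiv.restrictNormal (σ : N ≃ₐ[K] N) L = 1 := hσ
  rw [h2] at h1
  exact h1.symm

/-- A finite Galois extension of fields of characteristic zero is `k`-radical if and
only if its Galois group is `[k]`-solvable. -/
theorem isKRadical_iff_isKSolvable_galoisGroup (k : ℕ) (hk : 1 ≤ k)
    (K L : Type) [Field K] [Field L] [Algebra K L] [CharZero K]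
    [FiniteDimensional K L] [IsGalois K L] :
    IsKRadical k K L ↔ IsKSolvable k (L ≃ₐ[K] L) :=
  ⟨fun h => h.ks.isKSolvable, fun h => h.ks.isKRadical⟩
end

section
/- Let $X$ be a finite set and $G$ a solvable group of permutations of $X$ that acts primitively on $X$ and contains a cycle of length $|X|$. Then either $|X| = 4$, or $|X|$ is a prime number $p$ and there is a bijection $X \simeq \mathbb{Z}/p\mathbb{Z}$ under which every element of $G$ becomes a map $x \mapsto ax + b$ with $a \in (\mathbb{Z}/p\mathbb{Z})^{*}$, $b \in \mathbb{Z}/p\mathbb{Z}$, and under which $G$ contains all translations $x \mapsto x + b$. -/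
/-!
A nontrivial solvable group has a nontrivial abelian normal subgroup (the last nontrivial term of
its derived series), and the elements of order dividing a suitable prime `p` in it form a nontrivial elementary
abelian normal subgroup `A`. Primitivity makes `A` transitive, and a faithful transitive abelian
group is regular, so a choice of base point identifies `X` with the `𝔽_p`-vector space `A`; under
this identification `A` acts by translations and every `g ∈ G` acts by an affine map whose linear
part is conjugation by `g`.

Let `r = dim A`, so `|X| = p ^ r`, and let `σ` be the full cycle, of order `p ^ r`. Extend `σ`
to a linear map `L` of `A × 𝔽_p`, a space of dimension `r + 1`. As `L ^ p ^ r = 1` in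
characteristic `p`, the map `L - 1` is nilpotent, hence `(L - 1) ^ (r + 1) = 0`. If
`r + 1 ≤ p ^ (r - 1)`, then `L ^ p ^ (r - 1) - 1 = (L - 1) ^ p ^ (r - 1) = 0`, so
`σ ^ p ^ (r - 1) = 1`, contradicting the order of `σ`. The inequality fails for `r ≥ 1` only if
`r = 1`, or `p = r = 2`; these are the two alternatives of the theorem.
-/

open Pointwise

/-- A subgroup `G` of the permutation group of `X` acts primitively on `X` if it acts
transitively and every block of the action is trivial (a subsingleton or all of `X`). -/
def IsPrimitivePermGroup {X : Type*} (G : Subgroup (Equiv.Perm X)) : Prop :=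
  MulAction.IsPretransitive G X ∧
  ∀ B : Set X, (∀ g : G, g • B = B ∨ Disjoint (g • B) B) → B.Subsingleton ∨ B = Set.univ

/-- A nontrivial finite solvable group has a nontrivial normal subgroup that is
elementary abelian for some prime: the `p`-torsion of the last nontrivial derived subgroup. -/
theorem exists_elementary_abelian_normal (G : Type*) [Group G] [Finite G] [Nontrivial G]
    (h : Group.IsSolvable G) :
    ∃ (p : ℕ) (_ : p.Prime) (A : Subgroup G), A.Normal ∧ A ≠ ⊥ ∧
      (∀ a ∈ A, ∀ b ∈ A, a * b = b * a) ∧ ∀ a ∈ A, a ^ p = 1 := by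
  classical
  have hs := (Group.isSolvable_def G).1 h
  obtain ⟨n, hn⟩ : ∃ n, Nat.find hs = n + 1 := by
    refine Nat.exists_eq_succ_of_ne_zero fun h0 => ?_
    have := Nat.find_spec hs
    rw [h0] at this
    exact bot_ne_top (α := Subgroup G) (by simpa using this.symm)
  set B := derivedSeries G n with hB
  have hBn : B.Normal := derivedSeries_normal G n
  have hB0 : B ≠ ⊥ := Nat.find_min hs (m := n) (by omega)
  have hBc : ∀ a ∈ B, ∀ b ∈ B, a * b = b * a := by
    have h1 := Nat.find_spec hs
    rw [hn, derivedSeries_succ, Subgroup.commutator_eq_bot_iff_le_centralizer] at h1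
    intro a ha b hb
    exact (Subgroup.mem_centralizer_iff.1 (h1 ha) b hb).symm
  have hcard : Nat.card B ≠ 1 := by
    rwa [Ne, Subgroup.card_eq_one]
  obtain ⟨p, hp, hpd⟩ := Nat.exists_prime_and_dvd hcard
  have := Fact.mk hp
  refine ⟨p, hp,
    { carrier := {a | a ∈ B ∧ a ^ p = 1}
      one_mem' := ⟨B.one_mem, one_pow p⟩
      mul_mem' := ?_
      inv_mem' := ?_ }, ⟨?_⟩, ?_, ?_, ?_⟩
  · rintro a b ⟨ha, ha'⟩ ⟨hb, hb'⟩
    exact ⟨B.mul_mem ha hb, by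
      rw [(show Commute a b from hBc a ha b hb).mul_pow, ha', hb', one_mul]⟩
  · rintro a ⟨ha, ha'⟩
    exact ⟨B.inv_mem ha, by rw [inv_pow, ha', inv_one]⟩
  · rintro a ⟨ha, ha'⟩ g
    exact ⟨hBn.conj_mem a ha g, by rw [conj_pow, ha']; simp⟩
  · intro hbot
    obtain ⟨x, hx⟩ := exists_prime_orderOf_dvd_card' p hpd
    have hx1 : (x : G) ∈ (⊥ : Subgroup G) := by
      rw [← hbot]
      refine ⟨x.2, ?_⟩
      have := pow_orderOf_eq_one x
      rw [hx] at this
      exact_mod_cast this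
    have hx2 : x = 1 := by
      ext
      simpa using hx1
    rw [hx2, orderOf_one] at hx
    exact hp.one_lt.ne hx
  · rintro a ⟨ha, -⟩ b ⟨hb, -⟩
    exact hBc a ha b hb
  · rintro a ⟨-, ha⟩
    exact ha

/-- For a faithful action, a transitive elementary abelian normal subgroup identifies the underlying set with a vector space
over `ZMod p` on which the whole group acts by affine maps. -/
theorem exists_affine_structure {X : Type} [Finite X] [Nonempty X] {G : Type} [Group G]
    [MulAction G X] [FaithfulSMul G X] (p : ℕ) (A : Subgroup G) (hA : A.Normal)
    (hcomm : ∀ a ∈ A, ∀ b ∈ A, a * b = b * a) (hexp : ∀ a ∈ A, a ^ p = 1)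
    (htrans : MulAction.IsPretransitive A X) :
    ∃ (V : Type) (_ : AddCommGroup V) (_ : Module (ZMod p) V) (e : X ≃ V),
      (∀ g : G, ∃ (M : V →ₗ[ZMod p] V) (b : V), ∀ x, e (g • x) = M (e x) + b) ∧
      (∀ v : V, ∃ g : G, ∀ x, e (g • x) = e x + v) := by
  let : CommGroup A :=
    { (inferInstance : Group A) with
      mul_comm := fun a b => Subtype.ext (hcomm a a.2 b b.2) }
  let : Module (ZMod p) (Additive A) := AddCommGroup.zmodModule (n := p) (by
    intro x
    apply Additive.toMul.injective
    rw [toMul_nsmul]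
    exact Subtype.ext (hexp _ (Additive.toMul x).2))
  obtain ⟨x₀⟩ := ‹Nonempty X›
  -- An element of `A` fixing the base point fixes every `a • x₀`, hence is trivial.
  have hinj : Function.Injective fun v : Additive A => Additive.toMul v • x₀ := by
    intro v w hvw
    apply Additive.toMul.injective
    apply Subtype.ext
    refine FaithfulSMul.eq_of_smul_eq_smul (α := X) fun x => ?_
    obtain ⟨a, rfl⟩ := MulAction.exists_smul_eq A x₀ x
    change (Additive.toMul v) • a • x₀ = (Additive.toMul w) • a • x₀
    rw [smul_smul, smul_smul, mul_comm, mul_comm _ a, mul_smul, mul_smul]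
    exact congrArg (a • ·) hvw
  have hsurj : Function.Surjective fun v : Additive A => Additive.toMul v • x₀ := by
    intro x
    obtain ⟨a, rfl⟩ := MulAction.exists_smul_eq A x₀ x
    exact ⟨Additive.ofMul a, rfl⟩
  let f := Equiv.ofBijective _ ⟨hinj, hsurj⟩
  have hf : ∀ v, f v = ((Additive.toMul v : A) : G) • x₀ := fun v => rfl
  refine ⟨Additive A, inferInstance, inferInstance, f.symm, fun g => ?_, fun v => ?_⟩
  · let M : Additive A →+ Additive A :=
      MonoidHom.toAdditive (MulAut.conjNormal (H := A) g).toMonoidHom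
    have hM : ∀ v, ((Additive.toMul (M v) : A) : G) = g * (Additive.toMul v : A) * g⁻¹ :=
      fun v => MulAut.conjNormal_apply g (Additive.toMul v)
    refine ⟨M.toZModLinearMap p, f.symm (g • x₀), fun x => ?_⟩
    obtain ⟨v, rfl⟩ := f.surjective x
    obtain ⟨b, hb⟩ := f.surjective (g • x₀)
    rw [Equiv.symm_apply_eq, ← hb, Equiv.symm_apply_apply, Equiv.symm_apply_apply,
      AddMonoidHom.coe_toZModLinearMap, hf, hf, toMul_add, Subgroup.coe_mul, mul_smul,
      ← hf b, hb, hM]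
    simp [smul_smul]
  · refine ⟨((Additive.toMul v : A) : G), fun x => ?_⟩
    obtain ⟨w, rfl⟩ := f.surjective x
    rw [Equiv.symm_apply_eq, Equiv.symm_apply_apply, hf, hf, add_comm, toMul_add,
      Subgroup.coe_mul, mul_smul]

/-- An affine permutation of `𝔽_p ^ r` of `p`-power order has order dividing every
`p ^ k ≥ r + 1`: its linear extension to dimension `r + 1` is unipotent. -/
theorem affine_pow_eq_one {X V : Type} [AddCommGroup V] [Finite V] (p : ℕ) [Fact p.Prime]
    [Module (ZMod p) V] (e : X ≃ V) (σ : Equiv.Perm X) (M : V →ₗ[ZMod p] V) (b : V)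
    (hσ : ∀ x, e (σ x) = M (e x) + b) (n k : ℕ) (hn : σ ^ p ^ n = 1)
    (hk : Module.finrank (ZMod p) V + 1 ≤ p ^ k) : σ ^ p ^ k = 1 := by
  let L : Module.End (ZMod p) (V × ZMod p) :=
    (M.coprod (LinearMap.toSpanSingleton (ZMod p) V b)).prod (LinearMap.snd _ _ _)
  have hL : ∀ v t, L (v, t) = (M v + t • b, t) := fun v t => by simp [L]
  have hLpow : ∀ (m : ℕ) x, (L ^ m) (e x, 1) = (e ((σ ^ m) x), 1) := by
    intro m x
    induction m with
    | zero => simp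
    | succ m ih =>
      rw [pow_succ', Module.End.mul_apply, ih, hL, one_smul, pow_succ', Equiv.Perm.mul_apply, hσ]
  have hL1 : L ^ p ^ n = 1 := by
    have key : ∀ v, (L ^ p ^ n) (v, 1) = (v, 1) := fun v => by
      have := hLpow (p ^ n) (e.symm v)
      rwa [hn, Equiv.Perm.one_apply, Equiv.apply_symm_apply] at this
    refine LinearMap.ext fun ⟨v, t⟩ => ?_
    -- The vectors `(v, 1)` span.
    have hdec : ((v, t) : V × ZMod p) = ((v, 1) - (0, 1)) + t • (0, 1) := by simp
    rw [hdec, map_add, map_sub, map_smul, key, key]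
    rfl
  have : CharP (Module.End (ZMod p) (V × ZMod p)) p :=
    Module.charP_end ⟨(0, 1), by
      refine (Submodule.eq_bot_iff _).2 fun r hr => ?_
      simpa using congrArg Prod.snd ((Ideal.mem_torsionOf_iff _ _).1 hr)⟩
  have : Module.Finite (ZMod p) V := Module.Finite.of_finite
  have hnil : IsNilpotent (L - 1) := ⟨p ^ n, by
    rw [sub_pow_char_pow_of_commute _ _ (Commute.one_right L), hL1, one_pow, sub_self]⟩
  have hzero : (L - 1) ^ (Module.finrank (ZMod p) V + 1) = 0 := by
    have h1 := LinearMap.aeval_self_charpoly (L - 1)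
    rw [hnil.charpoly_eq_X_pow_finrank] at h1
    simpa using h1
  have hLk : L ^ p ^ k = 1 := by
    have h1 : (L - 1) ^ p ^ k = 0 := pow_eq_zero_of_le hk hzero
    rwa [sub_pow_char_pow_of_commute _ _ (Commute.one_right L), one_pow, sub_eq_zero] at h1
  ext x
  have := hLpow (p ^ k) x
  rw [hLk] at this
  exact (e.injective (congrArg Prod.fst this)).symm

theorem eq_one_or_eq_two_of_pow_lt {p r : ℕ} (hp : 2 ≤ p) (hr : 1 ≤ r)
    (h : p ^ (r - 1) < r + 1) : r = 1 ∨ (p = 2 ∧ r = 2) := by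
  obtain ⟨s, rfl⟩ : ∃ s, r = s + 1 := ⟨r - 1, by omega⟩
  rw [Nat.add_sub_cancel] at h
  rcases s with _ | _ | s
  · exact Or.inl rfl
  · simp only [zero_add, pow_one] at h
    exact Or.inr ⟨by omega, rfl⟩
  · exfalso
    have h1 : 2 ^ (s + 2) ≤ p ^ (s + 2) := Nat.pow_le_pow_left hp _
    have h2 : s + 1 ≤ 2 ^ s := Nat.lt_two_pow_self
    have h3 : 2 ^ (s + 2) = 2 ^ s * 4 := by rw [pow_add]; norm_num
    have h4 : p ^ (s + 2) < s + 4 := h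
    omega

theorem IsPrimitivePermGroup.isPreprimitive {X : Type*} {G : Subgroup (Equiv.Perm X)}
    (h : IsPrimitivePermGroup G) : MulAction.IsPreprimitive G X :=
  { h.1 with
    isTrivialBlock_of_isBlock := fun {B} hB =>
      h.2 B fun g => by
        by_contra! hg
        have := hB (g₁ := g) (g₂ := 1) (by simpa using hg.1)
        rw [one_smul] at this
        exact hg.2 this }

/-- A solvable primitive permutation group on a finite set `X` containing a full cycle:
either `|X| = 4`, or `|X|` is a prime `p` and, after identifying `X` with `ℤ/pℤ`, the
group consists of affine maps `x ↦ a x + b` and contains all translations `x ↦ x + b`. -/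
theorem solvable_primitive_with_cycle (X : Type) [Fintype X] [DecidableEq X]
    (G : Subgroup (Equiv.Perm X)) (hsolv : IsSolvable G)
    (hprim : IsPrimitivePermGroup G)
    (hcyc : ∃ σ ∈ G, σ.IsCycle ∧ σ.support = Finset.univ) :
    Fintype.card X = 4 ∨
    ∃ (p : ℕ) (_ : p.Prime) (e : X ≃ ZMod p),
      (∀ g ∈ G, ∃ a b : ZMod p, a ≠ 0 ∧ ∀ x : X, e (g x) = a * e x + b) ∧
      (∀ b : ZMod p, ∃ g ∈ G, ∀ x : X, e (g x) = e x + b) := by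
  obtain ⟨σ, hσG, hσc, hσs⟩ := hcyc
  have hord : orderOf σ = Fintype.card X := by rw [hσc.orderOf, hσs, Finset.card_univ]
  have : Nonempty X := ⟨hσc.choose⟩
  have : Nontrivial G :=
    ⟨⟨σ, hσG⟩, 1, fun h => hσc.ne_one (congrArg Subtype.val h)⟩
  have := hprim.isPreprimitive
  obtain ⟨p, hp, A, hAn, hA0, hAc, hAe⟩ := exists_elementary_abelian_normal G hsolv
  have := Fact.mk hp
  have htrans : MulAction.IsPretransitive A X := by
    refine MulAction.IsQuasiPreprimitive.isPretransitive_of_normal (G := G) fun hfix => hA0 ?_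
    rw [Subgroup.eq_bot_iff_forall]
    intro a ha
    refine FaithfulSMul.eq_of_smul_eq_smul (α := X) fun x => ?_
    have hx : x ∈ MulAction.fixedPoints A X := hfix ▸ Set.mem_univ x
    rw [one_smul]
    exact hx ⟨a, ha⟩
  obtain ⟨V, _, _, e, haff, htr⟩ := exists_affine_structure p A hAn hAc hAe htrans
  have : Finite V := Finite.of_equiv X e
  have : Module.Finite (ZMod p) V := Module.Finite.of_finite
  set r := Module.finrank (ZMod p) V with hr
  have hcard : Fintype.card X = p ^ r := by
    rw [← Nat.card_eq_fintype_card, Nat.card_congr e,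
      Module.natCard_eq_pow_finrank (K := ZMod p), Nat.card_zmod]
  have hr1 : 1 ≤ r := by
    by_contra! h0
    have h1 : orderOf σ = 1 := by rw [hord, hcard, Nat.lt_one_iff.1 h0, pow_zero]
    exact hσc.ne_one (orderOf_eq_one_iff.1 h1)
  have hlt : p ^ (r - 1) < r + 1 := by
    by_contra! hle
    obtain ⟨M, b, hM⟩ := haff ⟨σ, hσG⟩
    have h1 : σ ^ p ^ r = 1 := by rw [← hcard, ← hord, pow_orderOf_eq_one]
    have h2 := affine_pow_eq_one p e σ M b hM r (r - 1) h1 hle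
    have h3 := Nat.le_of_dvd (pow_pos hp.pos _) (orderOf_dvd_of_pow_eq_one h2)
    rw [hord, hcard] at h3
    exact absurd h3 (not_le.2 (Nat.pow_lt_pow_right hp.one_lt (by omega)))
  rcases eq_one_or_eq_two_of_pow_lt hp.two_le hr1 hlt with h | ⟨h, h'⟩
  · right
    let φ : V ≃ₗ[ZMod p] ZMod p := LinearEquiv.ofFinrankEq _ _ (by rw [← hr, h]; simp)
    refine ⟨p, hp, e.trans φ.toEquiv, fun g hg => ?_, fun b => ?_⟩
    · obtain ⟨M, b, hM⟩ := haff ⟨g, hg⟩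
      -- A linear endomorphism of a line is multiplication by its value at `1`.
      have hlin : ∀ v, φ (M v) = φ (M (φ.symm 1)) * φ v := fun v => by
        have : v = φ v • φ.symm 1 := by
          rw [← map_smul, smul_eq_mul, mul_one, LinearEquiv.symm_apply_apply]
        conv_lhs => rw [this]
        rw [map_smul, map_smul, smul_eq_mul, mul_comm]
      have hform : ∀ x, φ (e (g x)) = φ (M (φ.symm 1)) * φ (e x) + φ b := fun x => by
        rw [← hlin, ← map_add]
        exact congrArg φ (hM x)
      refine ⟨φ (M (φ.symm 1)), φ b, fun ha => ?_, hform⟩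
      -- If the linear part vanished, `g` would be constant on a set with at least two points.
      obtain ⟨x, hx⟩ : ∃ x, σ x ≠ x := ⟨_, hσc.choose_spec.1⟩
      apply hx
      apply g.injective
      apply e.injective
      apply φ.injective
      rw [hform, hform, ha, zero_mul, zero_mul]
    · obtain ⟨g, hg⟩ := htr (φ.symm b)
      refine ⟨g, g.2, fun x => ?_⟩
      have := congrArg φ (hg x)
      rw [map_add, LinearEquiv.apply_symm_apply] at this
      exact this
  · left
    rw [hcard, h, h']
    norm_num
end

section
/- Let $p$ be a prime number and let $f$ be a complex polynomial of degree $p$ such that the Galois group of $f(Y) - t$ over the field $\mathbb{C}(t)$ of rational functions is isomorphic to a subgroup of the dihedral group of order $2p$. Then there exist polynomials $\ell_1 = aX + b$ and $\ell_2 = cX + d$ with $a, c \neq 0$ such that either $f = \ell_1 \circ X^p \circ \ell_2$ or $f = \ell_1 \circ T_p \circ \ell_2$, where $T_p$ is the $p$-th Chebyshev polynomial. -/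
/-!
Write `t` for the variable of `ℂ(t)`, and suppose that the Galois group of `f(Y) - t` has order at
most `2p`. This polynomial is irreducible of degree `p`, so its splitting field has degree at most
two over `ℂ(t)(x) = ℂ(x)` for any root `x`. A second root `y` therefore has a minimal polynomial
over `ℂ[x]` of degree one or two, and this polynomial is a factor of `f(Y) - f(X)` other than
`Y - X` (`exists_factor_of_monodromy`). Of the dihedral group only its order is used.

A linear factor is an affine symmetry of `f`, and a polynomial of prime degree with such a symmetry
is equivalent to `X ^ p` (`power_of_linear_symmetry`). A quadratic factor defines a conic
`(Y - ζ X + e) (Y - ζ' X + e') + k = 0` with `ζ ≠ ζ'` two `p`-th roots of unity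
(`quadratic_factor_form`). If `k = 0` the conic contains a line, which is again an affine symmetry.
If `k ≠ 0` the conic is parametrised by Laurent polynomials `α / u + β u + γ`, and comparing Laurent
coefficients in `f(x(u)) = f(y(u))` shows that it is centred on the diagonal with `ζ ζ' = 1`. Up to
an affine change of variables it is then the conic on which `T_p` takes equal values at `X` and
`Y`, and `f` is equivalent to `T_p` (`chebyshev_of_conic_symmetry`). This last argument needs `p`
odd; for `p = 2` every polynomial of degree `p` is equivalent to `X ^ 2`.
-/

open Polynomial

/-- The monodromy group of a complex polynomial `f`: the Galois group of `f(Y) - t`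
over the field `ℂ(t)` of rational functions. -/
noncomputable def monodromyGroup (f : Polynomial ℂ) : Type :=
  (f.map (algebraMap ℂ (RatFunc ℂ)) - C RatFunc.X).Gal

noncomputable instance (f : Polynomial ℂ) : Group (monodromyGroup f) :=
  inferInstanceAs (Group (f.map (algebraMap ℂ (RatFunc ℂ)) - C RatFunc.X).Gal)

/-! ### Affine symmetries and the power polynomial -/

/-- A polynomial of prime degree `p` invariant under a nontrivial affine map is equivalent to
`X ^ p`: the map cannot be a translation, so it has a fixed point; centred there, only the
coefficients in degrees divisible by the order of `ζ`, which is `p`, survive. -/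
lemma power_of_linear_symmetry {p : ℕ} (hp : p.Prime) (f : ℂ[X]) (hdeg : f.natDegree = p)
    {ζ e : ℂ} (hne : ¬ (ζ = 1 ∧ e = 0)) (hinv : ∀ x, f.eval (ζ * x + e) = f.eval x) :
    ∃ a b c d : ℂ, a ≠ 0 ∧ c ≠ 0 ∧
      f = (C a * X + C b).comp ((X ^ p).comp (C c * X + C d)) := by
  -- A polynomial invariant under a nonzero translation takes one value infinitely often.
  have hζ1 : ζ ≠ 1 := by
    intro h1
    subst h1
    have he : e ≠ 0 := fun h => hne ⟨rfl, h⟩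
    have hn : ∀ n : ℕ, f.eval (n * e) = f.eval 0 := by
      intro n
      induction n with
      | zero => simp
      | succ n ih => rw [← ih, ← hinv (n * e)]; congr 1; push_cast; ring
    have hc : f = C (f.eval 0) := by
      apply Polynomial.eq_of_infinite_eval_eq
      apply Set.infinite_of_injective_forall_mem (f := fun n : ℕ => (n : ℂ) * e)
      · intro m n h
        exact_mod_cast mul_right_cancel₀ he h
      · intro n
        simp [hn]
    have := hp.pos
    rw [hc, natDegree_C] at hdeg
    omega
  have h1ζ : 1 - ζ ≠ 0 := sub_ne_zero.mpr (Ne.symm hζ1)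
  set x₀ : ℂ := e / (1 - ζ) with hx₀
  have hfix : ζ * x₀ + e = x₀ := by rw [hx₀]; field_simp; ring
  set g : ℂ[X] := f.comp (X + C x₀) with hg
  have hgdeg : g.natDegree = p := by simp [hg, natDegree_comp, hdeg]
  have hginv : g.comp (C ζ * X) = g := by
    apply Polynomial.funext
    intro x
    simp only [hg, eval_comp, eval_add, eval_mul, eval_C, eval_X]
    rw [← hinv (x + x₀)]
    congr 1
    linear_combination -hfix
  have hcoef : ∀ n, g.coeff n * ζ ^ n = g.coeff n := by
    intro n
    rw [← comp_C_mul_X_coeff, hginv]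
  have hlead : g.coeff p ≠ 0 := by
    rw [← hgdeg]
    apply leadingCoeff_ne_zero.mpr
    rintro h0
    rw [h0, natDegree_zero] at hgdeg
    exact hp.pos.ne hgdeg
  have hζp : ζ ^ p = 1 := by
    have := hcoef p
    exact mul_left_cancel₀ hlead (by simpa using this)
  have hord : orderOf ζ = p := by
    have := Fact.mk hp
    exact orderOf_eq_prime hζp hζ1
  have hzero : ∀ n, n ≠ 0 → n ≠ p → g.coeff n = 0 := by
    intro n hn0 hnp
    by_contra hc
    have h1 : ζ ^ n = 1 := mul_left_cancel₀ hc (by simpa using hcoef n)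
    have h2 : p ∣ n := hord ▸ orderOf_dvd_of_pow_eq_one h1
    have h3 : n ≤ p := hgdeg ▸ le_natDegree_of_ne_zero hc
    exact hnp (le_antisymm h3 (Nat.le_of_dvd (Nat.pos_of_ne_zero hn0) h2))
  have hgform : g = C (g.coeff p) * X ^ p + C (g.coeff 0) := by
    ext n
    by_cases hn0 : n = 0
    · subst hn0
      simp [coeff_X_pow, hp.pos.ne]
    · by_cases hnp : n = p
      · subst hnp
        simp [coeff_C, hn0]
      · rw [hzero n hn0 hnp]
        simp [coeff_X_pow, coeff_C, hn0, hnp]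
  refine ⟨g.coeff p, g.coeff 0, 1, -x₀, hlead, one_ne_zero, ?_⟩
  have hfg : f = g.comp (X + C (-x₀)) := by
    apply Polynomial.funext; intro x; simp [hg]
  apply Polynomial.funext; intro x
  have hx := congrArg (eval (x + -x₀)) hgform
  rw [hfg]
  simpa using hx

/-! ### Laurent coefficients and the Chebyshev polynomial -/

/-- The polynomial `u ^ d * h (α / u + γ + β * u)` in `u`, for `d` at least the degree of `h`. -/
noncomputable def clearedLaurent (h : ℂ[X]) (d : ℕ) (α β γ : ℂ) : ℂ[X] :=
  ∑ k ∈ Finset.range (d + 1),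
    C (h.coeff k) * (X ^ (d - k) * (C β * X ^ 2 + C γ * X + C α) ^ k)

lemma eval_clearedLaurent (h : ℂ[X]) {d : ℕ} (hd : h.natDegree ≤ d) (α β γ : ℂ) {u : ℂ}
    (hu : u ≠ 0) :
    (clearedLaurent h d α β γ).eval u = u ^ d * h.eval (α * u⁻¹ + β * u + γ) := by
  rw [clearedLaurent, eval_finsetSum, eval_eq_sum_range' (Nat.lt_succ_of_le hd),
    Finset.mul_sum]
  refine Finset.sum_congr rfl fun k hk => ?_
  have hk' : k ≤ d := Nat.lt_succ_iff.mp (Finset.mem_range.mp hk)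
  simp only [eval_mul, eval_C, eval_pow, eval_X, eval_add]
  have h1 : β * u ^ 2 + γ * u + α = u * (α * u⁻¹ + β * u + γ) := by field_simp; ring
  rw [h1, mul_pow, ← Nat.sub_add_cancel hk', pow_add]
  simp only [Nat.add_sub_cancel]
  ring

/-- An identity between the values of `h` along two Laurent parametrisations can be read off
coefficient by coefficient. -/
lemma clearedLaurent_eq (h : ℂ[X]) {d : ℕ} (hd : h.natDegree ≤ d) {α β γ α' β' γ' : ℂ}
    (H : ∀ u : ℂ, u ≠ 0 → h.eval (α * u⁻¹ + β * u + γ) = h.eval (α' * u⁻¹ + β' * u + γ')) :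
    clearedLaurent h d α β γ = clearedLaurent h d α' β' γ' := by
  apply Polynomial.eq_of_infinite_eval_eq
  refine Set.Infinite.mono (s := {0}ᶜ) ?_ (Set.finite_singleton 0).infinite_compl
  intro u hu
  have hu : u ≠ 0 := hu
  simp only [Set.mem_ofPred_eq, eval_clearedLaurent h hd _ _ _ hu, H u hu]

lemma clearedLaurent_coeff_zero (h : ℂ[X]) (d : ℕ) (α β γ : ℂ) :
    (clearedLaurent h d α β γ).coeff 0 = h.coeff d * α ^ d := by
  rw [clearedLaurent, Finset.sum_range_succ, coeff_add, finsetSum_coeff, Finset.sum_eq_zero]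
  · simp [coeff_zero_eq_eval_zero]
  · intro k hk
    have hk' : d - k ≠ 0 := by have := Finset.mem_range.mp hk; omega
    simp [coeff_zero_eq_eval_zero, hk']

lemma clearedLaurent_coeff_one (h : ℂ[X]) (d : ℕ) (α β γ : ℂ) :
    (clearedLaurent h (d + 2) α β γ).coeff 1
      = (h.coeff (d + 2) * (d + 2) * γ + h.coeff (d + 1)) * α ^ (d + 1) := by
  have hq : ∀ q : ℂ[X], q.coeff 1 = (derivative q).eval 0 := by
    intro q; rw [← coeff_zero_eq_eval_zero, coeff_derivative]; simp
  rw [clearedLaurent, Finset.sum_range_succ, Finset.sum_range_succ, coeff_add, coeff_add,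
    finsetSum_coeff, Finset.sum_eq_zero]
  · have h1 : d + 2 - (d + 1) = 1 := by omega
    simp only [h1, hq, Nat.sub_self]
    simp [derivative_pow]
    ring
  · intro k hk
    have hk' : ¬ (d + 2 - k ≤ 1) := by have := Finset.mem_range.mp hk; omega
    rw [coeff_C_mul, coeff_X_pow_mul', if_neg hk', mul_zero]

/-- The third Laurent coefficient, for a polynomial and a parametrisation without the
subleading term. -/
lemma clearedLaurent_coeff_two (h : ℂ[X]) (d : ℕ) (α β : ℂ) (h0 : h.coeff (d + 1) = 0) :
    (clearedLaurent h (d + 2) α β 0).coeff 2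
      = (h.coeff (d + 2) * (d + 2) * α * β + h.coeff d) * α ^ d := by
  have hq : ∀ q : ℂ[X], q.coeff 1 = (derivative q).eval 0 := by
    intro q; rw [← coeff_zero_eq_eval_zero, coeff_derivative]; simp
  rw [clearedLaurent, Finset.sum_range_succ, Finset.sum_range_succ, Finset.sum_range_succ,
    coeff_add, coeff_add, coeff_add, finsetSum_coeff, Finset.sum_eq_zero]
  · have h1 : d + 2 - d = 2 := by omega
    have hexp : (C β * X ^ 2 + C 0 * X + C α : ℂ[X]) = expand ℂ 2 (C β * X + C α) := by simp
    have hc : ∀ k, ((C β * X ^ 2 + C 0 * X + C α : ℂ[X]) ^ k).coeff 2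
        = ((C β * X + C α : ℂ[X]) ^ k).coeff 1 := by
      intro k
      rw [hexp, ← map_pow]
      exact coeff_expand_mul (p := 2) (by norm_num) _ 1
    rw [h0, h1, coeff_C_mul, coeff_C_mul, coeff_C_mul, coeff_X_pow_mul', if_pos le_rfl,
      Nat.sub_self, Nat.sub_self, pow_zero, one_mul, hc, hq, coeff_zero_eq_eval_zero]
    simp [derivative_pow]
    ring
  · intro k hk
    have hk' : ¬ (d + 2 - k ≤ 2) := by have := Finset.mem_range.mp hk; omega
    rw [coeff_C_mul, coeff_X_pow_mul', if_neg hk', mul_zero]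

/-- `T_n ((w + w⁻¹) / 2) = (w ^ n + w⁻¹ ^ n) / 2`. -/
lemma eval_T_joukowski (n : ℕ) {w : ℂ} (hw : w ≠ 0) :
    (Chebyshev.T ℂ n).eval (1 / 2 * w⁻¹ + 1 / 2 * w) = 1 / 2 * (w ^ n)⁻¹ + 1 / 2 * w ^ n := by
  obtain ⟨z, rfl⟩ : ∃ z, Complex.exp z = w := ⟨Complex.log w, Complex.exp_log hw⟩
  have h := Chebyshev.T_complex_cosh z (n : ℤ)
  rw [← Complex.exp_neg, ← Complex.exp_nat_mul, ← Complex.exp_neg]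
  rw [Complex.cosh, Complex.cosh] at h
  push_cast at h
  convert h using 1
  · congr 1; ring
  · ring

/-- If `f` takes equal values at the two coordinates of every point of a parametrised conic whose
asymptotic slopes `ζ ≠ ζ'` are `p`-th roots of unity, then `f` is equivalent to `T_p`. The second
Laurent coefficients at `u = 0` and `u = ∞` force the conic to be centred on the diagonal, the
third ones force `ζ * ζ' = 1`. After normalisation the conic is
`(w + w⁻¹, ζ * w + (ζ * w)⁻¹)`, on which `T_p` has the same symmetry, so a suitable multiple of
`T_p` can be subtracted to leave a symmetric polynomial of degree less than `p`, which is
constant. -/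
lemma chebyshev_of_conic_symmetry {p : ℕ} (hp : p.Prime) (hp2 : p ≠ 2) (f : ℂ[X])
    (hdeg : f.natDegree = p) {ζ ζ' α β γ γ' : ℂ} (hζ : ζ ^ p = 1) (hζ' : ζ' ^ p = 1)
    (hne : ζ ≠ ζ') (hα : α ≠ 0) (hβ : β ≠ 0)
    (H : ∀ u : ℂ, u ≠ 0 →
      f.eval (α * u⁻¹ + β * u + γ) = f.eval (ζ' * α * u⁻¹ + ζ * β * u + γ')) :
    ∃ a b c d : ℂ, a ≠ 0 ∧ c ≠ 0 ∧
      f = (C a * X + C b).comp ((Chebyshev.T ℂ p).comp (C c * X + C d)) := by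
  obtain ⟨n, rfl⟩ : ∃ n, p = n + 2 := ⟨p - 2, by have := hp.two_le; omega⟩
  have hodd : Odd (n + 2) := hp.odd_of_ne_two hp2
  have hpos : ((n : ℂ) + 2) ≠ 0 := by exact_mod_cast hp.ne_zero
  have hζ'0 : ζ' ≠ 0 := by rintro rfl; simp at hζ'
  have hζ0 : ζ ≠ 0 := by rintro rfl; simp at hζ
  -- Reversing `u ↦ u⁻¹` exchanges the roles of the two ends of the Laurent polynomial.
  have Hrev : ∀ {q : ℂ[X]} {α β γ α' β' γ' : ℂ}, (∀ u : ℂ, u ≠ 0 →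
      q.eval (α * u⁻¹ + β * u + γ) = q.eval (α' * u⁻¹ + β' * u + γ')) →
      ∀ u : ℂ, u ≠ 0 →
      q.eval (β * u⁻¹ + α * u + γ) = q.eval (β' * u⁻¹ + α' * u + γ') := by
    intro q α β γ α' β' γ' h u hu
    have := h u⁻¹ (inv_ne_zero hu)
    rw [inv_inv] at this
    rw [add_comm (β * u⁻¹), add_comm (β' * u⁻¹)]
    exact this
  have hlead : f.coeff (n + 2) ≠ 0 := by
    rw [← hdeg]
    apply leadingCoeff_ne_zero.mpr
    rintro rfl
    simp at hdeg
  -- The shift `γ` is the barycentre of the roots of `f`, and so is the shift on the other side.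
  have hcent : f.coeff (n + 2) * (n + 2) * γ + f.coeff (n + 1) = 0 ∧
      f.coeff (n + 2) * (n + 2) * γ' + f.coeff (n + 1) = 0 := by
    have e1 := congrArg (fun q => q.coeff 1) (clearedLaurent_eq f hdeg.le H)
    have e2 := congrArg (fun q => q.coeff 1) (clearedLaurent_eq f hdeg.le (Hrev H))
    simp only [clearedLaurent_coeff_one] at e1 e2
    have e1 : ζ' * (f.coeff (n + 2) * (n + 2) * γ + f.coeff (n + 1)) =
      f.coeff (n + 2) * (n + 2) * γ' + f.coeff (n + 1) := by
      refine mul_right_cancel₀ (pow_ne_zero (n + 1) hα) ?_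
      linear_combination ζ' * e1 +
        (f.coeff (n + 2) * (n + 2) * γ' + f.coeff (n + 1)) * α ^ (n + 1) * hζ'
    have e2 : ζ * (f.coeff (n + 2) * (n + 2) * γ + f.coeff (n + 1)) =
      f.coeff (n + 2) * (n + 2) * γ' + f.coeff (n + 1) := by
      refine mul_right_cancel₀ (pow_ne_zero (n + 1) hβ) ?_
      linear_combination ζ * e2 +
        (f.coeff (n + 2) * (n + 2) * γ' + f.coeff (n + 1)) * β ^ (n + 1) * hζ
    have h0 : f.coeff (n + 2) * (n + 2) * γ + f.coeff (n + 1) = 0 := by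
      have : (ζ - ζ') * (f.coeff (n + 2) * (n + 2) * γ + f.coeff (n + 1)) = 0 := by
        linear_combination e2 - e1
      exact (mul_eq_zero.mp this).resolve_left (sub_ne_zero.mpr hne)
    refine ⟨h0, ?_⟩
    rw [← e1, h0, mul_zero]
  obtain rfl : γ = γ' := by
    have : f.coeff (n + 2) * (n + 2) * γ = f.coeff (n + 2) * (n + 2) * γ' := by
      linear_combination hcent.1 - hcent.2
    exact mul_left_cancel₀ (mul_ne_zero hlead hpos) this
  set g : ℂ[X] := f.comp (X + C γ) with hg
  have hgdeg : g.natDegree = n + 2 := by simp [hg, natDegree_comp, hdeg]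
  have hglead : g.coeff (n + 2) ≠ 0 := by
    rw [← hgdeg]
    apply leadingCoeff_ne_zero.mpr
    intro h0
    rw [h0] at hgdeg
    simp at hgdeg
  have HG : ∀ u : ℂ, u ≠ 0 →
      g.eval (α * u⁻¹ + β * u + 0) = g.eval (ζ' * α * u⁻¹ + ζ * β * u + 0) := by
    intro u hu
    simpa [hg, eval_comp] using H u hu
  have hg1 : g.coeff (n + 1) = 0 := by
    have e1 := congrArg (fun q => q.coeff 1) (clearedLaurent_eq g hgdeg.le HG)
    have e2 := congrArg (fun q => q.coeff 1) (clearedLaurent_eq g hgdeg.le (Hrev HG))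
    simp only [clearedLaurent_coeff_one, mul_zero, zero_add] at e1 e2
    by_contra hc
    rw [mul_pow] at e1 e2
    have e1 := mul_left_cancel₀ hc e1
    have e2 := mul_left_cancel₀ hc e2
    have e1 : ζ' = 1 := by
      have : α ^ (n + 1) * ζ' = α ^ (n + 1) * 1 := by
        linear_combination ζ' * e1 + α ^ (n + 1) * hζ'
      exact mul_left_cancel₀ (pow_ne_zero _ hα) this
    have e2 : ζ = 1 := by
      have : β ^ (n + 1) * ζ = β ^ (n + 1) * 1 := by
        linear_combination ζ * e2 + β ^ (n + 1) * hζ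
      exact mul_left_cancel₀ (pow_ne_zero _ hβ) this
    exact hne (e2.trans e1.symm)
  -- The third coefficients at both ends, with the common factors cleared by `ζ ^ p = 1`.
  have hprod : ζ * ζ' = 1 := by
    have e1 := congrArg (fun q => q.coeff 2) (clearedLaurent_eq g hgdeg.le HG)
    have e2 := congrArg (fun q => q.coeff 2) (clearedLaurent_eq g hgdeg.le (Hrev HG))
    simp only [clearedLaurent_coeff_two _ _ _ _ hg1] at e1 e2
    set P := g.coeff (n + 2) * (n + 2) * α * β with hP
    have hP0 : P ≠ 0 := by simp [hP, hglead, hpos, hα, hβ]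
    set A := g.coeff n with hA
    have e1 : ζ' ^ 2 * (P + A) = ζ' * ζ * P + A := by
      refine mul_right_cancel₀ (pow_ne_zero n hα) ?_
      linear_combination ζ' ^ 2 * e1 + (ζ' * ζ * P + A) * α ^ n * hζ'
    have e2 : ζ ^ 2 * (P + A) = ζ' * ζ * P + A := by
      refine mul_right_cancel₀ (pow_ne_zero n hβ) ?_
      linear_combination ζ ^ 2 * e2 + (ζ' * ζ * P + A) * β ^ n * hζ
    -- Odd-order roots of unity are never opposite.
    have hsum : ζ + ζ' ≠ 0 := by
      intro h
      have : ζ = -ζ' := by linear_combination h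
      rw [this, hodd.neg_pow, hζ'] at hζ
      norm_num at hζ
    have hPA : P + A = 0 := by
      have : ((ζ - ζ') * (ζ + ζ')) * (P + A) = 0 := by linear_combination e2 - e1
      exact (mul_eq_zero.mp this).resolve_left (mul_ne_zero (sub_ne_zero.mpr hne) hsum)
    have : P * (ζ * ζ') = P * 1 := by linear_combination (ζ ^ 2 - 1) * hPA - e2
    exact mul_left_cancel₀ hP0 this
  have hζ'inv : ζ' = ζ⁻¹ := eq_inv_of_mul_eq_one_right hprod
  have hζ1 : ζ' ≠ 1 := by
    intro h
    rw [h, mul_one] at hprod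
    exact hne (hprod.trans h.symm)
  -- Rescaling the parameter makes both ends of the Laurent polynomial equal to `κ`.
  obtain ⟨κ, hκ⟩ := IsAlgClosed.exists_pow_nat_eq (α * β) (n := 2) (by norm_num)
  have hκ0 : κ ≠ 0 := by
    rintro rfl
    rw [zero_pow two_ne_zero] at hκ
    exact mul_ne_zero hα hβ hκ.symm
  have HK : ∀ w : ℂ, w ≠ 0 →
      g.eval (κ * w⁻¹ + κ * w) = g.eval (ζ' * κ * w⁻¹ + ζ * κ * w) := by
    intro w hw
    have h := HG (w * κ / β) (by simp [hw, hκ0, hβ])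
    have h1 : α * (w * κ / β)⁻¹ = κ * w⁻¹ := by
      field_simp
      linear_combination -hκ
    have h2 : β * (w * κ / β) = κ * w := by field_simp
    rw [mul_assoc, mul_assoc, h1, h2] at h
    simpa [mul_assoc] using h
  set Tp := Chebyshev.T ℂ ((n + 2 : ℕ) : ℤ) with hTp
  have hTdeg : Tp.natDegree = n + 2 := by rw [hTp, Chebyshev.natDegree_T]; rfl
  have hTlead : Tp.coeff (n + 2) ≠ 0 := by
    rw [← hTdeg]
    apply leadingCoeff_ne_zero.mpr
    intro h0
    rw [h0] at hTdeg
    simp at hTdeg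
  set G : ℂ[X] := g.comp (C (2 * κ) * X) with hG
  have hGlead : G.coeff (n + 2) ≠ 0 := by
    rw [hG, comp_C_mul_X_coeff]
    exact mul_ne_zero hglead (pow_ne_zero _ (mul_ne_zero two_ne_zero hκ0))
  set c := G.coeff (n + 2) / Tp.coeff (n + 2) with hc
  have hc0 : c ≠ 0 := div_ne_zero hGlead hTlead
  set h : ℂ[X] := G - C c * Tp with hh
  have hhdeg : h.natDegree < n + 2 := by
    have h1 : h.natDegree ≤ n + 2 := by
      refine (natDegree_sub_le _ _).trans (max_le ?_ ?_)
      · rw [hG, natDegree_comp, hgdeg]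
        exact (Nat.mul_le_mul_left _ ((natDegree_C_mul_le _ _).trans natDegree_X_le)).trans
          (by simp)
      · exact (natDegree_C_mul_le _ _).trans hTdeg.le
    have h2 : h.coeff (n + 2) = 0 := by
      rw [hh, coeff_sub, coeff_C_mul, hc, div_mul_cancel₀ _ hTlead, sub_self]
    refine lt_of_le_of_ne h1 fun heq => ?_
    rw [← heq] at h2
    have : h = 0 := leadingCoeff_eq_zero.mp h2
    rw [this] at heq
    simp at heq
  -- The difference `h` inherits the rotation symmetry of order `n + 2`.
  have Hh : ∀ w : ℂ, w ≠ 0 → h.eval (1 / 2 * w⁻¹ + 1 / 2 * w + 0) =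
      h.eval (ζ' * (1 / 2) * w⁻¹ + ζ * (1 / 2) * w + 0) := by
    intro w hw
    have t1 := eval_T_joukowski (n + 2) hw
    have t2 := eval_T_joukowski (n + 2) (mul_ne_zero hζ0 hw)
    rw [mul_pow, hζ, one_mul, ← t1] at t2
    have t3 : 1 / 2 * (ζ * w)⁻¹ + 1 / 2 * (ζ * w)
        = ζ' * (1 / 2) * w⁻¹ + ζ * (1 / 2) * w := by
      rw [hζ'inv, mul_inv]; ring
    rw [t3] at t2
    have t4 := HK w hw
    simp only [hh, hG, add_zero, eval_sub, eval_mul, eval_C, eval_comp, eval_X]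
    rw [hTp, t2]
    congr 1
    convert t4 using 1
    · congr 1; ring
    · congr 1; ring
  have hconst : h.natDegree = 0 := by
    by_contra hd0
    have e := congrArg (fun q => q.coeff 0) (clearedLaurent_eq h le_rfl Hh)
    simp only [clearedLaurent_coeff_zero] at e
    have hl : h.coeff h.natDegree ≠ 0 := by
      apply leadingCoeff_ne_zero.mpr
      intro h0
      rw [h0] at hd0
      simp at hd0
    have e := mul_left_cancel₀ hl e
    rw [mul_pow] at e
    have e : ζ' ^ h.natDegree = 1 := by
      have h12 : ((1 : ℂ) / 2) ^ h.natDegree ≠ 0 := pow_ne_zero _ (by norm_num)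
      exact mul_right_cancel₀ h12 (by rw [← e, one_mul])
    have : Fact (n + 2).Prime := ⟨hp⟩
    have hord : orderOf ζ' = n + 2 := orderOf_eq_prime hζ' hζ1
    have := Nat.le_of_dvd (Nat.pos_of_ne_zero hd0) (hord ▸ orderOf_dvd_of_pow_eq_one e)
    omega
  refine ⟨c, h.coeff 0, (2 * κ)⁻¹, -(2 * κ)⁻¹ * γ, hc0, by simp [hκ0], ?_⟩
  apply Polynomial.funext
  intro x
  have h1 := congrArg (eval ((2 * κ)⁻¹ * x + -(2 * κ)⁻¹ * γ)) (eq_C_of_natDegree_eq_zero hconst)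
  have h2 : 2 * κ * ((2 * κ)⁻¹ * x + -(2 * κ)⁻¹ * γ) + γ = x := by field_simp; ring
  have h3 : eval ((2 * κ)⁻¹ * x + -(2 * κ)⁻¹ * γ) h
      = f.eval x - c * Tp.eval ((2 * κ)⁻¹ * x + -(2 * κ)⁻¹ * γ) := by
    simp only [hh, hG, hg, eval_sub, eval_mul, eval_C, eval_comp, eval_X, eval_add]
    rw [h2]
  rw [h3, eval_C] at h1
  simp only [eval_comp, eval_add, eval_mul, eval_C, eval_X]
  linear_combination h1

/-! ### Factors of `f(Y) - f(X)` of degree at most two -/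

/-- The substitution `X ↦ T`, `Y ↦ Z * T` from `ℂ[X][Y]` to `ℂ[Z][T]`. The degree in `T` of the
image is the total degree, and the leading coefficient is the top form dehomogenised at `X = 1`. -/
noncomputable def totalDegreeHom : ℂ[X][X] →+* ℂ[X][X] :=
  eval₂RingHom (mapRingHom C) (C X * X)

lemma totalDegreeHom_coeff (P : ℂ[X][X]) (k i : ℕ) :
    ((totalDegreeHom P).coeff k).coeff i = if i ≤ k then (P.coeff i).coeff (k - i) else 0 := by
  induction P using Polynomial.induction_on' with
  | add p q hp hq =>
    rw [map_add, coeff_add, coeff_add, hp, hq]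
    split_ifs <;> simp
  | monomial n a =>
    have h1 : totalDegreeHom (monomial n a) = (a.map C * C (X ^ n)) * X ^ n := by
      simp [totalDegreeHom, mul_pow, mul_assoc]
    rw [h1, coeff_mul_X_pow', coeff_monomial]
    by_cases hi : n = i
    · subst hi
      rw [if_pos rfl]
      split_ifs with hk
      · rw [coeff_mul_C, coeff_map]
        simp
      · exact coeff_zero n
    · have : (if i ≤ k then (if n = i then a else 0).coeff (k - i) else 0) = 0 := by
        simp [hi]
      rw [this]
      split_ifs with hk
      · rw [coeff_mul_C, coeff_map, coeff_C_mul, coeff_X_pow, if_neg (Ne.symm hi), mul_zero]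
      · simp

/-- The homogeneous part of degree `k` of `f(Y) - f(X)` is `f_k * (Y ^ k - X ^ k)`. -/
lemma totalDegreeHom_difference_coeff (f : ℂ[X]) {k : ℕ} (hk : k ≠ 0) :
    (totalDegreeHom (f.map C - C f)).coeff k = C (f.coeff k) * (X ^ k - 1) := by
  ext i
  rw [totalDegreeHom_coeff]
  simp only [coeff_sub, coeff_map, coeff_C_mul, coeff_X_pow, coeff_one]
  split_ifs <;> simp_all [coeff_C]
  omega

/-- A monic factor of degree two in `Y` of `f(Y) - f(X)` has total degree two, because the total
degree of the product is `p`. Its top form divides `Y ^ p - X ^ p`, hence is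
`(Y - ζ * X) * (Y - ζ' * X)` for distinct `p`-th roots of unity, and the linear terms can be
absorbed into the two factors. -/
lemma quadratic_factor_form {p : ℕ} (hp : p.Prime) {f : ℂ[X]} (hdeg : f.natDegree = p)
    {M : ℂ[X][X]} (hM : M.Monic) (hM2 : M.natDegree = 2) (hdvd : M ∣ f.map C - C f) :
    ∃ ζ ζ' e e' k : ℂ, ζ ^ p = 1 ∧ ζ' ^ p = 1 ∧ ζ ≠ ζ' ∧
      ∀ x y : ℂ, (y - ζ * x + e) * (y - ζ' * x + e') + k = 0 → f.eval y = f.eval x := by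
  obtain ⟨H, hH⟩ := hdvd
  have hp0 : p ≠ 0 := hp.ne_zero
  have hlead : f.coeff p ≠ 0 := by
    rw [← hdeg]
    apply leadingCoeff_ne_zero.mpr
    rintro rfl
    simp at hdeg
    exact hp0 hdeg.symm
  have hfmap : (f.map (C : ℂ →+* ℂ[X])).natDegree = p := by
    rw [natDegree_map_eq_of_injective C_injective, hdeg]
  have hDdeg : (f.map C - C f).natDegree = p := by rw [natDegree_sub_C, hfmap]
  have hD0 : f.map C - C f ≠ 0 := by
    intro h0
    rw [h0, natDegree_zero] at hDdeg
    exact hp0 hDdeg.symm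
  have hM0 : M ≠ 0 := hM.ne_zero
  have hH0 : H ≠ 0 := by rintro rfl; simp [hD0] at hH
  have hHdeg : 2 + H.natDegree = p := by
    rw [← hDdeg, hH, natDegree_mul hM0 hH0, hM2]
  have hHlead : H.coeff H.natDegree = C (f.coeff p) := by
    have h1 := congrArg leadingCoeff hH
    rw [leadingCoeff_mul, hM.leadingCoeff, one_mul] at h1
    rw [coeff_natDegree, ← h1, leadingCoeff, hDdeg, coeff_sub, coeff_map, coeff_C, if_neg hp0,
      sub_zero]
  set ΦM := totalDegreeHom M with hΦM
  set ΦH := totalDegreeHom H with hΦH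
  have hprod : totalDegreeHom (f.map C - C f) = ΦM * ΦH := by rw [hH, map_mul]
  have hΦD : (totalDegreeHom (f.map C - C f)).natDegree ≤ p := by
    rw [natDegree_le_iff_coeff_eq_zero]
    intro N hN
    rw [totalDegreeHom_difference_coeff f (by omega),
      coeff_eq_zero_of_natDegree_lt (hdeg ▸ hN), C_0, zero_mul]
  have hM22 : M.coeff 2 = 1 := by rw [← hM2]; exact hM.coeff_natDegree
  have hΦM2 : (ΦM.coeff 2).coeff 2 = 1 := by
    rw [totalDegreeHom_coeff, if_pos le_rfl, hM22]; simp
  have hΦMge : 2 ≤ ΦM.natDegree := by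
    apply le_natDegree_of_ne_zero
    intro h0
    rw [h0] at hΦM2
    simp at hΦM2
  have hΦHge : H.natDegree ≤ ΦH.natDegree := by
    apply le_natDegree_of_ne_zero
    intro h0
    have h1 : (ΦH.coeff H.natDegree).coeff H.natDegree = f.coeff p := by
      rw [totalDegreeHom_coeff, if_pos le_rfl, hHlead]; simp
    rw [h0] at h1
    exact hlead (by simpa using h1.symm)
  have hΦM0 : ΦM ≠ 0 := by intro h0; rw [h0] at hΦMge; simp at hΦMge
  have hΦH0 : ΦH ≠ 0 := by
    intro h0
    have h1 : (ΦH.coeff H.natDegree).coeff H.natDegree = f.coeff p := by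
      rw [totalDegreeHom_coeff, if_pos le_rfl, hHlead]; simp
    rw [h0] at h1
    exact hlead (by simpa using h1.symm)
  rw [hprod, natDegree_mul hΦM0 hΦH0] at hΦD
  have hΦMdeg : ΦM.natDegree = 2 := by omega
  have hΦHdeg : ΦH.natDegree = H.natDegree := by omega
  -- The vanishing of the `T`-coefficients above degree two bounds the degrees in `X`.
  have hvan : ∀ i j, 2 < i + j → (M.coeff i).coeff j = 0 := by
    intro i j hij
    have h1 : (ΦM.coeff (i + j)).coeff i = 0 := by
      rw [coeff_eq_zero_of_natDegree_lt (p := ΦM) (by omega), coeff_zero]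
    rw [totalDegreeHom_coeff, if_pos (by omega)] at h1
    simpa using h1
  set a₀ := (M.coeff 1).coeff 0 with ha₀
  set a₁ := (M.coeff 1).coeff 1 with ha₁
  set b₀ := (M.coeff 0).coeff 0 with hb₀
  set b₁ := (M.coeff 0).coeff 1 with hb₁
  set b₂ := (M.coeff 0).coeff 2 with hb₂
  have hM1 : M.coeff 1 = C a₁ * X + C a₀ := by
    apply Polynomial.eq_X_add_C_of_natDegree_le_one
    rw [natDegree_le_iff_coeff_eq_zero]
    intro N hN
    exact hvan 1 N (by omega)
  have hM00 : M.coeff 0 = C b₂ * X ^ 2 + C b₁ * X + C b₀ := by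
    ext j
    rcases j with _ | _ | _ | j
    · simp [hb₀]
    · simp [hb₁]
    · simp [hb₂]
    · rw [hvan 0 _ (by omega)]
      simp
  have hMeval : ∀ x y : ℂ, M.evalEval x y = y ^ 2 + (a₁ * x + a₀) * y
      + (b₂ * x ^ 2 + b₁ * x + b₀) := by
    intro x y
    have h1 : M = X ^ 2 + C (M.coeff 1) * X + C (M.coeff 0) := by
      conv_lhs => rw [M.as_sum_range, hM2]
      simp only [Finset.sum_range_succ, Finset.sum_range_zero, hM22, ← C_mul_X_pow_eq_monomial]
      simp
      ring
    rw [h1, hM1, hM00]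
    simp [evalEval]
  -- The top form `q` of `M` divides that of `f(Y) - f(X)`.
  have hq : ΦM.coeff 2 = X ^ 2 + C a₁ * X + C b₂ := by
    ext i
    rw [totalDegreeHom_coeff]
    rcases i with _ | _ | _ | i
    · simp [hb₂]
    · simp [ha₁, coeff_C]
    · simp [hM22]
    · rw [if_neg (by omega)]
      simp [coeff_X_pow]
  have hqdvd : (X ^ 2 + C a₁ * X + C b₂ : ℂ[X]) * ΦH.coeff H.natDegree
      = C (f.coeff p) * (X ^ p - 1) := by
    rw [← totalDegreeHom_difference_coeff f hp0, hprod, ← hq, ← hHdeg]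
    rw [← hΦMdeg, ← hΦHdeg, coeff_mul_degree_add_degree]
    rfl
  obtain ⟨δ, hδ⟩ := IsAlgClosed.exists_pow_nat_eq (a₁ ^ 2 - 4 * b₂) (n := 2) (by norm_num)
  obtain ⟨ζ, ζ', hs, hm⟩ : ∃ ζ ζ' : ℂ, ζ + ζ' = -a₁ ∧ ζ * ζ' = b₂ :=
    ⟨(-a₁ + δ) / 2, (-a₁ - δ) / 2, by ring, by linear_combination -1 / 4 * hδ⟩
  have hfac : (X ^ 2 + C a₁ * X + C b₂ : ℂ[X]) = (X - C ζ) * (X - C ζ') := by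
    rw [← hm, show a₁ = -(ζ + ζ') by rw [hs]; ring]
    simp only [C_neg, C_add, C_mul]
    ring
  have hζ : ζ ^ p = 1 := by
    have h1 := congrArg (eval ζ) hqdvd
    rw [hfac] at h1
    simp [hlead] at h1
    linear_combination h1
  have hζ' : ζ' ^ p = 1 := by
    have h1 := congrArg (eval ζ') hqdvd
    rw [hfac] at h1
    simp [hlead] at h1
    linear_combination h1
  have hne : ζ ≠ ζ' := by
    rintro rfl
    have h1 := congrArg (fun r => eval ζ (derivative r)) hqdvd
    rw [hfac] at h1
    simp [hlead, derivative_X_pow, hp0] at h1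
    rw [h1.1, zero_pow hp0] at hζ
    exact zero_ne_one hζ
  have hne' : ζ - ζ' ≠ 0 := sub_ne_zero.mpr hne
  obtain ⟨e, e', he, he'⟩ : ∃ e e' : ℂ, e + e' = a₀ ∧ ζ * e' + ζ' * e = -b₁ := by
    refine ⟨a₀ - (-b₁ - ζ' * a₀) / (ζ - ζ'), (-b₁ - ζ' * a₀) / (ζ - ζ'), by ring, ?_⟩
    field_simp
    ring
  refine ⟨ζ, ζ', e, e', b₀ - e * e', hζ, hζ', hne, ?_⟩
  intro x y hxy
  have h1 : M.evalEval x y = 0 := by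
    rw [hMeval, ← hxy, ← hm, ← he, show a₁ = -(ζ + ζ') by rw [hs]; ring,
      show b₁ = -(ζ * e' + ζ' * e) by rw [he']; ring]
    ring
  have h2 := congrArg (evalEval x y) hH
  rw [evalEval_mul, h1, zero_mul, evalEval_sub, evalEval_map_C, evalEval_C] at h2
  exact sub_eq_zero.mp h2

/-- A factor `Y - A(X)` of `f(Y) - f(X)` gives `f ∘ A = f`, so `A` has degree one. -/
lemma linear_factor_form {p : ℕ} (hp : p.Prime) {f : ℂ[X]} (hdeg : f.natDegree = p)
    {M : ℂ[X][X]} (hM : M.Monic) (hM1 : M.natDegree = 1) (hMne : M ≠ X - C X)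
    (hdvd : M ∣ f.map C - C f) :
    ∃ ζ e : ℂ, ¬ (ζ = 1 ∧ e = 0) ∧ ∀ x, f.eval (ζ * x + e) = f.eval x := by
  obtain ⟨H, hH⟩ := hdvd
  obtain ⟨A, rfl⟩ : ∃ A, M = X - C A :=
    ⟨-M.coeff 0, by simpa using hM.eq_X_add_C hM1⟩
  have hcomp : f.comp A = f := by
    have h1 := congrArg (eval A) hH
    simp [eval_map] at h1
    exact sub_eq_zero.mp h1
  have hA : A.natDegree = 1 := by
    have h1 := congrArg natDegree hcomp
    rw [natDegree_comp, hdeg] at h1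
    exact Nat.eq_of_mul_eq_mul_left hp.pos (by simpa using h1)
  have hAform := Polynomial.eq_X_add_C_of_natDegree_le_one hA.le
  refine ⟨A.coeff 1, A.coeff 0, ?_, ?_⟩
  · rintro ⟨h1, h0⟩
    apply hMne
    rw [hAform, h1, h0]
    simp
  · intro x
    conv_rhs => rw [← hcomp, hAform]
    simp

/-- A small factor of `f(Y) - f(X)` other than `Y - X` determines `f` up to affine changes of
variables: a degenerate conic contains a line, hence gives an affine symmetry, and a smooth one
leads to the Chebyshev polynomial. -/
lemma classification_of_factor {p : ℕ} (hp : p.Prime) (hp2 : p ≠ 2) {f : ℂ[X]}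
    (hdeg : f.natDegree = p) {M : ℂ[X][X]} (hM : M.Monic) (hMpos : 0 < M.natDegree)
    (hMle : M.natDegree ≤ 2) (hMne : M ≠ X - C X) (hdvd : M ∣ f.map C - C f) :
    ∃ a b c d : ℂ, a ≠ 0 ∧ c ≠ 0 ∧
      (f = (C a * X + C b).comp ((X ^ p).comp (C c * X + C d)) ∨
       f = (C a * X + C b).comp ((Chebyshev.T ℂ p).comp (C c * X + C d))) := by
  have hlin : ∀ {ζ e : ℂ}, ¬ (ζ = 1 ∧ e = 0) → (∀ x, f.eval (ζ * x + e) = f.eval x) →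
      ∃ a b c d : ℂ, a ≠ 0 ∧ c ≠ 0 ∧
      (f = (C a * X + C b).comp ((X ^ p).comp (C c * X + C d)) ∨
       f = (C a * X + C b).comp ((Chebyshev.T ℂ p).comp (C c * X + C d))) := by
    intro ζ e h1 h2
    obtain ⟨a, b, c, d, ha, hc, h⟩ := power_of_linear_symmetry hp f hdeg h1 h2
    exact ⟨a, b, c, d, ha, hc, Or.inl h⟩
  obtain h1 | h2 : M.natDegree = 1 ∨ M.natDegree = 2 := by omega
  · obtain ⟨ζ, e, h1, h2⟩ := linear_factor_form hp hdeg hM h1 hMne hdvd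
    exact hlin h1 h2
  obtain ⟨ζ, ζ', e, e', k, hζ, hζ', hne, hinv⟩ := quadratic_factor_form hp hdeg hM h2 hdvd
  by_cases hk : k = 0
  · subst hk
    by_cases hζ1 : ζ = 1
    · have hζ1' : ζ' ≠ 1 := fun h => hne (hζ1.trans h.symm)
      refine hlin (ζ := ζ') (e := -e') (fun h => hζ1' h.1) fun x => hinv _ _ ?_
      ring
    · refine hlin (ζ := ζ) (e := -e) (fun h => hζ1 h.1) fun x => hinv _ _ ?_
      ring
  -- Parametrise the conic by `u = y - ζ' * x + e'`, so that `y - ζ * x + e = -k / u`.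
  have hd : ζ' - ζ ≠ 0 := sub_ne_zero.mpr hne.symm
  obtain ⟨a, b, c, d, ha, hc, h⟩ := chebyshev_of_conic_symmetry hp hp2 f hdeg
    (α := -k / (ζ' - ζ)) (β := -1 / (ζ' - ζ)) (γ := (e' - e) / (ζ' - ζ))
    (γ' := (ζ * e' - ζ' * e) / (ζ' - ζ)) hζ hζ' hne
    (div_ne_zero (neg_ne_zero.mpr hk) hd) (div_ne_zero (by norm_num) hd) (by
      intro u hu
      refine (hinv _ _ ?_).symm
      field_simp
      ring)
  exact ⟨a, b, c, d, ha, hc, Or.inr h⟩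

/-! ### From the monodromy group to a factor -/

/-- For nonconstant `f`, the polynomial `f(Y) - g(X)` becomes monic in `Y` after scaling by
a constant. -/
lemma monic_scaled_sub {f : ℂ[X]} (hf : 0 < f.natDegree) (g : ℂ[X]) :
    (C (C f.leadingCoeff⁻¹) * (f.map C - C g) : ℂ[X][X]).Monic := by
  have hlead : f.leadingCoeff ≠ 0 := by
    intro h0
    rw [leadingCoeff_eq_zero.mp h0] at hf
    simp at hf
  have hfmap : (f.map (C : ℂ →+* ℂ[X])).natDegree = f.natDegree :=
    natDegree_map_eq_of_injective C_injective f
  have hl : (f.map C - C g : ℂ[X][X]).leadingCoeff = C f.leadingCoeff := by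
    rw [leadingCoeff, natDegree_sub_C, hfmap, coeff_sub, coeff_map, coeff_C, if_neg hf.ne',
      sub_zero, coeff_natDegree]
  rw [Monic, leadingCoeff_mul, leadingCoeff_C, hl, ← C_mul, inv_mul_cancel₀ hlead, C_1]

/-- If `x` is transcendental, `f(x) = f(y)` and `y ≠ x` is at most quadratic over `ℂ(x)`, then the
minimal polynomial of `y` over the integrally closed ring `ℂ[x]` is a factor of `f(Y) - f(X)` of
degree at most two, different from `Y - X`. -/
lemma exists_small_factor {L : Type*} [Field L] [Algebra ℂ L] {x y : L}
    (hx : Transcendental ℂ x) (hxy : x ≠ y) {f : ℂ[X]} (hf : 0 < f.natDegree)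
    (hfxy : aeval y f = aeval x f) {a b c : ℂ[X]} (ha : a ≠ 0)
    (hrel : aeval x a * y ^ 2 + aeval x b * y + aeval x c = 0) :
    ∃ M : ℂ[X][X], M.Monic ∧ 0 < M.natDegree ∧ M.natDegree ≤ 2 ∧ M ≠ X - C X ∧
      M ∣ f.map C - C f := by
  let _ : Algebra ℂ[X] L := (aeval x : ℂ[X] →ₐ[ℂ] L).toRingHom.toAlgebra
  have halg : ∀ q : ℂ[X], algebraMap ℂ[X] L q = aeval x q := fun q => rfl
  have hinj : Function.Injective (algebraMap ℂ[X] L) :=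
    transcendental_iff_injective.mp hx
  have : FaithfulSMul ℂ[X] L := (faithfulSMul_iff_algebraMap_injective _ _).mpr hinj
  have hmapC : ∀ q : ℂ[X], aeval y (q.map C : ℂ[X][X]) = aeval y q := by
    intro q
    have hcomp : (algebraMap ℂ[X] L).comp C = algebraMap ℂ L := by
      ext r; simp [halg]
    rw [aeval_def, eval₂_map, hcomp, aeval_def]
  have hroot : aeval y (f.map C - C f : ℂ[X][X]) = 0 := by
    rw [map_sub, hmapC, aeval_C, halg, hfxy, sub_self]
  have hint : IsIntegral ℂ[X] y := by
    refine ⟨C (C f.leadingCoeff⁻¹) * (f.map C - C f), ?_, ?_⟩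
    · exact monic_scaled_sub hf f
    · rw [← aeval_def, map_mul, hroot, mul_zero]
  refine ⟨minpoly ℂ[X] y, minpoly.monic hint, minpoly.natDegree_pos hint, ?_, ?_,
    minpoly.isIntegrallyClosed_dvd hint hroot⟩
  · have h1 : minpoly ℂ[X] y ∣ C a * X ^ 2 + C b * X + C c := by
      apply minpoly.isIntegrallyClosed_dvd hint
      simpa [halg] using hrel
    have h2 := natDegree_quadratic (b := b) (c := c) ha
    rw [← h2]
    refine natDegree_le_of_dvd h1 ?_
    intro h0
    rw [h0] at h2
    simp at h2
  · intro h
    have h1 := minpoly.aeval ℂ[X] y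
    rw [h] at h1
    simp [halg] at h1
    exact hxy (sub_eq_zero.mp h1).symm

lemma irreducible_neg {R : Type*} [CommRing R] {a : R} (ha : Irreducible a) :
    Irreducible (-a) := by
  rw [neg_eq_neg_one_mul]
  exact (irreducible_isUnit_mul isUnit_one.neg).mpr ha

/-- `f(Y) - t` is irreducible over `ℂ(t)`, by the Gauss lemma, since it has degree one in `t`. -/
lemma irreducible_generic_fiber {f : ℂ[X]} (hf : 0 < f.natDegree) :
    Irreducible (f.map (algebraMap ℂ (RatFunc ℂ)) - C RatFunc.X) := by
  have hlead : f.leadingCoeff ≠ 0 := by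
    intro h0
    rw [leadingCoeff_eq_zero.mp h0] at hf
    simp at hf
  -- `f(Y) - X` is, up to exchanging the variables and a sign, of degree one.
  have h1 : Irreducible (f.map C - C X : ℂ[X][X]) := by
    have hswap : Bivariate.swap (R := ℂ) (f.map C - C X) = -(X - C f) := by
      rw [map_sub, Bivariate.swap_map_C, Bivariate.swap_X, neg_sub]
    have hirr := irreducible_neg (irreducible_X_sub_C f)
    rw [← hswap] at hirr
    exact (MulEquiv.irreducible_iff (Bivariate.swap (R := ℂ))).mp hirr
  have hu : IsUnit (C (C f.leadingCoeff⁻¹) : ℂ[X][X]) :=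
    isUnit_C.mpr (isUnit_C.mpr (inv_ne_zero hlead).isUnit)
  have h2 : Irreducible (C (C f.leadingCoeff⁻¹) * (f.map C - C X) : ℂ[X][X]) :=
    (irreducible_isUnit_mul hu).mpr h1
  have hmon : (C (C f.leadingCoeff⁻¹) * (f.map C - C X) : ℂ[X][X]).Monic :=
    monic_scaled_sub hf X
  have h3 := (hmon.irreducible_iff_irreducible_map_fraction_map (K := RatFunc ℂ)).mp h2
  rw [← coe_mapRingHom, map_mul, irreducible_isUnit_mul (hu.map _), coe_mapRingHom] at h3
  convert h3 using 1
  rw [Polynomial.map_sub, Polynomial.map_map, map_C, RatFunc.algebraMap_X]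
  rfl

/-- If `f(x) = t`, then `ℂ(t)(x) = ℂ(x)`. -/
lemma mem_adjoin_of_generic_fiber {f : ℂ[X]} {L : Type*} [Field L] [Algebra ℂ L]
    [Algebra (RatFunc ℂ) L] [IsScalarTower ℂ (RatFunc ℂ) L] {x : L}
    (hx : aeval x f = algebraMap (RatFunc ℂ) L RatFunc.X) {z : L}
    (hz : z ∈ IntermediateField.adjoin (RatFunc ℂ) {x}) :
    z ∈ IntermediateField.adjoin ℂ {x} := by
  have hxmem : x ∈ IntermediateField.adjoin ℂ {x} :=
    IntermediateField.mem_adjoin_simple_self ℂ x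
  have haev : ∀ q : ℂ[X], aeval x q ∈ IntermediateField.adjoin ℂ {x} := fun q =>
    (IntermediateField.mem_adjoin_simple_iff ℂ _).mpr ⟨q, 1, by simp⟩
  have hpoly : ∀ q : ℂ[X], algebraMap (RatFunc ℂ) L (algebraMap ℂ[X] (RatFunc ℂ) q) ∈
      IntermediateField.adjoin ℂ {x} := by
    intro q
    have h1 : algebraMap (RatFunc ℂ) L (algebraMap ℂ[X] (RatFunc ℂ) q) = aeval x (q.comp f) := by
      rw [aeval_comp, hx, aeval_algebraMap_apply]
      congr 1
      rw [← RatFunc.algebraMap_X, aeval_algebraMap_apply, aeval_X_left_apply]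
    rw [h1]
    exact haev _
  induction hz using IntermediateField.adjoin_induction with
  | mem w hw => rw [Set.mem_singleton_iff.mp hw]; exact hxmem
  | algebraMap r =>
    rw [← RatFunc.num_div_denom r, map_div₀]
    exact div_mem (hpoly _) (hpoly _)
  | add _ _ _ _ h1 h2 => exact add_mem h1 h2
  | inv _ _ h => exact inv_mem h
  | mul _ _ _ _ h1 h2 => exact mul_mem h1 h2

/-- If the Galois group of `f(Y) - t` has order at most `2 * p`, then the splitting field has degree
at most two over the field `ℂ(x)` generated by one root `x`, so another root `y` is at most
quadratic over `ℂ(x)`. -/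
lemma exists_factor_of_monodromy {p : ℕ} (hp : p.Prime) {f : ℂ[X]} (hdeg : f.natDegree = p)
    (hcard : Nat.card (monodromyGroup f) ≤ 2 * p) :
    ∃ M : ℂ[X][X], M.Monic ∧ 0 < M.natDegree ∧ M.natDegree ≤ 2 ∧ M ≠ X - C X ∧
      M ∣ f.map C - C f := by
  have hpos : 0 < f.natDegree := hdeg ▸ hp.pos
  set P : (RatFunc ℂ)[X] := f.map (algebraMap ℂ (RatFunc ℂ)) - C RatFunc.X with hP
  have hirr : Irreducible P := irreducible_generic_fiber hpos
  have hPdeg : P.natDegree = p := by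
    rw [hP, natDegree_sub_C, natDegree_map, hdeg]
  have hsplit : (P.map (algebraMap (RatFunc ℂ) P.SplittingField)).Splits :=
    SplittingField.splits P
  have hsep : P.Separable := hirr.separable
  have hgal : IsGalois (RatFunc ℂ) P.SplittingField := IsGalois.of_separable_splitting_field hsep
  have hfin : Module.finrank (RatFunc ℂ) P.SplittingField ≤ 2 * p := by
    rw [← IsGalois.card_aut_eq_finrank]
    exact hcard
  have hroots : Fintype.card (P.rootSet P.SplittingField) = p := by
    rw [card_rootSet_eq_natDegree hsep hsplit, hPdeg]
  have h1card : 1 < Fintype.card (P.rootSet P.SplittingField) := hroots ▸ hp.one_lt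
  obtain ⟨⟨x, hx⟩, ⟨y, hy⟩, hxy⟩ := Fintype.one_lt_card_iff.mp h1card
  have hxy : x ≠ y := fun h => hxy (Subtype.ext h)
  have hval : ∀ z ∈ P.rootSet P.SplittingField,
      aeval z f = algebraMap (RatFunc ℂ) P.SplittingField RatFunc.X := by
    intro z hz
    have h1 : aeval z (f.map (algebraMap ℂ (RatFunc ℂ)) - C RatFunc.X) = 0 :=
      aeval_eq_zero_of_mem_rootSet hz
    rw [map_sub, aeval_map_algebraMap, aeval_C] at h1
    exact sub_eq_zero.mp h1
  have hfx := hval x hx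
  have hfy := hval y hy
  have htrans : Transcendental ℂ x := by
    intro halg
    have h1 : IsAlgebraic ℂ (algebraMap (RatFunc ℂ) P.SplittingField RatFunc.X) := by
      rw [isAlgebraic_iff_isIntegral] at halg ⊢
      rw [← hfx, aeval_eq_sum_range]
      exact IsIntegral.sum _ fun i _ => (halg.pow i).smul _
    rw [isAlgebraic_algebraMap_iff (algebraMap (RatFunc ℂ) P.SplittingField).injective] at h1
    exact RatFunc.transcendental_X h1
  set F := IntermediateField.adjoin (RatFunc ℂ) {x} with hF
  have hint : IsIntegral (RatFunc ℂ) x := Algebra.IsIntegral.isIntegral x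
  have hFdeg : Module.finrank (RatFunc ℂ) F = p := by
    rw [hF, IntermediateField.adjoin.finrank hint,
      ← minpoly.eq_of_irreducible hirr (aeval_eq_zero_of_mem_rootSet hx),
      natDegree_mul_C (by simpa using hirr.ne_zero), hPdeg]
  have hLF : Module.finrank F P.SplittingField ≤ 2 := by
    have h1 := Module.finrank_mul_finrank (RatFunc ℂ) F P.SplittingField
    rw [hFdeg] at h1
    have h2 : p * Module.finrank F P.SplittingField ≤ p * 2 := by rw [h1]; omega
    exact Nat.le_of_mul_le_mul_left h2 hp.pos
  have hinty : IsIntegral F y := Algebra.IsIntegral.isIntegral y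
  obtain ⟨r, s, hrs⟩ : ∃ r s : F, y ^ 2 + (r : P.SplittingField) * y + s = 0 := by
    have hle : (minpoly F y).natDegree ≤ 2 := (minpoly.natDegree_le y).trans hLF
    set Q := minpoly F y * X ^ (2 - (minpoly F y).natDegree) with hQ
    have hQm : Q.Monic := (minpoly.monic hinty).mul (monic_X_pow _)
    have hQd : Q.natDegree = 2 := by
      rw [hQ, (minpoly.monic hinty).natDegree_mul (monic_X_pow _), natDegree_X_pow]
      omega
    have hQ0 : aeval y Q = 0 := by rw [hQ, map_mul, minpoly.aeval, zero_mul]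
    have hQ2 : Q.coeff 2 = 1 := by rw [← hQd]; exact hQm.coeff_natDegree
    rw [aeval_eq_sum_range, hQd] at hQ0
    refine ⟨Q.coeff 1, Q.coeff 0, ?_⟩
    simp only [Finset.sum_range_succ, Finset.sum_range_zero, hQ2, Algebra.smul_def] at hQ0
    simp only [map_one, pow_zero, pow_one, mul_one, one_mul, zero_add,
      IntermediateField.algebraMap_apply] at hQ0
    linear_combination hQ0
  obtain ⟨a₁, b₁, h1⟩ := (IntermediateField.mem_adjoin_simple_iff ℂ _).mp
    (mem_adjoin_of_generic_fiber hfx r.2)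
  obtain ⟨a₂, b₂, h2⟩ := (IntermediateField.mem_adjoin_simple_iff ℂ _).mp
    (mem_adjoin_of_generic_fiber hfx s.2)
  -- A vanishing denominator means the quotient is zero, so it may be replaced by one.
  have hnz : ∀ {z : P.SplittingField} {a b : ℂ[X]}, z = aeval x a / aeval x b →
      ∃ a b : ℂ[X], b ≠ 0 ∧ aeval x b ≠ 0 ∧ z * aeval x b = aeval x a := by
    intro z a b h
    by_cases hb : aeval x b = 0
    · refine ⟨0, 1, one_ne_zero, by simp, ?_⟩
      rw [h, hb]; simp
    · refine ⟨a, b, ?_, hb, ?_⟩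
      · rintro rfl; simp at hb
      · rw [h, div_mul_cancel₀ _ hb]
  obtain ⟨a₁, b₁, hb₁, -, h1⟩ := hnz h1
  obtain ⟨a₂, b₂, hb₂, -, h2⟩ := hnz h2
  refine exists_small_factor htrans hxy hpos (hfy.trans hfx.symm)
    (a := b₁ * b₂) (b := a₁ * b₂) (c := a₂ * b₁) (mul_ne_zero hb₁ hb₂) ?_
  simp only [map_mul]
  linear_combination aeval x b₁ * aeval x b₂ * hrs - aeval x b₂ * y * h1 - aeval x b₁ * h2

/-- A complex polynomial of prime degree `p` whose monodromy group embeds into the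
dihedral group of order `2p` is, up to affine changes of variables, either the power
polynomial `X ^ p` or the `p`-th Chebyshev polynomial. -/
theorem prime_degree_dihedral_monodromy (p : ℕ) (hp : p.Prime) (f : Polynomial ℂ)
    (hdeg : f.natDegree = p)
    (hgal : ∃ φ : monodromyGroup f →* DihedralGroup p, Function.Injective φ) :
    ∃ a b c d : ℂ, a ≠ 0 ∧ c ≠ 0 ∧
      (f = (C a * X + C b).comp ((X ^ p).comp (C c * X + C d)) ∨
       f = (C a * X + C b).comp ((Chebyshev.T ℂ p).comp (C c * X + C d))) := by
  by_cases hp2 : p = 2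
  · -- Every quadratic polynomial is symmetric under a point reflection of the line.
    subst hp2
    have ha : f.coeff 2 ≠ 0 := by
      rw [← hdeg]
      apply leadingCoeff_ne_zero.mpr
      rintro rfl
      simp at hdeg
    obtain ⟨a, b, c, d, ha, hc, h⟩ := power_of_linear_symmetry hp f hdeg
      (ζ := -1) (e := -f.coeff 1 / f.coeff 2) (fun h => by norm_num at h) (by
        intro x
        rw [eval_eq_sum_range, eval_eq_sum_range, hdeg]
        simp only [Finset.sum_range_succ, Finset.sum_range_zero]
        field_simp
        ring)
    exact ⟨a, b, c, d, ha, hc, Or.inl h⟩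
  · obtain ⟨φ, hφ⟩ := hgal
    have : NeZero p := ⟨hp.ne_zero⟩
    have hcard : Nat.card (monodromyGroup f) ≤ 2 * p := by
      rw [← DihedralGroup.nat_card]
      exact Nat.card_le_card_of_injective φ hφ
    obtain ⟨M, hM, hM0, hM2, hMne, hdvd⟩ := exists_factor_of_monodromy hp hdeg hcard
    exact classification_of_factor hp hp2 hdeg hM hM0 hM2 hMne hdvd
end

section
/- For every $n \geq 5$ and every $k \geq 1$: the symmetric group $S_n$ is $[k]$-solvable if and only if $k \geq n$, and the alternating group $A_n$ is $[k]$-solvable if and only if $k \geq n$. -/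
theorem isKSolvable_of_injective {k : ℕ} {G : Type*} [Group G] (f : G →* Equiv.Perm (Fin k))
    (hf : Function.Injective f) : IsKSolvable k G := by
  refine ⟨1, ![⊥, ⊤], rfl, rfl, fun i => ?_⟩
  obtain rfl : i = 0 := Subsingleton.elim _ _
  change ∃ (_ : (⊥ : Subgroup G) ≤ ⊤) (hN : ((⊥ : Subgroup G).subgroupOf ⊤).Normal),
        letI := hN
        ((∀ a b : (⊤ : Subgroup G) ⧸ (⊥ : Subgroup G).subgroupOf ⊤, a * b = b * a) ∨
          ∃ f : ((⊤ : Subgroup G) ⧸ (⊥ : Subgroup G).subgroupOf ⊤) →* Equiv.Perm (Fin k),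
            Function.Injective f)
  refine ⟨bot_le, inferInstance, Or.inr ?_⟩
  refine ⟨QuotientGroup.lift _ (f.comp (⊤ : Subgroup G).subtype) ?_, ?_⟩
  · intro x hx
    have hx' : (x : G) = 1 := hx
    simp [hx']
  · rw [injective_iff_map_eq_one]
    intro q
    induction q using QuotientGroup.induction_on with
    | H x =>
      intro hx
      have hx' : f x = 1 := hx
      rw [QuotientGroup.eq_one_iff]
      exact (injective_iff_map_eq_one f).1 hf _ hx'

/-- A nonabelian simple group that embeds into a `[k]`-solvable group embeds into the symmetric
group on `k` letters. -/
theorem IsKSolvable.exists_injective_of_simple {k : ℕ} {G S : Type*} [Group G] [Group S]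
    [IsSimpleGroup S] (hS : ¬ ∀ a b : S, a * b = b * a) (φ : S →* G)
    (hφ : Function.Injective φ) (hG : IsKSolvable k G) :
    ∃ f : S →* Equiv.Perm (Fin k), Function.Injective f := by
  obtain ⟨n, c, h0, hlast, hc⟩ := hG
  by_contra hno
  -- If `S` does not embed, no stage of the chain can be the first to contain the image of `S`.
  have key : ∀ i, ¬ φ.range ≤ c i := by
    intro i
    induction i using Fin.induction with
    | zero =>
      rw [h0, le_bot_iff, MonoidHom.range_eq_bot_iff]
      rintro rfl
      exact hS fun a b => hφ rfl
    | succ i ih =>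
      intro hi
      obtain ⟨_, hN, hq⟩ := hc i
      let ι : S →* c i.succ := φ.codRestrict _ fun s => hi ⟨s, rfl⟩
      let ψ := (QuotientGroup.mk' ((c i.castSucc).subgroupOf (c i.succ))).comp ι
      have hψ : Function.Injective ψ := by
        rw [← MonoidHom.ker_eq_bot_iff]
        refine (Subgroup.Normal.eq_bot_or_eq_top (MonoidHom.normal_ker ψ)).resolve_right ?_
        intro htop
        apply ih
        rintro _ ⟨s, rfl⟩
        have hs : ψ s = 1 := by
          rw [← MonoidHom.mem_ker, htop]
          trivial
        exact (QuotientGroup.eq_one_iff (ι s)).1 hs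
      rcases hq with hq | ⟨f, hf⟩
      · exact hS fun a b => hψ (by rw [map_mul, map_mul, hq])
      · exact hno ⟨f.comp ψ, hf.comp hψ⟩
  exact key (Fin.last n) (by rw [hlast]; exact le_top)

theorem le_of_alternatingGroup_injective {n k : ℕ} (hn : 5 ≤ n)
    (f : alternatingGroup (Fin n) →* Equiv.Perm (Fin k)) (hf : Function.Injective f) :
    n ≤ k := by
  have : Nontrivial (Fin n) := Fin.nontrivial_iff_two_le.2 (by omega)
  have h2 := two_mul_nat_card_alternatingGroup (α := Fin n)
  have hle := Nat.card_le_card_of_injective f hf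
  rw [Nat.card_perm, Nat.card_fin] at h2 hle
  by_contra! hlt
  have hk : k.factorial ≤ (n - 1).factorial := Nat.factorial_le (by omega)
  have hfac : n * (n - 1).factorial = n.factorial := Nat.mul_factorial_pred (by omega)
  have hpos := Nat.factorial_pos (n - 1)
  nlinarith

theorem alternatingGroup_not_comm {n : ℕ} (hn : 5 ≤ n) :
    ¬ ∀ a b : alternatingGroup (Fin n), a * b = b * a := by
  intro h
  have := (alternatingGroup.isMulCommutative_iff_card_le_three (α := Fin n)).1 ⟨⟨h⟩⟩
  rw [Nat.card_fin] at this
  omega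

/-- For `n ≥ 5` and `k ≥ 1`: the symmetric group `Sₙ` is `[k]`-solvable iff `k ≥ n`,
and the alternating group `Aₙ` is `[k]`-solvable iff `k ≥ n`. -/
theorem symm_and_alt_isKSolvable_iff (n k : ℕ) (hn : 5 ≤ n) (hk : 1 ≤ k) :
    (IsKSolvable k (Equiv.Perm (Fin n)) ↔ n ≤ k) ∧
    (IsKSolvable k (alternatingGroup (Fin n)) ↔ n ≤ k) := by
  have : IsSimpleGroup (alternatingGroup (Fin n)) :=
    alternatingGroup.isSimpleGroup (by rwa [Nat.card_fin])
  have hS := alternatingGroup_not_comm hn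
  refine ⟨⟨fun h => ?_, fun h => ?_⟩, ⟨fun h => ?_, fun h => ?_⟩⟩
  · obtain ⟨f, hf⟩ := h.exists_injective_of_simple hS (alternatingGroup (Fin n)).subtype
      (Subgroup.subtype_injective _)
    exact le_of_alternatingGroup_injective hn f hf
  · exact isKSolvable_of_injective (Equiv.Perm.viaEmbeddingHom (Fin.castLEEmb h))
      (Equiv.Perm.viaEmbeddingHom_injective _)
  · obtain ⟨f, hf⟩ := h.exists_injective_of_simple hS (MonoidHom.id _) Function.injective_id
    exact le_of_alternatingGroup_injective hn f hf
  · exact isKSolvable_of_injective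
      ((Equiv.Perm.viaEmbeddingHom (Fin.castLEEmb h)).comp (alternatingGroup (Fin n)).subtype)
      ((Equiv.Perm.viaEmbeddingHom_injective _).comp (Subgroup.subtype_injective _))
end

section
/- For every $k \geq 1$, the automorphism group $\mathrm{Aut}(A_6)$ of the alternating group on $6$ elements (a group isomorphic to $P\Gamma L_2(9)$) is $[k]$-solvable if and only if $k \geq 6$. -/
open Equiv Equiv.Perm

namespace AutA6

/-! ### 3-cycles with involutory products -/

/-- The permutation `(a c b)`, which is a 3-cycle when `a`, `b`, `c` are distinct. -/
def tri (a b c : Fin 6) : Perm (Fin 6) := swap a b * swap a c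

lemma tri_isThreeCycle {a b c : Fin 6} (ab : a ≠ b) (ac : a ≠ c) (bc : b ≠ c) :
    IsThreeCycle (tri a b c) := isThreeCycle_swap_mul_swap_same ab ac bc

lemma conj_tri (σ : Perm (Fin 6)) (a b c : Fin 6) :
    σ * tri a b c * σ⁻¹ = tri (σ a) (σ b) (σ c) := by
  simp only [tri, swap_apply_apply]
  group

lemma exists_conj_tri {y : Perm (Fin 6)} (hy : IsThreeCycle y) :
    ∃ σ : Perm (Fin 6), σ * y * σ⁻¹ = tri 0 1 2 := by
  have h := isConj_iff_cycleType_eq.2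
    (hy.trans (tri_isThreeCycle (a := 0) (b := 1) (c := 2) (by decide) (by decide) (by decide)).symm)
  exact isConj_iff.1 h

lemma exists_eq_tri {y : Perm (Fin 6)} (hy : IsThreeCycle y) :
    ∃ a b c : Fin 6, a ≠ b ∧ a ≠ c ∧ b ≠ c ∧ y = tri a b c := by
  obtain ⟨σ, h⟩ := exists_conj_tri hy
  refine ⟨σ⁻¹ 0, σ⁻¹ 1, σ⁻¹ 2, by simp, by simp, by simp, ?_⟩
  rw [← conj_tri, ← h]
  group

/-- The product `y * z` is an involution, that is, has order exactly two. -/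
def InvProd (y z : Perm (Fin 6)) : Prop := (y * z) * (y * z) = 1 ∧ y * z ≠ 1

instance (y z : Perm (Fin 6)) : Decidable (InvProd y z) := by
  unfold InvProd; infer_instance

lemma InvProd.conj {y z : Perm (Fin 6)} (h : InvProd y z) (σ : Perm (Fin 6)) :
    InvProd (σ * y * σ⁻¹) (σ * z * σ⁻¹) := by
  obtain ⟨h1, h2⟩ := h
  have e : σ * y * σ⁻¹ * (σ * z * σ⁻¹) = σ * (y * z) * σ⁻¹ := by group
  refine ⟨?_, ?_⟩
  · rw [e, show σ * (y * z) * σ⁻¹ * (σ * (y * z) * σ⁻¹) = σ * ((y * z) * (y * z)) * σ⁻¹ by group, h1]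
    group
  · rwa [e, Ne, conj_eq_one_iff]

lemma isThreeCycle_conj {y : Perm (Fin 6)} (hy : IsThreeCycle y) (σ : Perm (Fin 6)) :
    IsThreeCycle (σ * y * σ⁻¹) := by
  unfold IsThreeCycle at *
  rw [cycleType_conj, hy]

set_option maxRecDepth 100000 in
/-- A 3-cycle whose product with `(0 2 1)` is an involution shares exactly one directed edge with
it; a rotation of that edge and a transposition of the third point bring it to `(0 3 1)`. -/
lemma step_three : ∀ a b c : Fin 6, a ≠ b → a ≠ c → b ≠ c → InvProd (tri 0 1 2) (tri a b c) →
    ∃ i : Fin 3, ∃ s : Fin 6,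
      (tri 0 1 2 ^ (i : ℕ) * swap 3 s) * tri 0 1 2 * (tri 0 1 2 ^ (i : ℕ) * swap 3 s)⁻¹
        = tri 0 1 2 ∧
      (tri 0 1 2 ^ (i : ℕ) * swap 3 s) * tri a b c * (tri 0 1 2 ^ (i : ℕ) * swap 3 s)⁻¹
        = tri 0 1 3 := by
  decide

set_option maxRecDepth 100000 in
lemma step_four : ∀ a b c : Fin 6, a ≠ b → a ≠ c → b ≠ c → InvProd (tri 0 1 2) (tri a b c) →
    InvProd (tri 0 1 3) (tri a b c) → tri a b c = tri 0 1 4 ∨ tri a b c = tri 0 1 5 := by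
  decide

/-- Four 3-cycles whose pairwise products are involutions share a common directed edge, so they
are simultaneously conjugate to the standard ones. -/
lemma simultaneous_conj {y₂ y₃ y₄ y₅ : Perm (Fin 6)}
    (h₂ : IsThreeCycle y₂) (h₃ : IsThreeCycle y₃) (h₄ : IsThreeCycle y₄) (h₅ : IsThreeCycle y₅)
    (h23 : InvProd y₂ y₃) (h24 : InvProd y₂ y₄) (h25 : InvProd y₂ y₅)
    (h34 : InvProd y₃ y₄) (h35 : InvProd y₃ y₅) (h45 : InvProd y₄ y₅) :
    ∃ σ : Perm (Fin 6), σ * y₂ * σ⁻¹ = tri 0 1 2 ∧ σ * y₃ * σ⁻¹ = tri 0 1 3 ∧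
      σ * y₄ * σ⁻¹ = tri 0 1 4 ∧ σ * y₅ * σ⁻¹ = tri 0 1 5 := by
  have assoc : ∀ σ τ y : Perm (Fin 6), (τ * σ) * y * (τ * σ)⁻¹ = τ * (σ * y * σ⁻¹) * τ⁻¹ :=
    fun σ τ y ↦ by group
  -- A conjugation moves `y₂` and `y₃` to their standard positions.
  obtain ⟨ρ, r2, r3⟩ : ∃ ρ : Perm (Fin 6), ρ * y₂ * ρ⁻¹ = tri 0 1 2 ∧
      ρ * y₃ * ρ⁻¹ = tri 0 1 3 := by
    obtain ⟨σ, hσ⟩ := exists_conj_tri h₂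
    obtain ⟨a, b, c, ab, ac, bc, habc⟩ := exists_eq_tri (isThreeCycle_conj h₃ σ)
    have h := h23.conj σ
    rw [hσ, habc] at h
    obtain ⟨i, s, e2, e3⟩ := step_three a b c ab ac bc h
    exact ⟨_ * σ, by rw [assoc, hσ]; exact e2, by rw [assoc, habc]; exact e3⟩
  have key : ∀ y, IsThreeCycle y → InvProd y₂ y → InvProd y₃ y →
      ρ * y * ρ⁻¹ = tri 0 1 4 ∨ ρ * y * ρ⁻¹ = tri 0 1 5 := by
    intro y hy h2 h3
    obtain ⟨a, b, c, ab, ac, bc, habc⟩ := exists_eq_tri (isThreeCycle_conj hy ρ)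
    have h2' := h2.conj ρ
    have h3' := h3.conj ρ
    rw [r2, habc] at h2'
    rw [r3, habc] at h3'
    rw [habc]
    exact step_four a b c ab ac bc h2' h3'
  have h45' := h45.conj ρ
  rcases key y₄ h₄ h24 h34 with e4 | e4 <;> rcases key y₅ h₅ h25 h35 with e5 | e5
  · rw [e4, e5] at h45'
    exact absurd h45' (by decide)
  · exact ⟨ρ, r2, r3, e4, e5⟩
  · refine ⟨swap 4 5 * ρ, ?_, ?_, ?_, ?_⟩
    · rw [assoc, r2]; decide
    · rw [assoc, r3]; decide
    · rw [assoc, e4]; decide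
    · rw [assoc, e5]; decide
  · rw [e4, e5] at h45'
    exact absurd h45' (by decide)

/-! ### Generators of `A₆` -/

/-- The 3-cycles `(0 i 1)`, for `2 ≤ i`, generate `A₆`. -/
lemma alternating_le {K : Subgroup (Perm (Fin 6))} (h2 : tri 0 1 2 ∈ K) (h3 : tri 0 1 3 ∈ K)
    (h4 : tri 0 1 4 ∈ K) (h5 : tri 0 1 5 ∈ K) : alternatingGroup (Fin 6) ≤ K := by
  have h1 : ∀ i : Fin 6, i ≠ 0 → tri 0 1 i ∈ K := by
    intro i hi
    fin_cases i
    · exact absurd rfl hi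
    · exact (show tri 0 1 1 = 1 by decide) ▸ K.one_mem
    exacts [h2, h3, h4, h5]
  have hs : ∀ i j : Fin 6, i ≠ 0 → j ≠ 0 → swap 0 i * swap 0 j ∈ K := by
    intro i j hi hj
    have : swap 0 i * swap 0 j = (tri 0 1 i)⁻¹ * tri 0 1 j := by
      simp [tri, mul_assoc]
    rw [this]
    exact K.mul_mem (K.inv_mem (h1 i hi)) (h1 j hj)
  -- Every transposition is an odd word, of length three, in the transpositions moving `0`.
  have hw : ∀ a b : Fin 6, a ≠ b → ∃ i j : Fin 6, i ≠ 0 ∧ j ≠ 0 ∧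
      swap a b = swap 0 i * swap 0 j * swap 0 i := by decide
  rw [← closure_three_cycles_eq_alternating, Subgroup.closure_le]
  intro y hy
  obtain ⟨σ, h⟩ := exists_conj_tri hy
  have hy' : y = swap (σ⁻¹ 0) (σ⁻¹ 1) * swap (σ⁻¹ 0) (σ⁻¹ 2) := by
    change y = tri _ _ _
    rw [← conj_tri, ← h]
    group
  obtain ⟨i, j, hi, hj, e⟩ := hw (σ⁻¹ 0) (σ⁻¹ 1) (by simp)
  obtain ⟨k, l, hk, hl, e'⟩ := hw (σ⁻¹ 0) (σ⁻¹ 2) (by simp)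
  have : y = (swap 0 i * swap 0 j) * (swap 0 i * swap 0 k) * (swap 0 l * swap 0 k) := by
    rw [hy', e, e']; simp only [mul_assoc]
  rw [this]
  exact K.mul_mem (K.mul_mem (hs i j hi hj) (hs i k hi hk)) (hs l k hl hk)

/-- The alternating group on six letters. -/
abbrev A6 := alternatingGroup (Fin 6)

/-- The 3-cycle `(0 i 1)` for `i ≥ 2`, as an element of `A₆`; the values `i = 0, 1` are
excluded by the hypotheses. -/
def x (i : Fin 6) (h0 : i ≠ 0) (h1 : i ≠ 1) : A6 :=
  ⟨tri 0 1 i, (tri_isThreeCycle (by decide) h0.symm h1.symm).mem_alternatingGroup⟩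

lemma x_isThreeCycle (i : Fin 6) (h0 : i ≠ 0) (h1 : i ≠ 1) :
    IsThreeCycle (x i h0 h1 : Perm (Fin 6)) :=
  tri_isThreeCycle (by decide) h0.symm h1.symm

/-- The reference 3-cycle `(0 2 1)`. -/
abbrev x₂ : A6 := x 2 (by decide) (by decide)

/-! ### Automorphisms preserving the 3-cycles -/

/-- The automorphisms of `A₆` that preserve the class of 3-cycles. As the 3-cycles form a single
conjugacy class of `A₆`, it suffices to test one of them. -/
def H : Subgroup (MulAut A6) where
  carrier := {φ | IsConj (φ x₂) x₂}
  one_mem' := IsConj.refl _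
  mul_mem' {φ ψ} hφ hψ := by
    have : IsConj (φ (ψ x₂)) (φ x₂) := φ.toMonoidHom.map_isConj hψ
    exact this.trans hφ
  inv_mem' {φ} hφ := by
    have : IsConj (φ⁻¹ (φ x₂)) (φ⁻¹ x₂) := (φ⁻¹).toMonoidHom.map_isConj hφ
    rw [MulAut.inv_apply_self] at this
    exact this.symm

lemma isThreeCycle_of_isConj {y z : A6} (h : IsConj y z) (hz : IsThreeCycle (z : Perm (Fin 6))) :
    IsThreeCycle (y : Perm (Fin 6)) := by
  have := isConj_iff_cycleType_eq.1 ((alternatingGroup (Fin 6)).subtype.map_isConj h)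
  exact this.trans hz

lemma isConj_of_isThreeCycle {y z : A6} (hy : IsThreeCycle (y : Perm (Fin 6)))
    (hz : IsThreeCycle (z : Perm (Fin 6))) : IsConj y z :=
  alternatingGroup.isThreeCycle_isConj (by simp) hy hz

/-- An automorphism preserving the class of 3-cycles is conjugation by an element of `S₆`. -/
lemma H_le_range : H ≤ (MulAut.conjNormal : Perm (Fin 6) →* MulAut A6).range := by
  intro φ hφ
  have three : ∀ i h0 h1, IsThreeCycle (φ (x i h0 h1) : Perm (Fin 6)) := by
    intro i h0 h1
    have : IsConj (φ (x i h0 h1)) (φ x₂) := φ.toMonoidHom.map_isConj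
      (isConj_of_isThreeCycle (x_isThreeCycle ..) (x_isThreeCycle ..))
    exact isThreeCycle_of_isConj (this.trans hφ) (x_isThreeCycle ..)
  have inv : ∀ y z : A6, InvProd y z → InvProd (φ y) (φ z) := by
    rintro y z ⟨h1, h2⟩
    refine ⟨?_, fun h ↦ h2 ?_⟩
    · have : (y * z) * (y * z) = 1 := Subtype.ext h1
      have := congrArg φ this
      simp only [map_mul, map_one] at this
      exact congrArg Subtype.val this
    · have : φ (y * z) = 1 := by rw [map_mul]; exact Subtype.ext h
      rw [map_eq_one_iff φ φ.injective] at this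
      exact congrArg Subtype.val this
  obtain ⟨σ, e2, e3, e4, e5⟩ := simultaneous_conj
    (three 2 (by decide) (by decide)) (three 3 (by decide) (by decide))
    (three 4 (by decide) (by decide)) (three 5 (by decide) (by decide))
    (inv _ _ (by decide)) (inv _ _ (by decide)) (inv _ _ (by decide))
    (inv _ _ (by decide)) (inv _ _ (by decide)) (inv _ _ (by decide))
  -- The automorphism `ψ` fixes the generators of `A₆`, hence is trivial.
  set ψ : MulAut A6 := MulAut.conjNormal σ * φ with hψ
  have fix : alternatingGroup (Fin 6) ≤
      (ψ.toMonoidHom.eqLocus (MonoidHom.id A6)).map (alternatingGroup (Fin 6)).subtype := by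
    apply alternating_le
    · exact ⟨x 2 (by decide) (by decide), Subtype.ext e2, rfl⟩
    · exact ⟨x 3 (by decide) (by decide), Subtype.ext e3, rfl⟩
    · exact ⟨x 4 (by decide) (by decide), Subtype.ext e4, rfl⟩
    · exact ⟨x 5 (by decide) (by decide), Subtype.ext e5, rfl⟩
  have hψ1 : ψ = 1 := by
    ext1 g
    obtain ⟨g', hg', e⟩ := fix g.2
    obtain rfl : g' = g := Subtype.ext e
    exact hg'
  refine ⟨σ⁻¹, ?_⟩
  rw [map_inv]
  exact inv_eq_of_mul_eq_one_right hψ1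

/-- The inner automorphisms of `A₆`. -/
def Inn : Subgroup (MulAut A6) := (MulAut.conj : A6 →* MulAut A6).range

lemma conjNormal_coe (g : A6) : MulAut.conjNormal (g : Perm (Fin 6)) = MulAut.conj g := by
  ext1 h
  exact Subtype.ext rfl

lemma Inn_le_H : Inn ≤ H := by
  rintro _ ⟨g, rfl⟩
  exact (isConj_iff.2 ⟨g, rfl⟩ : IsConj x₂ _).symm

lemma commutator_mem_Inn {φ ψ : MulAut A6} (hφ : φ ∈ H) (hψ : ψ ∈ H) :
    φ * ψ * φ⁻¹ * ψ⁻¹ ∈ Inn := by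
  obtain ⟨σ, rfl⟩ := H_le_range hφ
  obtain ⟨τ, rfl⟩ := H_le_range hψ
  have h : σ * τ * σ⁻¹ * τ⁻¹ ∈ alternatingGroup (Fin 6) := by
    rw [mem_alternatingGroup]
    simp only [map_mul, map_inv]
    rw [mul_inv_eq_one, mul_inv_eq_iff_eq_mul, mul_comm]
  refine ⟨⟨_, h⟩, ?_⟩
  rw [← conjNormal_coe]
  simp

/-! ### The two classes of elements of order 3 -/

/-- The permutation `(0 2 1)(3 5 4)`. -/
def dbl : Perm (Fin 6) := tri 0 1 2 * tri 3 4 5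

lemma dbl_cycleType : dbl.cycleType = {3, 3} := by
  have hd : Perm.Disjoint (tri 0 1 2) (tri 3 4 5) := by unfold Perm.Disjoint; decide
  have h1 : (tri 0 1 2).cycleType = {3} :=
    tri_isThreeCycle (by decide) (by decide) (by decide)
  have h2 : (tri 3 4 5).cycleType = {3} :=
    tri_isThreeCycle (by decide) (by decide) (by decide)
  rw [dbl, hd.cycleType_mul, h1, h2]
  rfl

/-- The elements of cycle type `3 + 3` form a single class of `A₆`, because one of them commutes
with the odd permutation `(0 3)(1 4)(2 5)`. -/
lemma isConj_of_double {y z : A6} (hy : (y : Perm (Fin 6)).cycleType = {3, 3})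
    (hz : (z : Perm (Fin 6)).cycleType = {3, 3}) : IsConj y z := by
  obtain ⟨σ, hσ⟩ := isConj_iff.1 (isConj_iff_cycleType_eq.2 (hy.trans dbl_cycleType.symm))
  obtain ⟨τ, hτ⟩ := isConj_iff.1 (isConj_iff_cycleType_eq.2 (dbl_cycleType.trans hz.symm))
  have ht : (swap 0 3 * swap 1 4 * swap 2 5) * dbl * (swap 0 3 * swap 1 4 * swap 2 5)⁻¹ = dbl := by
    decide
  rcases Int.units_eq_one_or (sign (τ * σ)) with h | h
  · refine isConj_iff.2 ⟨⟨τ * σ, h⟩, Subtype.ext ?_⟩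
    rw [← hτ, ← hσ]
    simp [mul_assoc]
  · have h' : sign (τ * (swap 0 3 * swap 1 4 * swap 2 5) * σ) = 1 := by
      have hs : sign (swap 0 3 * swap 1 4 * swap 2 5 : Perm (Fin 6)) = -1 := by decide
      rw [map_mul] at h
      rw [map_mul, map_mul, hs, mul_neg_one, neg_mul, h, neg_neg]
    refine isConj_iff.2 ⟨⟨_, h'⟩, Subtype.ext ?_⟩
    rw [← hτ, ← ht, ← hσ]
    simp only [Subgroup.coe_mul, Subgroup.coe_inv]
    group

lemma cycleType_of_three (φ : MulAut A6) : IsThreeCycle (φ x₂ : Perm (Fin 6)) ∨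
    (φ x₂ : Perm (Fin 6)).cycleType = {3, 3} := by
  have ho : orderOf (φ x₂ : Perm (Fin 6)) = 3 := by
    rw [Subgroup.orderOf_coe, MulEquiv.orderOf_eq, ← Subgroup.orderOf_coe]
    exact (x_isThreeCycle ..).orderOf
  obtain ⟨n, hn⟩ := cycleType_prime_order (ho.symm ▸ Nat.prime_three)
  have hs := sum_cycleType (φ x₂ : Perm (Fin 6))
  have hc := Finset.card_le_univ (φ x₂ : Perm (Fin 6)).support
  rw [ho] at hn
  rw [← hs, hn] at hc
  simp at hc
  have : n = 0 ∨ n = 1 := by omega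
  rcases this with rfl | rfl
  · exact Or.inl hn
  · exact Or.inr hn

/-- The square of an automorphism preserves the 3-cycles, since an automorphism either preserves or
exchanges the two classes of elements of order 3. -/
lemma sq_mem_H (φ : MulAut A6) : φ * φ ∈ H := by
  change IsConj (φ (φ x₂)) x₂
  rcases cycleType_of_three φ with h | h
  · have h1 : IsConj (φ x₂) x₂ := isConj_of_isThreeCycle h (x_isThreeCycle ..)
    have h2 : IsConj (φ (φ x₂)) (φ x₂) := φ.toMonoidHom.map_isConj h1
    exact h2.trans h1
  · rcases cycleType_of_three (φ * φ) with h' | h'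
    · exact isConj_of_isThreeCycle h' (x_isThreeCycle ..)
    · have h1 : IsConj (φ (φ x₂)) (φ x₂) := isConj_of_double h' h
      have h2 : IsConj (φ⁻¹ (φ (φ x₂))) (φ⁻¹ (φ x₂)) := (φ⁻¹).toMonoidHom.map_isConj h1
      rw [MulAut.inv_apply_self, MulAut.inv_apply_self] at h2
      exact h1.trans h2

/-- The quotient by `H` has exponent two, hence is abelian: a commutator is a product of squares. -/
lemma commutator_mem_H (φ ψ : MulAut A6) : φ * ψ * φ⁻¹ * ψ⁻¹ ∈ H := by
  have : φ * ψ * φ⁻¹ * ψ⁻¹ =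
      (φ * ψ * (φ * ψ)) * ((ψ⁻¹ * φ⁻¹ * ψ) * (ψ⁻¹ * φ⁻¹ * ψ)) * (ψ⁻¹ * ψ⁻¹) := by group
  rw [this]
  exact H.mul_mem (H.mul_mem (sq_mem_H _) (sq_mem_H _)) (sq_mem_H _)

/-! ### Chains of subgroups -/

section Quotients

variable {G : Type*} [Group G] {K L : Subgroup G}

lemma normal_of_commutator (h : ∀ a ∈ L, ∀ b ∈ L, a * b * a⁻¹ * b⁻¹ ∈ K) :
    (K.subgroupOf L).Normal where
  conj_mem n hn g := by
    have := K.mul_mem (h g g.2 n n.2) hn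
    simpa [Subgroup.mem_subgroupOf] using this

lemma comm_of_commutator (h : ∀ a ∈ L, ∀ b ∈ L, a * b * a⁻¹ * b⁻¹ ∈ K)
    [(K.subgroupOf L).Normal] (a b : L ⧸ K.subgroupOf L) : a * b = b * a := by
  induction a using QuotientGroup.induction_on with | _ a
  induction b using QuotientGroup.induction_on with | _ b
  rw [← QuotientGroup.mk_mul, ← QuotientGroup.mk_mul, QuotientGroup.eq, Subgroup.mem_subgroupOf]
  have := h (b⁻¹ : G) (L.inv_mem b.2) (a⁻¹ : G) (L.inv_mem a.2)
  simpa [mul_assoc] using this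

end Quotients

lemma conj_injective : Function.Injective (MulAut.conj : A6 →* MulAut A6) := by
  rw [← MonoidHom.ker_eq_bot_iff, eq_bot_iff,
    ← alternatingGroup.center_eq_bot (α := Fin 6) (by simp)]
  intro g hg
  rw [Subgroup.mem_center_iff]
  intro h
  have := DFunLike.congr_fun (MonoidHom.mem_ker.1 hg) h
  simp only [MulAut.conj_apply, MulAut.one_apply] at this
  rw [mul_inv_eq_iff_eq_mul] at this
  exact this.symm

lemma bot_normal : ((⊥ : Subgroup (MulAut A6)).subgroupOf Inn).Normal := by
  rw [Subgroup.bot_subgroupOf]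
  infer_instance

lemma bot_embeds {k : ℕ} (hk : 6 ≤ k) :
    letI := bot_normal
    ∃ f : (Inn ⧸ (⊥ : Subgroup (MulAut A6)).subgroupOf Inn) →* Perm (Fin k),
      Function.Injective f := by
  let := bot_normal
  let e : A6 ≃* Inn := MonoidHom.ofInjective conj_injective
  let e' : (Inn ⧸ (⊥ : Subgroup (MulAut A6)).subgroupOf Inn) ≃* Inn :=
    (QuotientGroup.quotientMulEquivOfEq (Subgroup.bot_subgroupOf _)).trans
      QuotientGroup.quotientBot
  let f : Perm (Fin 6) →* Perm (Fin k) := Perm.viaEmbeddingHom (Fin.castLEEmb hk)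
  refine ⟨f.comp ((alternatingGroup (Fin 6)).subtype.comp
    (e.symm.toMonoidHom.comp e'.toMonoidHom)), ?_⟩
  exact (Perm.viaEmbeddingHom_injective _).comp
    (Subtype.val_injective.comp (e.symm.injective.comp e'.injective))

/-- For `6 ≤ k` the chain `1 ≤ Inn ≤ H ≤ Aut A₆` works. -/
lemma isKSolvable {k : ℕ} (hk : 6 ≤ k) : IsKSolvable k (MulAut A6) := by
  refine ⟨3, ![⊥, Inn, H, ⊤], rfl, rfl, fun i ↦ ?_⟩
  fin_cases i
  · exact ⟨bot_le, bot_normal, Or.inr (bot_embeds hk)⟩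
  · have h : ∀ a ∈ H, ∀ b ∈ H, a * b * a⁻¹ * b⁻¹ ∈ Inn := fun a ha b hb ↦
      commutator_mem_Inn ha hb
    exact ⟨Inn_le_H, normal_of_commutator h, Or.inl
      (letI := normal_of_commutator h; comm_of_commutator h)⟩
  · have h : ∀ a ∈ (⊤ : Subgroup (MulAut A6)), ∀ b ∈ (⊤ : Subgroup (MulAut A6)),
      a * b * a⁻¹ * b⁻¹ ∈ H := fun a _ b _ ↦ commutator_mem_H a b
    exact ⟨le_top, normal_of_commutator h, Or.inl
      (letI := normal_of_commutator h; comm_of_commutator h)⟩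

/-- A simple group mapping injectively to a `[k]`-solvable group is abelian or embeds in the
symmetric group on `k` letters: it embeds in the factor below the first term of the chain that
contains it. -/
lemma simple_of_isKSolvable {k : ℕ} {G S : Type*} [Group G] [Group S] [IsSimpleGroup S]
    (j : S →* G) (hj : Function.Injective j) (h : IsKSolvable k G) :
    (∀ a b : S, a * b = b * a) ∨ ∃ f : S →* Perm (Fin k), Function.Injective f := by
  obtain ⟨n, c, h0, hn, hc⟩ := h
  by_contra hS
  have hno : ∀ i, ¬ j.range ≤ c i := by
    intro i
    induction i using Fin.induction with
    | zero =>
      rw [h0, le_bot_iff, MonoidHom.range_eq_bot_iff]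
      rintro rfl
      obtain ⟨a, b, hab⟩ := exists_pair_ne S
      exact hab (hj rfl)
    | succ i ih =>
      intro hle
      obtain ⟨-, hN, hq⟩ := hc i
      let q : S →* (c i.succ) ⧸ (c i.castSucc).subgroupOf (c i.succ) :=
        (QuotientGroup.mk' _).comp (j.codRestrict (c i.succ) fun s ↦ hle ⟨s, rfl⟩)
      rcases (inferInstance : q.ker.Normal).eq_bot_or_eq_top with hk | hk
      · have hq' : Function.Injective q := (MonoidHom.ker_eq_bot_iff q).1 hk
        refine hS (hq.imp (fun hab a b ↦ hq' ?_) fun ⟨f, hf⟩ ↦ ⟨f.comp q, hf.comp hq'⟩)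
        rw [map_mul, map_mul, hab]
      · refine ih ?_
        rintro _ ⟨s, rfl⟩
        have : s ∈ q.ker := hk ▸ Subgroup.mem_top s
        have h1 := (QuotientGroup.eq_one_iff (N := (c i.castSucc).subgroupOf (c i.succ))
          ⟨j s, hle ⟨s, rfl⟩⟩).1 (MonoidHom.mem_ker.1 this)
        exact h1
  exact hno (Fin.last n) (hn ▸ le_top)

lemma six_le {k : ℕ} (h : IsKSolvable k (MulAut A6)) : 6 ≤ k := by
  have := alternatingGroup.isSimpleGroup (α := Fin 6) (by simp)
  have hnc : ¬ ∀ a b : A6, a * b = b * a := by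
    intro hab
    exact absurd (hab x₂ (x 3 (by decide) (by decide))) (by decide)
  rcases simple_of_isKSolvable _ conj_injective h with hab | ⟨f, hf⟩
  · exact absurd hab hnc
  · by_contra hk
    have h1 := Fintype.card_le_of_injective f hf
    have h2 := Nat.factorial_le (show k ≤ 5 by omega)
    rw [card_alternatingGroup, Fintype.card_perm, Fintype.card_fin, Fintype.card_fin] at h1
    have := h1.trans h2
    revert this
    decide

end AutA6

/-- The automorphism group of the alternating group `A₆` (a group isomorphic to
`PΓL₂(9)`) is `[k]`-solvable if and only if `k ≥ 6`. -/
theorem autA6_isKSolvable_iff (k : ℕ) (hk : 1 ≤ k) :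
    IsKSolvable k (MulAut (alternatingGroup (Fin 6))) ↔ 6 ≤ k :=
  ⟨AutA6.six_le, AutA6.isKSolvable⟩
end

section
/- For every $k \geq 1$, the group $PGL_2(\mathbb{F}_7)$ (the quotient of $GL_2(\mathbb{F}_7)$ by its center) is $[k]$-solvable if and only if $k \geq 7$. -/
open scoped MatrixGroups Pointwise commutatorElement

namespace PGL27

open Matrix Matrix.SpecialLinearGroup

local instance fact_prime_seven : Fact (Nat.Prime 7) := ⟨by norm_num⟩

/-! ### Homomorphisms out of `SL(2, 𝔽₇)` -/

theorem eq_one_of_transvection {Q : Type*} [Group Q] (q : SL(2, ZMod 7) →* Q)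
    (h : ∀ (i j : Fin 2) (hij : i ≠ j) (c : ZMod 7), q (transvection hij c) = 1) (A) : q A = 1 :=
  SL2.transvection_induction (fun A ↦ q A = 1) h (fun A B hA hB ↦ by simp [hA, hB]) A

theorem transvection_pow {i j : Fin 2} (hij : i ≠ j) (c : ZMod 7) (n : ℕ) :
    transvection hij c ^ n = transvection hij (n * c) := by
  induction n with
  | zero => simp
  | succ n ih => rw [pow_succ, ih, ← transvection_add]; push_cast; congr 1; ring

/-- The order of the image of a transvection divides both `7` and `k!`, which are coprime. -/
theorem eq_one_of_transvection_pow {k : ℕ} (hk : k < 7)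
    (q : SL(2, ZMod 7) →* Equiv.Perm (Fin k)) (A) : q A = 1 := by
  refine eq_one_of_transvection q (fun i j hij c ↦ ?_) A
  rw [← orderOf_eq_one_iff]
  have h7 : orderOf (q (transvection hij c)) ∣ 7 := by
    rw [orderOf_dvd_iff_pow_eq_one, ← map_pow, transvection_pow,
      show ((7 : ℕ) : ZMod 7) = 0 from rfl]
    simp
  have hkf : orderOf (q (transvection hij c)) ∣ k.factorial := by
    simpa [Nat.card_eq_fintype_card, Fintype.card_perm] using
      orderOf_dvd_natCard (q (transvection hij c))
  have hc : Nat.Coprime 7 k.factorial :=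
    (Nat.Prime.coprime_iff_not_dvd (by norm_num)).2 fun h ↦ by
      have := (Nat.Prime.dvd_factorial (by norm_num)).1 h
      omega
  exact Nat.eq_one_of_dvd_coprimes hc h7 hkf

/-- `SL(2, 𝔽₇)` is perfect. -/
theorem eq_one_of_comm {Q : Type*} [Group Q] (hQ : ∀ a b : Q, a * b = b * a)
    (q : SL(2, ZMod 7) →* Q) (A) : q A = 1 := by
  let : CommGroup Q := { (inferInstance : Group Q) with mul_comm := hQ }
  have h := SL2.commutator_eq_top (F := ZMod 7) (a := 2) (by decide) (by decide)
  have := Abelianization.commutator_subset_ker q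
  rw [h] at this
  exact this (Subgroup.mem_top A)

/-- If `k < 7`, every term of a `[k]`-solvable chain of a group `G` contains the image of any
homomorphism `SL(2, 𝔽₇) → G`, so any such homomorphism is trivial. -/
theorem eq_one_of_isKSolvable {k : ℕ} (hk : k < 7) {G : Type*} [Group G] (hG : IsKSolvable k G)
    (φ : SL(2, ZMod 7) →* G) (A) : φ A = 1 := by
  obtain ⟨n, c, h0, hn, hc⟩ := hG
  have key : ∀ i, ∀ A, φ A ∈ c i := by
    intro i
    induction i using Fin.reverseInduction with
    | last => simp [hn]
    | cast i ih =>
      intro A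
      obtain ⟨-, hN, h⟩ := hc i
      let q := (QuotientGroup.mk' ((c i.castSucc).subgroupOf (c i.succ))).comp
        (φ.codRestrict (c i.succ) ih)
      have hq : q A = 1 := by
        rcases h with h | ⟨f, hf⟩
        · exact eq_one_of_comm h q A
        · exact hf ((eq_one_of_transvection_pow hk (f.comp q) A).trans (map_one f).symm)
      have := (QuotientGroup.eq_one_iff _).1 hq
      simpa [Subgroup.mem_subgroupOf] using this
  simpa [h0] using key 0 A

/-! ### The action of `PSL(2, 𝔽₇)` on seven points -/

/-- The point `(x : y)` of the projective line lies in `Bⱼ = {∞} ∪ (j + {1, 2, 4})`: either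
`y = 0`, or `x / y - j` is a nonzero square, which is tested on `(x / y - j) * y ^ 2`. -/
def InBlock (j x y : ZMod 7) : Prop :=
  y = 0 ∨ (x - j * y) * y = 1 ∨ (x - j * y) * y = 2 ∨ (x - j * y) * y = 4

instance (j x y : ZMod 7) : Decidable (InBlock j x y) := by unfold InBlock; infer_instance

/-- The equivalence relation on nonzero vectors whose classes are `Bⱼ` and its complement. -/
def sameSide (j : ZMod 7) : Set ((Fin 2 → ZMod 7) × (Fin 2 → ZMod 7)) :=
  {p | p.1 ≠ 0 ∧ p.2 ≠ 0 ∧ (InBlock j (p.1 0) (p.1 1) ↔ InBlock j (p.2 0) (p.2 1))}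

/-- A matrix that maps `Bⱼ` to `Bⱼ'` or to the complement of `Bⱼ'` maps the `j`-th relation to the
`j'`-th; the Boolean `e` records which of the two cases occurs. -/
theorem smul_sameSide (g : SL(2, ZMod 7)) (j j' : ZMod 7) (e : Bool)
    (h : ∀ v : Fin 2 → ZMod 7, v ≠ 0 →
      (InBlock j' ((g • v) 0) ((g • v) 1) ↔ xor e (decide (InBlock j (v 0) (v 1))) = true)) :
    g • sameSide j = sameSide j' := by
  ext p
  obtain ⟨p, rfl⟩ := MulAction.surjective g p
  rw [Set.smul_mem_smul_set_iff]
  simp only [sameSide, Set.mem_ofPred_eq, Prod.smul_fst, Prod.smul_snd, ne_eq, smul_eq_zero_iff_eq]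
  refine and_congr_right fun h1 ↦ and_congr_right fun h2 ↦ ?_
  rw [h _ h1, h _ h2]
  cases e <;> simp [not_iff_not]

/-- A finite check: `(x, y) ↦ (x, c * x + y)` maps every block to a block or to the complement of
one. The zero vector is excluded because it satisfies `InBlock` for every `j`. -/
theorem lower_block : ∀ c j : ZMod 7, ∃ j' : ZMod 7, ∃ e : Bool, ∀ x y : ZMod 7,
    (x = 0 ∧ y = 0) ∨
      (InBlock j' x (c * x + y) ↔ xor e (decide (InBlock j x y)) = true) := by
  decide +kernel

theorem transvection_smul_sameSide {i₁ i₂ : Fin 2} (hi : i₁ ≠ i₂) (c j : ZMod 7) :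
    ∃ j', transvection hi c • sameSide j = sameSide j' := by
  have hs (v : Fin 2 → ZMod 7) : transvection hi c • v = Matrix.transvection i₁ i₂ c *ᵥ v := rfl
  fin_cases i₁ <;> fin_cases i₂ <;> simp only [Fin.zero_eta, Fin.mk_one, ne_eq, not_true] at hi
  · -- The translation by `c` maps `Bⱼ` to `B_{j + c}`.
    refine ⟨j + c, smul_sameSide _ _ _ false fun v _ ↦ ?_⟩
    rw [hs, Bool.false_xor, decide_eq_true_iff]
    simp only [InBlock, Matrix.mulVec, Matrix.transvection, dotProduct, Fin.sum_univ_two]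
    simp
    ring_nf
  · obtain ⟨j', e, h⟩ := lower_block c j
    refine ⟨j', smul_sameSide _ _ _ e fun v hv ↦ ?_⟩
    have := (h (v 0) (v 1)).resolve_left fun h ↦ hv (by ext i; fin_cases i <;> simp [h])
    rw [hs, ← this]
    simp [Matrix.mulVec, Matrix.transvection, dotProduct, Fin.sum_univ_two]

theorem smul_sameSide_mem (g : SL(2, ZMod 7)) :
    ∀ j, g • sameSide j ∈ Set.range sameSide := by
  refine SL2.transvection_induction (fun g ↦ ∀ j, g • sameSide j ∈ Set.range sameSide)
    (fun _ _ hi c j ↦ ?_) (fun A B hA hB j ↦ ?_) g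
  · obtain ⟨j', h⟩ := transvection_smul_sameSide hi c j
    exact ⟨j', h.symm⟩
  · obtain ⟨j', h⟩ := hB j
    rw [mul_smul, ← h]
    exact hA j'

theorem transvection_smul_sameSide_zero_ne :
    transvection (zero_ne_one : (0 : Fin 2) ≠ 1) (1 : ZMod 7) • sameSide 0 ≠ sameSide 0 := by
  intro h
  -- `1` and `2` both lie in `B₀`; translation by one sends them to `2 ∈ B₀` and `3 ∉ B₀`.
  have h1 : ((![1, 1], ![2, 1]) : (Fin 2 → ZMod 7) × (Fin 2 → ZMod 7)) ∈ sameSide 0 := by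
    refine ⟨by decide, by decide, by decide⟩
  have h2 := (Set.smul_mem_smul_set_iff
    (a := transvection (zero_ne_one : (0 : Fin 2) ≠ 1) (1 : ZMod 7))).2 h1
  rw [h] at h2
  have h3 := h2.2.2
  revert h3
  decide

theorem center_smul_sameSide (g : SL(2, ZMod 7)) (hg : g ∈ Subgroup.center SL(2, ZMod 7))
    (j : ZMod 7) : g • sameSide j = sameSide j := by
  obtain ⟨r, hr, h⟩ := mem_center_iff.1 hg
  refine smul_sameSide g j j false fun v _ ↦ ?_
  have hv : g • v = r • v := by
    rw [Matrix.SpecialLinearGroup.smul_def, ← h]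
    ext i
    simp [Matrix.smul_eq_mulVec, Matrix.mulVec_diagonal]
  replace hr : r * r = 1 := by simpa [sq] using hr
  have hr0 : r ≠ 0 := by rintro rfl; simp at hr
  have e : (r * v 0 - j * (r * v 1)) * (r * v 1) = (v 0 - j * v 1) * v 1 := by
    linear_combination (v 0 - j * v 1) * v 1 * hr
  rw [Bool.false_xor, decide_eq_true_iff]
  simp [hv, InBlock, e, hr0]

/-- The permutation representation of `SL(2, 𝔽₇)` on the orbit of the partition `{B₀, B₀ᶜ}`
descends to `PSL(2, 𝔽₇)`, and it is faithful there by simplicity. -/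
theorem exists_psl_embedding {k : ℕ} (hk : 7 ≤ k) :
    ∃ f : PSL(2, ZMod 7) →* Equiv.Perm (Fin k), Function.Injective f := by
  let O := MulAction.orbit SL(2, ZMod 7) (sameSide 0)
  have hO : O ⊆ Set.range sameSide := by
    rintro _ ⟨g, rfl⟩
    exact smul_sameSide_mem g 0
  have hcard : Nat.card O ≤ k := by
    calc Nat.card O ≤ Nat.card (Set.range sameSide) :=
          Nat.card_mono (Set.finite_range _) hO
      _ ≤ Nat.card (ZMod 7) := Finite.card_range_le _
      _ ≤ k := by simpa using hk
  have : Finite O := (Set.finite_range _).subset hO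
  obtain ⟨ι⟩ : Nonempty (O ↪ Fin k) := by
    have := Fintype.ofFinite O
    rw [Function.Embedding.nonempty_iff_card_le]
    simpa [Nat.card_eq_fintype_card] using hcard
  have hcenter : Subgroup.center SL(2, ZMod 7) ≤ (MulAction.toPermHom SL(2, ZMod 7) O).ker := by
    intro g hg
    rw [MonoidHom.mem_ker]
    ext ⟨x, hx⟩ : 2
    obtain ⟨j, rfl⟩ := hO hx
    exact center_smul_sameSide g hg j
  let f : PSL(2, ZMod 7) →* Equiv.Perm O := QuotientGroup.lift _ _ hcenter
  have hf : Function.Injective f := by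
    have hsimple : IsSimpleGroup PSL(2, ZMod 7) :=
      ProjectiveSpecialLinearGroup.rank_two_simple (by simp)
    rw [← MonoidHom.ker_eq_bot_iff]
    refine (hsimple.eq_bot_or_eq_top_of_normal f.ker inferInstance).resolve_right fun htop ↦ ?_
    let t : SL(2, ZMod 7) := transvection zero_ne_one 1
    have ht : f (QuotientGroup.mk t) = 1 := by
      rw [← MonoidHom.mem_ker, htop]; exact Subgroup.mem_top _
    have h0 := congrArg (fun σ : Equiv.Perm O ↦ (σ ⟨_, MulAction.mem_orbit_self _⟩).1) ht
    exact transvection_smul_sameSide_zero_ne h0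
  exact ⟨(Equiv.Perm.viaEmbeddingHom ι).comp f,
    (Equiv.Perm.viaEmbeddingHom_injective ι).comp hf⟩

/-! ### The chain `⊥ ≤ PSL(2, 𝔽₇) ≤ PGL(2, 𝔽₇)` -/

/-- A commutator in `GL` has determinant one. -/
theorem commutator_le_range :
    commutator PGL(2, ZMod 7) ≤
      (ProjectiveSpecialLinearGroup.toPGL (n := Fin 2) (R := ZMod 7)).range := by
  rw [commutator_def, Subgroup.commutator_le]
  intro a _ b _
  obtain ⟨a, rfl⟩ := ProjGenLinGroup.mk_surjective a
  obtain ⟨b, rfl⟩ := ProjGenLinGroup.mk_surjective b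
  have hdet : (⁅a, b⁆ : GL (Fin 2) (ZMod 7)).1.det = 1 := by
    have : GeneralLinearGroup.det ⁅a, b⁆ = 1 := by
      rw [map_commutatorElement, commutatorElement_eq_one_iff_mul_comm, mul_comm]
    exact congrArg Units.val this
  refine ⟨QuotientGroup.mk ⟨_, hdet⟩, ?_⟩
  rw [← map_commutatorElement]
  exact congrArg ProjGenLinGroup.mk (Units.ext rfl)

theorem isKSolvable_pgl {k : ℕ} (hk : 7 ≤ k) : IsKSolvable k PGL(2, ZMod 7) := by
  let N := (ProjectiveSpecialLinearGroup.toPGL (n := Fin 2) (R := ZMod 7)).range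
  have hN : N.Normal := Subgroup.Normal.of_commutator_le _ commutator_le_range
  refine ⟨2, ![⊥, N, ⊤], rfl, rfl, fun i ↦ ?_⟩
  fin_cases i
  · refine ⟨bot_le, ?_, Or.inr ?_⟩
    · change ((⊥ : Subgroup PGL(2, ZMod 7)).subgroupOf N).Normal
      infer_instance
    · change ∃ f : N ⧸ (⊥ : Subgroup PGL(2, ZMod 7)).subgroupOf N →* Equiv.Perm (Fin k),
        Function.Injective f
      obtain ⟨f, hf⟩ := exists_psl_embedding hk
      let e := MonoidHom.ofInjective
        (ProjectiveSpecialLinearGroup.toPGL_injective (n := Fin 2) (R := ZMod 7))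
      let g : N →* Equiv.Perm (Fin k) := f.comp e.symm.toMonoidHom
      have hg : Function.Injective g := hf.comp e.symm.injective
      have hker : (⊥ : Subgroup PGL(2, ZMod 7)).subgroupOf N = g.ker := by
        rw [(MonoidHom.ker_eq_bot_iff g).2 hg, Subgroup.bot_subgroupOf]
      exact ⟨QuotientGroup.lift _ g hker.le, (QuotientGroup.injective_lift_iff _ _ _).2 hker⟩
  · refine ⟨le_top, ?_, Or.inl ?_⟩
    · change (N.subgroupOf ⊤).Normal
      infer_instance
    · change ∀ a b : (⊤ : Subgroup PGL(2, ZMod 7)) ⧸ N.subgroupOf ⊤, a * b = b * a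
      intro a b
      obtain ⟨a, rfl⟩ := QuotientGroup.mk_surjective a
      obtain ⟨b, rfl⟩ := QuotientGroup.mk_surjective b
      rw [← commutatorElement_eq_one_iff_mul_comm]
      refine (QuotientGroup.eq_one_iff ⁅a, b⁆).2 ?_
      exact commutator_le_range
        (Subgroup.commutator_mem_commutator (Subgroup.mem_top a.1) (Subgroup.mem_top b.1))

theorem seven_le_of_isKSolvable {k : ℕ} (h : IsKSolvable k PGL(2, ZMod 7)) : 7 ≤ k := by
  by_contra! hlt
  have h1 := eq_one_of_isKSolvable hlt h toPGL (transvection zero_ne_one 1)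
  rw [← MonoidHom.mem_ker, toPGL_ker, transvection_mem_center_iff] at h1
  exact one_ne_zero h1

end PGL27

/-- The group `PGL_2(𝔽_7)`, i.e. the quotient of `GL_2(𝔽_7)` by its center, is
`[k]`-solvable if and only if `k ≥ 7`. -/
theorem pgl2_7_isKSolvable_iff (k : ℕ) (hk : 1 ≤ k) :
    IsKSolvable k
      (Matrix.GeneralLinearGroup (Fin 2) (ZMod 7) ⧸
        Subgroup.center (Matrix.GeneralLinearGroup (Fin 2) (ZMod 7))) ↔ 7 ≤ k := by
  exact ⟨PGL27.seven_le_of_isKSolvable, PGL27.isKSolvable_pgl⟩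
end
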